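/- There is a constant c > 0 such that: (i) every n-vertex planar 4-connected graph has at least cn CDCs of size at most n−1; (ii) every n-vertex planar 4-connected triangulation has at least cn² CDCs of size at most n−1; and (iii) every n-vertex planar 4-connected triangulation with at most n/324 vertex 4-cuts has at least 2^{cn} CDCs of size at most n−1. -/

import Mathlib

/-!
Planarity (no `K₅` or `K₃,₃` minor) is used through *faces*, defined as the induced non-separating
cycles, with cycles handled as edge sets. In a planar 4-connected graph every edge lies on exactly
two faces (`two_faces`, `not_three`), and two faces share at most one edge or one vertex
(`inter`): a violation produces a Kuratowski minor or a small separator. The faces span the cycle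
space over the two-element field and add up to zero, and comparing dimensions gives Euler's
inequality `m + 2 ≤ f + n` (`euler`).

*Triangulations.* Here all faces are triangles and the link of a vertex `v` (the edges opposite to
`v` in the triangles at `v`) is a cycle. The `n` links form a cycle double cover. The links of the
three vertices of one triangle can be replaced by two cycles (`save`), which brings the size to `n
- 1`. Along an edge `x y` the links of `x` and `y` can be replaced by two other cycles covering
the same edges, and this can be done independently along the edges of a matching that avoids the
chosen triangle. There is such a matching with at least `(n - 3) / 8` edges, and different subsets
of it give different covers, so there are `2 ^ k` covers with `n ≤ 8 k + 3` (`Tri4.two_pow_le`).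
This gives both the quadratic and the exponential bound.

*General graphs.* The faces form a cover whose size `f` may exceed `n - 1`. The triangular faces
are split into two classes such that one class `T`, containing at least half of them, is sparse:
no member of `T` is adjacent to more than one other member (`colour`). All members of `T` are
deleted, and each neighbouring face is rerouted along the deleted triangle; a choice of directions
obtained from Hall's theorem keeps the rerouted faces cycles (`exists_rot`, `cover_cd`). By
Euler's inequality the resulting cover has at most `n - 2` members, so there is room for one local
change. Putting one member of `T` back gives at least `f₃ / 4` covers, where `f₃` is the number of
triangular faces (`many_triangles`). If triangles are rare, then so are all other non-quadrangular
faces, and at least `n - 64 f₃` quadrangular faces `F` are good: `F` and its neighbours are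
quadrangles with no triangle next to them (`card_good`). Replacing the faces around `F` by their
outer boundary and another copy of `F` gives a different cover for every good `F` (`many_good`).
Together `n ≤ 257 · #covers` (`P4.linear`).
-/

open SimpleGraph

attribute [local instance] Classical.propDecidable

/-- A cycle in a graph: a connected, 2-regular subgraph. -/
def IsCycleSubgraph {V : Type*} {G : SimpleGraph V} (C : G.Subgraph) : Prop :=
  C.coe.Connected ∧ ∀ v ∈ C.verts, (C.neighborSet v).ncard = 2

/-- A cycle double cover: a multiset of cycles covering every edge exactly twice
(counted with multiplicity). -/
def IsCDC {V : Type*} (G : SimpleGraph V) (S : Multiset G.Subgraph) : Prop :=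
  (∀ C ∈ S, IsCycleSubgraph C) ∧
  ∀ e ∈ G.edgeSet, S.countP (fun C => e ∈ C.edgeSet) = 2

/-- Graph minor relation (via branch sets). -/
def HasGraphMinor {V : Type*} {W : Type*} (G : SimpleGraph V) (H : SimpleGraph W) : Prop :=
  ∃ f : W → Set V,
    (∀ w, (f w).Nonempty) ∧
    (∀ w, (G.induce (f w)).Connected) ∧
    (Pairwise fun w₁ w₂ => Disjoint (f w₁) (f w₂)) ∧
    ∀ ⦃w₁ w₂⦄, H.Adj w₁ w₂ → ∃ v₁ ∈ f w₁, ∃ v₂ ∈ f w₂, G.Adj v₁ v₂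

/-- Planarity, via Wagner's theorem: no `K₅` minor and no `K_{3,3}` minor. -/
def IsPlanar {V : Type*} (G : SimpleGraph V) : Prop :=
  ¬ HasGraphMinor G (completeGraph (Fin 5)) ∧
  ¬ HasGraphMinor G (completeBipartiteGraph (Fin 3) (Fin 3))

/-- `k`-connectivity: more than `k` vertices, and removing fewer than `k`
vertices leaves a connected graph. -/
def IsKConnected {V : Type*} [Fintype V] (k : ℕ) (G : SimpleGraph V) : Prop :=
  k < Fintype.card V ∧ ∀ s : Set V, s.ncard < k → (G.induce sᶜ).Connected

/-- A Hamiltonian cycle: a cycle through all vertices. -/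
def IsHamCycle {V : Type*} (G : SimpleGraph V) (C : G.Subgraph) : Prop :=
  IsCycleSubgraph C ∧ C.verts = Set.univ

/-- A (plane) triangulation, combinatorially: a maximal planar graph, i.e. a planar graph
on `n ≥ 3` vertices with exactly `3n - 6` edges (equivalently, every face is a triangle). -/
def IsTriangulation {V : Type*} [Fintype V] (G : SimpleGraph V) : Prop :=
  IsPlanar G ∧ 3 ≤ Fintype.card V ∧ G.edgeSet.ncard + 6 = 3 * Fintype.card V

/-- A vertex `4`-cut: a set of 4 vertices whose removal disconnects the graph. -/
def IsFourCut {V : Type*} (G : SimpleGraph V) (s : Finset V) : Prop :=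
  s.card = 4 ∧ ¬ (G.induce ((s : Set V)ᶜ)).Connected

set_option linter.unusedSectionVars false

/-! ### Reachability inside a vertex set -/

section Reach
variable {V : Type} {G : SimpleGraph V}

/-- `b` can be reached from `a` by a walk all of whose vertices lie in `S`. -/
def RIn (G : SimpleGraph V) (S : Set V) (a b : V) : Prop :=
  ∃ w : G.Walk a b, ∀ x ∈ w.support, x ∈ S

/-- The vertex set `S` is connected or empty. -/
def Cn (G : SimpleGraph V) (S : Set V) : Prop := ∀ a ∈ S, ∀ b ∈ S, RIn G S a b

/-- The open neighbourhood of a vertex set. -/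
def nbd (G : SimpleGraph V) (X : Set V) : Set V := {v | v ∉ X ∧ ∃ x ∈ X, G.Adj x v}

/-- The component of `a` in the subgraph induced by `S`. -/
def comp (G : SimpleGraph V) (S : Set V) (a : V) : Set V := {b | RIn G S a b}

lemma RIn.refl {S : Set V} {a : V} (h : a ∈ S) : RIn G S a a :=
  ⟨Walk.nil, by simpa using h⟩

lemma RIn.symm {S : Set V} {a b : V} (h : RIn G S a b) : RIn G S b a := by
  obtain ⟨w, hw⟩ := h
  exact ⟨w.reverse, by simpa using hw⟩

lemma RIn.trans {S : Set V} {a b c : V} (h : RIn G S a b) (h' : RIn G S b c) : RIn G S a c := by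
  obtain ⟨w, hw⟩ := h
  obtain ⟨w', hw'⟩ := h'
  refine ⟨w.append w', fun x hx => ?_⟩
  rcases (Walk.mem_support_append_iff _ _).1 hx with h | h
  exacts [hw x h, hw' x h]

lemma RIn.mono {S T : Set V} {a b : V} (h : RIn G S a b) (hST : S ⊆ T) : RIn G T a b := by
  obtain ⟨w, hw⟩ := h
  exact ⟨w, fun x hx => hST (hw x hx)⟩

lemma RIn.left {S : Set V} {a b : V} (h : RIn G S a b) : a ∈ S := by
  obtain ⟨w, hw⟩ := h
  exact hw a (by simp)

lemma RIn.right {S : Set V} {a b : V} (h : RIn G S a b) : b ∈ S := h.symm.left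

lemma RIn.of_adj {S : Set V} {a b : V} (h : G.Adj a b) (ha : a ∈ S) (hb : b ∈ S) :
    RIn G S a b :=
  ⟨h.toWalk, by simp [ha, hb]⟩

/-- A walk inside `S` that leaves `T` crosses an edge from `T` to its complement. -/
lemma RIn.exit {S T : Set V} {a b : V} (h : RIn G S a b) (ha : a ∈ T) (hb : b ∉ T) :
    ∃ x ∈ T, ∃ y, y ∉ T ∧ x ∈ S ∧ y ∈ S ∧ G.Adj x y := by
  obtain ⟨w, hw⟩ := h
  obtain ⟨d, hd, h1, h2⟩ := w.exists_boundary_dart T ha hb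
  exact ⟨d.fst, h1, d.snd, h2, hw _ (w.dart_fst_mem_support_of_mem_darts hd),
    hw _ (w.dart_snd_mem_support_of_mem_darts hd), d.adj⟩

lemma RIn.isPath {S : Set V} {a b : V} (h : RIn G S a b) :
    ∃ w : G.Walk a b, w.IsPath ∧ ∀ x ∈ w.support, x ∈ S := by
  obtain ⟨w, hw⟩ := h
  exact ⟨w.bypass, w.bypass_isPath, fun x hx => hw x (w.support_bypass_subset_support hx)⟩

lemma Cn.induce_connected {S : Set V} (h : Cn G S) (hS : S.Nonempty) :
    (G.induce S).Connected := by
  obtain ⟨a, ha⟩ := hS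
  have : Nonempty S := ⟨⟨a, ha⟩⟩
  refine Connected.mk (fun x y => ?_)
  obtain ⟨w, hw⟩ := h x x.2 y y.2
  exact ⟨w.induce S hw⟩

lemma cn_of_induce {S : Set V} (h : (G.induce S).Connected) : Cn G S := by
  intro a ha b hb
  obtain ⟨w⟩ := h.preconnected ⟨a, ha⟩ ⟨b, hb⟩
  refine ⟨w.map (Embedding.induce S).toHom, fun x hx => ?_⟩
  have hx' : x ∈ w.support.map (Embedding.induce (G := G) S).toHom := by
    rw [← Walk.support_map]; exact hx
  obtain ⟨y, -, rfl⟩ := List.mem_map.1 hx'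
  exact y.2

lemma cn_empty : Cn G (∅ : Set V) := fun _ ha => ha.elim

lemma cn_singleton (v : V) : Cn G ({v} : Set V) := by
  intro a ha b hb
  simp only [Set.mem_singleton_iff] at ha hb
  subst ha; subst hb
  exact RIn.refl rfl

lemma cn_comp (S : Set V) (a : V) : Cn G (comp G S a) := by
  have key : ∀ b ∈ comp G S a, RIn G (comp G S a) a b := by
    rintro b ⟨w, hw⟩
    refine ⟨w, fun x hx => ⟨w.takeUntil x hx, fun y hy => hw y ?_⟩⟩
    exact w.support_takeUntil_subset_support hx hy
  exact fun b hb c hc => (key b hb).symm.trans (key c hc)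

lemma comp_subset (S : Set V) (a : V) : comp G S a ⊆ S := fun _ h => h.right

lemma mem_comp_self {S : Set V} {a : V} (h : a ∈ S) : a ∈ comp G S a := RIn.refl h

lemma comp_adj {S : Set V} {a x y : V} (hx : x ∈ comp G S a) (h : G.Adj x y) (hy : y ∈ S) :
    y ∈ comp G S a := RIn.trans hx (RIn.of_adj h (comp_subset _ _ hx) hy)

lemma nbd_comp_disj {S : Set V} {a y : V} (h : y ∈ nbd G (comp G S a)) : y ∉ S := by
  obtain ⟨h1, x, hx, hxy⟩ := h
  exact fun hy => h1 (comp_adj hx hxy hy)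

lemma Cn.union {S T : Set V} (hS : Cn G S) (hT : Cn G T) {s t : V} (hs : s ∈ S) (ht : t ∈ T)
    (h : G.Adj s t ∨ s = t) : Cn G (S ∪ T) := by
  have hst : RIn G (S ∪ T) s t := by
    rcases h with h | rfl
    · exact RIn.of_adj h (Or.inl hs) (Or.inr ht)
    · exact RIn.refl (Or.inl hs)
  have hS' : ∀ a ∈ S, RIn G (S ∪ T) a s := fun a ha => (hS a ha s hs).mono Set.subset_union_left
  have hT' : ∀ a ∈ T, RIn G (S ∪ T) a s := fun a ha =>
    ((hT a ha t ht).mono Set.subset_union_right).trans hst.symm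
  have : ∀ a ∈ S ∪ T, RIn G (S ∪ T) a s := by
    rintro a (ha | ha)
    exacts [hS' a ha, hT' a ha]
  exact fun a ha b hb => (this a ha).trans (this b hb).symm

lemma Cn.insert {S : Set V} (hS : Cn G S) {s t : V} (hs : s ∈ S) (h : G.Adj s t) :
    Cn G (insert t S) := by
  rw [Set.insert_eq, Set.union_comm]
  exact hS.union (cn_singleton t) hs rfl (Or.inl h)

lemma cn_support {a b : V} (w : G.Walk a b) : Cn G {x | x ∈ w.support} :=
  cn_of_induce w.connected_induce_support

end Reach

/-! ### Cycles as edge sets -/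

section Cycles
variable {V : Type} {G : SimpleGraph V}

/-- Edge sets of cycles of `G`. -/
def IsCyc (G : SimpleGraph V) (E : Set (Sym2 V)) : Prop :=
  ∃ (u : V) (c : G.Walk u u), c.IsCycle ∧ E = c.edgeSet

/-- The vertices covered by an edge set. -/
def vts (E : Set (Sym2 V)) : Set V := {v | ∃ e ∈ E, v ∈ e}

/-- The inner vertices of a walk. -/
def inn {p r : V} (A : G.Walk p r) : Set V := {x | x ∈ A.support ∧ x ≠ p ∧ x ≠ r}

/-- The cycle with edge set `E` decomposes into the two internally disjoint paths `A`, `A'`. -/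
structure Arcs (E : Set (Sym2 V)) {p r : V} (A A' : G.Walk p r) : Prop where
  ne : p ≠ r
  pA : A.IsPath
  pA' : A'.IsPath
  supp : ∀ x ∈ A.support, x ∈ A'.support → x = p ∨ x = r
  edg : ∀ e ∈ A.edges, e ∉ A'.edges
  eq : E = A.edgeSet ∪ A'.edgeSet

lemma mem_vts {E : Set (Sym2 V)} {x y : V} (h : s(x, y) ∈ E) : x ∈ vts E := ⟨_, h, by simp⟩
lemma mem_vts' {E : Set (Sym2 V)} {x y : V} (h : s(x, y) ∈ E) : y ∈ vts E := ⟨_, h, by simp⟩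

lemma mem_vts_iff {E : Set (Sym2 V)} {x : V} : x ∈ vts E ↔ ∃ y, s(x, y) ∈ E := by
  constructor
  · rintro ⟨e, he, hx⟩
    obtain ⟨y, rfl⟩ := Sym2.mem_iff_exists.1 hx
    exact ⟨y, he⟩
  · rintro ⟨y, h⟩
    exact mem_vts h

lemma vts_mono {E F : Set (Sym2 V)} (h : E ⊆ F) : vts E ⊆ vts F :=
  fun _ ⟨e, he, hx⟩ => ⟨e, h he, hx⟩

lemma vts_union (E F : Set (Sym2 V)) : vts (E ∪ F) = vts E ∪ vts F := by
  ext x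
  constructor
  · rintro ⟨e, he | he, hx⟩
    exacts [Or.inl ⟨e, he, hx⟩, Or.inr ⟨e, he, hx⟩]
  · rintro (⟨e, he, hx⟩ | ⟨e, he, hx⟩)
    exacts [⟨e, Or.inl he, hx⟩, ⟨e, Or.inr he, hx⟩]

lemma vts_edgeSet {p r : V} {A : G.Walk p r} (h : ¬ A.Nil) :
    vts A.edgeSet = {x | x ∈ A.support} := by
  ext x
  exact (Walk.mem_support_iff_exists_mem_edges_of_not_nil h).symm

lemma not_nil_of_ne' {p r : V} {A : G.Walk p r} (h : p ≠ r) : ¬ A.Nil := fun hn => h hn.eq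

lemma Arcs.swap {E : Set (Sym2 V)} {p r : V} {A A' : G.Walk p r} (h : Arcs E A A') :
    Arcs E A' A where
  ne := h.ne
  pA := h.pA'
  pA' := h.pA
  supp x hx hx' := h.supp x hx' hx
  edg e he he' := h.edg e he' he
  eq := by rw [h.eq, Set.union_comm]

lemma Arcs.rev {E : Set (Sym2 V)} {p r : V} {A A' : G.Walk p r} (h : Arcs E A A') :
    Arcs E A.reverse A'.reverse where
  ne := h.ne.symm
  pA := h.pA.reverse
  pA' := h.pA'.reverse
  supp x hx hx' := (h.supp x (by simpa using hx) (by simpa using hx')).symm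
  edg e he he' := h.edg e (by simpa using he) (by simpa using he')
  eq := by rw [h.eq]; ext; simp [Walk.edgeSet]

lemma Arcs.vts {E : Set (Sym2 V)} {p r : V} {A A' : G.Walk p r} (h : Arcs E A A') :
    vts E = {x | x ∈ A.support} ∪ {x | x ∈ A'.support} := by
  rw [h.eq, vts_union, vts_edgeSet (not_nil_of_ne' h.ne), vts_edgeSet (not_nil_of_ne' h.ne)]

lemma inn_nonempty {p r : V} {A : G.Walk p r} (hA : A.IsPath) (hne : p ≠ r)
    (h : s(p, r) ∉ A.edges) : (inn A).Nonempty := by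
  cases A with
  | nil => exact absurd rfl hne
  | cons hadj q =>
    rename_i v
    refine ⟨v, by simp, hadj.ne', ?_⟩
    rintro rfl
    simp at h

lemma cn_inn {p r : V} {A : G.Walk p r} (hA : A.IsPath) : Cn G (inn A) := by
  by_cases hpr : p = r
  · subst hpr
    obtain rfl := (Walk.isPath_iff_nil.1 hA).eq_nil
    rintro a ⟨h1, h2, -⟩
    simp at h1
    exact absurd h1 h2
  cases A with
  | nil => exact absurd rfl hpr
  | cons hadj q =>
    rename_i v
    by_cases hv : v = r
    · subst hv
      have hq := hA.of_cons
      obtain rfl := (Walk.isPath_iff_nil.1 hq).eq_nil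
      rintro a ⟨h1, h2, h3⟩
      simp [h2, h3] at h1
    · have hq := hA.of_cons
      have hnn : ¬ q.Nil := not_nil_of_ne' hv
      have : inn (Walk.cons hadj q) = {x | x ∈ q.dropLast.support} := by
        have hp := (Walk.cons_isPath_iff _ _).1 hA
        have h3 := q.concat_dropLast (q.adj_penultimate hnn)
        have h4 : (q.dropLast.concat (q.adj_penultimate hnn)).IsPath := by rw [h3]; exact hq
        have h5 := (Walk.concat_isPath_iff _).1 h4
        have h6 : ∀ x, x ∈ q.support ↔ x ∈ q.dropLast.support ∨ x = r := by
          intro x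
          conv_lhs => rw [← h3, Walk.support_concat]
          simp
        ext x
        simp only [inn, Walk.support_cons, List.mem_cons, Set.mem_ofPred_eq]
        constructor
        · rintro ⟨h | h, h', h''⟩
          · exact absurd h h'
          · exact ((h6 x).1 h).resolve_right h''
        · intro h
          refine ⟨Or.inr ((h6 x).2 (Or.inl h)), ?_, ?_⟩
          · rintro rfl
            exact hp.2 ((h6 _).2 (Or.inl h))
          · rintro rfl
            exact h5.2 h
      rw [this]
      exact cn_support _

lemma Arcs.isCyc {E : Set (Sym2 V)} {p r : V} {A A' : G.Walk p r} (h : Arcs E A A') :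
    IsCyc G E := by
  refine ⟨p, A.append A'.reverse, h.pA.isCycle_append h.pA'.reverse ?_ ?_, ?_⟩
  · intro x hx hx'
    have h1 := h.supp x (List.mem_of_mem_tail hx)
      (by simpa using (List.mem_of_mem_tail hx'))
    have hn1 := h.pA.support_nodup
    have hn2 := h.pA'.reverse.support_nodup
    rcases h1 with rfl | rfl
    · rw [← Walk.cons_tail_support] at hn1
      exact (List.nodup_cons.1 hn1).1 hx
    · rw [← Walk.cons_tail_support] at hn2
      exact (List.nodup_cons.1 hn2).1 hx'
  · by_contra hcon
    push Not at hcon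
    have key : ∀ B : G.Walk p r, B.length ≤ 1 → s(p, r) ∈ B.edges := by
      intro B hB
      cases B with
      | nil => exact absurd rfl h.ne
      | cons ha q =>
        cases q with
        | nil => simp
        | cons hb q => simp at hB
    exact h.edg _ (key A hcon.1) (key A' (by simpa using hcon.2))
  · rw [h.eq]; ext; simp [Walk.edgeSet]

lemma IsCyc.subset {E : Set (Sym2 V)} (h : IsCyc G E) : E ⊆ G.edgeSet := by
  obtain ⟨u, c, hc, rfl⟩ := h
  exact fun e he => c.edges_subset_edgeSet he

lemma IsCyc.exists_walk {E : Set (Sym2 V)} (h : IsCyc G E) {p : V} (hp : p ∈ vts E) :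
    ∃ c : G.Walk p p, c.IsCycle ∧ E = c.edgeSet := by
  obtain ⟨u, c, hc, rfl⟩ := h
  rw [vts_edgeSet hc.not_nil] at hp
  refine ⟨c.rotate p hp, hc.rotate hp, ?_⟩
  ext e
  exact ((c.rotate_edges p hp).mem_iff).symm

/-- Any two vertices of a cycle split it into two arcs. -/
lemma IsCyc.arcs {E : Set (Sym2 V)} (h : IsCyc G E) {p r : V} (hp : p ∈ vts E) (hr : r ∈ vts E)
    (hne : p ≠ r) : ∃ A A' : G.Walk p r, Arcs E A A' := by
  obtain ⟨c, hc, rfl⟩ := h.exists_walk hp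
  rw [vts_edgeSet hc.not_nil] at hr
  have hs := c.take_spec hr
  set a := c.takeUntil r hr
  set b := c.dropUntil r hr
  rw [← hs] at hc
  have hb : b.IsPath := hc.isPath_of_append_right (not_nil_of_ne' hne)
  have ha : a.IsPath := hc.isPath_of_append_left (not_nil_of_ne' hne.symm)
  refine ⟨a, b.reverse, hne, ha, hb.reverse, ?_, ?_, ?_⟩
  · intro x hx hx'
    have hx' : x ∈ b.support := by simpa using hx'
    have hnd := hc.support_nodup
    rw [Walk.tail_support_append] at hnd
    have hd := List.disjoint_of_nodup_append hnd
    by_contra hcon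
    push Not at hcon
    have e1 : x ∈ a.support.tail := by
      rw [← Walk.cons_tail_support] at hx
      exact (List.mem_cons.1 hx).resolve_left hcon.1
    have e2 : x ∈ b.support.tail := by
      rw [← Walk.cons_tail_support] at hx'
      exact (List.mem_cons.1 hx').resolve_left hcon.2
    exact hd e1 e2
  · intro e he he'
    have hnd := hc.isTrail.edges_nodup
    rw [Walk.edges_append] at hnd
    exact List.disjoint_of_nodup_append hnd he (by simpa using he')
  · rw [← hs]; ext; simp [Walk.edgeSet]

lemma IsCyc.nonempty {E : Set (Sym2 V)} (h : IsCyc G E) : E.Nonempty := by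
  obtain ⟨u, c, hc, rfl⟩ := h
  cases c with
  | nil => exact absurd rfl hc.ne_nil
  | cons ha q => exact ⟨_, by simp [Walk.edgeSet]; left; rfl⟩

lemma IsCyc.deg {E : Set (Sym2 V)} (h : IsCyc G E) {p : V} (hp : p ∈ vts E) :
    {q | s(p, q) ∈ E}.ncard = 2 := by
  obtain ⟨c, hc, rfl⟩ := h.exists_walk hp
  rw [← hc.ncard_neighborSet_toSubgraph_eq_two (v := p) (by simp)]
  congr 1
  ext q
  simp [Walk.adj_toSubgraph_iff_mem_edges, Walk.edgeSet]

lemma IsCyc.cn {E : Set (Sym2 V)} (h : IsCyc G E) : Cn G (vts E) := by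
  obtain ⟨u, c, hc, rfl⟩ := h
  rw [vts_edgeSet hc.not_nil]
  exact cn_support c

/-- Deleting an edge from a cycle leaves a path between its ends. -/
lemma IsCyc.edge_path {E : Set (Sym2 V)} (h : IsCyc G E) {p q : V} (he : s(p, q) ∈ E) :
    ∃ P : G.Walk p q, P.IsPath ∧ s(p, q) ∉ P.edges ∧ E = insert s(p, q) P.edgeSet := by
  have hadj : G.Adj p q := h.subset he
  obtain ⟨A, A', hA⟩ := h.arcs (mem_vts he) (mem_vts' he) hadj.ne
  have key : ∀ B B' : G.Walk p q, Arcs E B B' → s(p, q) ∈ B.edges →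
      ∃ P : G.Walk p q, P.IsPath ∧ s(p, q) ∉ P.edges ∧ E = insert s(p, q) P.edgeSet := by
    intro B B' hB hm
    refine ⟨B', hB.pA', hB.edg _ hm, ?_⟩
    have := hB.pA.eq_adj_toWalk_of_mem_edges hm
    rw [hB.eq, this]
    ext e; simp [Walk.edgeSet]
  have he' := he
  rw [hA.eq] at he'
  rcases he' with h' | h'
  · exact key A A' hA h'
  · exact key A' A hA.swap h'

lemma isCyc_of_path {p q : V} {P : G.Walk p q} (hP : P.IsPath) (hadj : G.Adj p q)
    (h : s(p, q) ∉ P.edges) : IsCyc G (insert s(p, q) P.edgeSet) := by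
  have : Arcs (insert s(p, q) P.edgeSet) hadj.toWalk P := by
    refine ⟨hadj.ne, hadj.isPath_toWalk, hP, ?_, ?_, ?_⟩
    · intro x hx _; simpa using hx
    · intro e he; simp at he; rw [he]; exact h
    · ext e; simp [Walk.edgeSet]
  exact this.isCyc

end Cycles

/-! ### Arcs and chords of cycles -/

section Cycles2
variable {V : Type} {G : SimpleGraph V}

lemma exit_edge {E : Set (Sym2 V)} {T : Set V} {a b : V} (w : G.Walk a b)
    (hw : ∀ e ∈ w.edges, e ∈ E) (ha : a ∈ T) (hb : b ∉ T) :
    ∃ x ∈ T, ∃ y, y ∉ T ∧ x ∈ w.support ∧ y ∈ w.support ∧ s(x, y) ∈ E := by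
  obtain ⟨d, hd, h1, h2⟩ := w.exists_boundary_dart T ha hb
  exact ⟨d.fst, h1, d.snd, h2, w.dart_fst_mem_support_of_mem_darts hd,
    w.dart_snd_mem_support_of_mem_darts hd, hw _ (List.mem_map.2 ⟨d, hd, rfl⟩)⟩

lemma IsCyc.finite_nbr {E : Set (Sym2 V)} (h : IsCyc G E) {p : V} (hp : p ∈ vts E) :
    {q | s(p, q) ∈ E}.Finite := by
  apply Set.finite_of_ncard_ne_zero
  rw [h.deg hp]; simp

/-- A cycle contained in a cycle equals it. -/
lemma IsCyc.eq_of_subset {E F : Set (Sym2 V)} (hE : IsCyc G E) (hF : IsCyc G F) (h : E ⊆ F) :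
    E = F := by
  have key : ∀ p ∈ vts E, ∀ q, s(p, q) ∈ F → s(p, q) ∈ E := by
    intro p hp q hq
    have hs : {q | s(p, q) ∈ E} ⊆ {q | s(p, q) ∈ F} := fun x hx => h hx
    have := Set.eq_of_subset_of_ncard_le hs
      (by rw [hE.deg hp, hF.deg (vts_mono h hp)]) (hF.finite_nbr (vts_mono h hp))
    exact (Set.ext_iff.1 this q).2 hq
  obtain ⟨e, he⟩ := hE.nonempty
  induction e using Sym2.ind with
  | _ p q0 =>
  have hp : p ∈ vts E := mem_vts he
  obtain ⟨c, hc, rfl⟩ := hF.exists_walk (vts_mono h hp)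
  have hv : ∀ x ∈ vts c.edgeSet, x ∈ vts E := by
    intro x hx
    rw [vts_edgeSet hc.not_nil] at hx
    by_contra hcon
    obtain ⟨a, ha, b, hb, -, -, hab⟩ := exit_edge (E := c.edgeSet) (c.takeUntil x hx)
      (fun e he => c.edges_takeUntil_subset_edges hx he) hp hcon
    exact hb (mem_vts' (key a ha b hab))
  refine h.antisymm fun e he => ?_
  induction e using Sym2.ind with
  | _ a b => exact key a (hv a (mem_vts he)) b he

/-- A walk along a cycle that leaves the interior of an arc passes through an end of the arc. -/
lemma Arcs.sep {E : Set (Sym2 V)} {p r : V} {A A' : G.Walk p r} (h : Arcs E A A') {a b : V}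
    (w : G.Walk a b) (hw : ∀ e ∈ w.edges, e ∈ E) (ha : a ∈ inn A) (hb : b ∉ inn A) :
    p ∈ w.support ∨ r ∈ w.support := by
  obtain ⟨x, hx, y, hy, -, hys, hxy⟩ := exit_edge w hw ha hb
  by_contra hcon
  push Not at hcon
  rw [h.eq] at hxy
  rcases hxy with hxy | hxy
  · refine hy ⟨A.snd_mem_support_of_mem_edges hxy, ?_, ?_⟩
    · rintro rfl; exact hcon.1 hys
    · rintro rfl; exact hcon.2 hys
  · rcases h.supp x hx.1 (A'.fst_mem_support_of_mem_edges hxy) with h1 | h1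
    exacts [hx.2.1 h1, hx.2.2 h1]

lemma append_isPath {a b c : V} {p : G.Walk a b} {q : G.Walk b c} (hp : p.IsPath) (hq : q.IsPath)
    (h : ∀ x ∈ p.support, x ∈ q.support → x = b) : (p.append q).IsPath := by
  rw [Walk.isPath_def, Walk.support_append, List.nodup_append']
  refine ⟨hp.support_nodup, hq.support_nodup.tail, fun x hx hx' => ?_⟩
  have := h x hx (List.mem_of_mem_tail hx')
  subst this
  have hn := hq.support_nodup
  rw [← Walk.cons_tail_support] at hn
  exact (List.nodup_cons.1 hn).1 hx'

/-- Moving one end of an arc to an inner vertex of the arc. -/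
lemma Arcs.shrink {E : Set (Sym2 V)} {p r x : V} {Y1 : G.Walk p x} {Y2 : G.Walk x r}
    {A' : G.Walk p r} (h : Arcs E (Y1.append Y2) A') (hx : x ≠ p) :
    Arcs E Y1 (A'.append Y2.reverse) := by
  have h1 : Y1.IsPath := h.pA.of_append_left
  have h2 : Y2.IsPath := h.pA.of_append_right
  have hd : ∀ y ∈ Y1.support, y ∈ Y2.support → y = x := by
    intro y hy hy'
    by_contra hcon
    have := h.pA.support_nodup
    rw [Walk.support_append] at this
    have hdis := List.disjoint_of_nodup_append this
    rw [← Walk.cons_tail_support] at hy'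
    exact hdis hy ((List.mem_cons.1 hy').resolve_left hcon)
  have hpY2 : p ∉ Y2.support := fun hp => hx (hd p (by simp) hp).symm
  refine ⟨hx.symm, h1, append_isPath h.pA' h2.reverse ?_, ?_, ?_, ?_⟩
  · intro y hy hy'
    have hy' : y ∈ Y2.support := by simpa using hy'
    rcases h.supp y (by simp [Walk.mem_support_append_iff, hy']) hy with rfl | rfl
    · exact absurd hy' hpY2
    · rfl
  · intro y hy hy'
    rcases (Walk.mem_support_append_iff _ _).1 hy' with h' | h'
    · rcases h.supp y (by simp [Walk.mem_support_append_iff, hy]) h' with rfl | rfl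
      · exact Or.inl rfl
      · exact Or.inr (hd _ hy (by simp))
    · exact Or.inr (hd y hy (by simpa using h'))
  · intro e he he'
    simp only [Walk.edges_append, Walk.edges_reverse, List.mem_append, List.mem_reverse] at he'
    rcases he' with h' | h'
    · exact h.edg e (by simp [he]) h'
    · have hn := h.pA.isTrail.edges_nodup
      rw [Walk.edges_append] at hn
      exact List.disjoint_of_nodup_append hn he h'
  · rw [h.eq]; ext e; simp [Walk.edgeSet]; tauto

/-- The arc around `p` cut out by the two nearest elements of `β` on the cycle. -/
lemma IsCyc.near_arc {E : Set (Sym2 V)} (hE : IsCyc G E) {β : Set V} (hβ : β ⊆ vts E)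
    (h2 : β.Nontrivial) {p : V} (hp : p ∈ vts E) (hpβ : p ∉ β) :
    ∃ b1 ∈ β, ∃ b2 ∈ β, ∃ Y Y' : G.Walk b1 b2, Arcs E Y Y' ∧ p ∈ inn Y ∧
      ∀ x ∈ inn Y, x ∉ β := by
  have hex : ∃ n, ∃ b1 ∈ β, ∃ b2 ∈ β, ∃ Y Y' : G.Walk b1 b2, Arcs E Y Y' ∧ p ∈ inn Y ∧
      Y.length = n := by
    obtain ⟨b1, hb1, b2, hb2, hne⟩ := h2
    obtain ⟨A, A', hA⟩ := hE.arcs (hβ hb1) (hβ hb2) hne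
    have hp' := hp
    rw [hA.vts] at hp'
    have n1 : p ≠ b1 := fun h => hpβ (h ▸ hb1)
    have n2 : p ≠ b2 := fun h => hpβ (h ▸ hb2)
    rcases hp' with h | h
    · exact ⟨_, b1, hb1, b2, hb2, A, A', hA, ⟨h, n1, n2⟩, rfl⟩
    · exact ⟨_, b1, hb1, b2, hb2, A', A, hA.swap, ⟨h, n1, n2⟩, rfl⟩
  obtain ⟨b1, hb1, b2, hb2, Y, Y', hY, hpY, hlen⟩ := Nat.find_spec hex
  refine ⟨b1, hb1, b2, hb2, Y, Y', hY, hpY, fun x hx hxβ => ?_⟩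
  obtain ⟨Y1, Y2, hY1, hY2, rfl⟩ := hY.pA.mem_support_iff_exists_append.1 hx.1
  have hpx : p ≠ x := fun h => hpβ (h ▸ hxβ)
  have l1 : 0 < Y1.length := by
    rcases Nat.eq_zero_or_pos Y1.length with h | h
    · exact absurd (Walk.eq_of_length_eq_zero h).symm hx.2.1
    · exact h
  have l2 : 0 < Y2.length := by
    rcases Nat.eq_zero_or_pos Y2.length with h | h
    · exact absurd (Walk.eq_of_length_eq_zero h) hx.2.2
    · exact h
  rw [Walk.length_append] at hlen
  rcases (Walk.mem_support_append_iff _ _).1 hpY.1 with h | h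
  · refine Nat.find_min hex (m := Y1.length) (by omega)
      ⟨b1, hb1, x, hxβ, Y1, _, hY.shrink hx.2.1, ⟨h, hpY.2.1, hpx⟩, rfl⟩
  · have hr := hY.rev
    rw [Walk.reverse_append] at hr
    refine Nat.find_min hex (m := Y2.reverse.length) (by rw [Walk.length_reverse]; omega)
      ⟨b2, hb2, x, hxβ, Y2.reverse, _, hr.shrink hx.2.2, ⟨by simpa using h, hpY.2.2, hpx⟩, rfl⟩

/-- Replacing an edge of a cycle by a path of length two through a new vertex. -/
lemma IsCyc.tent {E : Set (Sym2 V)} (hE : IsCyc G E) {p q t : V} (he : s(p, q) ∈ E)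
    (ht : t ∉ vts E) (h1 : G.Adj p t) (h2 : G.Adj t q) :
    IsCyc G (E \ {s(p, q)} ∪ {s(p, t), s(t, q)}) := by
  have hpq : G.Adj p q := hE.subset he
  obtain ⟨P, hP, hn, hEq⟩ := hE.edge_path he
  have hv : ∀ x ∈ P.support, x ∈ vts E := by
    intro x hx
    have : x ∈ vts P.edgeSet := by rw [vts_edgeSet (not_nil_of_ne' hpq.ne)]; exact hx
    exact vts_mono (by rw [hEq]; exact Set.subset_insert _ _) this
  have : Arcs (E \ {s(p, q)} ∪ {s(p, t), s(t, q)}) P (Walk.cons h1 h2.toWalk) := by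
    refine ⟨hpq.ne, hP, ?_, ?_, ?_, ?_⟩
    · simp [h2.ne, h1.ne, hpq.ne]
    · intro x hx hx'
      simp at hx'
      rcases hx' with h | h | h
      · exact Or.inl h
      · exact absurd (h ▸ hv x hx) ht
      · exact Or.inr h
    · intro e he he'
      simp at he'
      rcases he' with rfl | rfl
      · exact ht (hv _ (P.snd_mem_support_of_mem_edges he))
      · exact ht (hv _ (P.fst_mem_support_of_mem_edges he))
    · rw [hEq]
      ext e
      simp only [Walk.edgeSet, Set.mem_union, Set.mem_sdiff, Set.mem_insert_iff,
        Set.mem_ofPred_eq, Set.mem_singleton_iff, Walk.edges_cons, List.mem_cons]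
      constructor
      · rintro (⟨rfl | h, h'⟩ | h)
        · exact absurd rfl h'
        · exact Or.inl h
        · right; simpa using h
      · rintro (h | h)
        · refine Or.inl ⟨Or.inr h, ?_⟩
          rintro rfl
          exact hn h
        · right; simpa using h
  exact this.isCyc

/-- A path between two vertices of `E`, otherwise disjoint from `E`. -/
structure Ear (E : Set (Sym2 V)) {p r : V} (Q : G.Walk p r) : Prop where
  ne : p ≠ r
  path : Q.IsPath
  supp : ∀ x ∈ Q.support, x ∈ vts E → x = p ∨ x = r
  edg : ∀ e ∈ Q.edges, e ∉ E

lemma Arcs.ear {E : Set (Sym2 V)} {p r : V} {A A' Q : G.Walk p r} (h : Arcs E A A')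
    (hQ : Ear E Q) : Arcs (A.edgeSet ∪ Q.edgeSet) A Q where
  ne := h.ne
  pA := h.pA
  pA' := hQ.path
  supp x hx hx' := hQ.supp x hx' (by rw [h.vts]; exact Or.inl hx)
  edg e he he' := hQ.edg e he' (by rw [h.eq]; exact Or.inl he)
  eq := rfl

/-- A path through a connected set adjacent to both ends. -/
lemma exists_path_through {H : Set V} (hH : Cn G H) {p r h1 h2 : V} (hne : p ≠ r) (hp : p ∉ H)
    (hr : r ∉ H) (hh1 : h1 ∈ H) (hh2 : h2 ∈ H) (a1 : G.Adj p h1) (a2 : G.Adj r h2) :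
    ∃ Q : G.Walk p r, Q.IsPath ∧ (∀ x ∈ Q.support, x = p ∨ x = r ∨ x ∈ H) ∧
      (∀ e ∈ Q.edges, ∃ x ∈ H, x ∈ e) ∧ (∀ x ∈ inn Q, x ∈ H) ∧ (inn Q).Nonempty := by
  obtain ⟨w, hw, hs⟩ := (hH h1 hh1 h2 hh2).isPath
  have hcp : (w.concat a2.symm).IsPath := hw.concat (fun h => hr (hs r h)) _
  have hsupp : ∀ x ∈ (Walk.cons a1 (w.concat a2.symm)).support, x = p ∨ x = r ∨ x ∈ H := by
    intro x hx
    simp only [Walk.support_cons, Walk.support_concat, List.mem_cons,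
      List.mem_append, List.not_mem_nil, or_false] at hx
    rcases hx with h | h | h
    · exact Or.inl h
    · exact Or.inr (Or.inr (hs x h))
    · exact Or.inr (Or.inl h)
  refine ⟨Walk.cons a1 (w.concat a2.symm), ?_, hsupp, ?_, ?_, ?_⟩
  · rw [Walk.cons_isPath_iff]
    refine ⟨hcp, fun h => ?_⟩
    simp only [Walk.support_concat, List.mem_append, List.mem_singleton] at h
    rcases h with h | h
    exacts [hp (hs p h), hne h]
  · intro e he
    simp only [Walk.edges_cons, Walk.edges_concat, List.mem_cons, List.concat_eq_append,
      List.mem_append, List.not_mem_nil, or_false] at he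
    rcases he with rfl | h | rfl
    · exact ⟨h1, hh1, by simp⟩
    · induction e using Sym2.ind with
      | _ a b => exact ⟨a, hs a (w.fst_mem_support_of_mem_edges h), by simp⟩
    · exact ⟨h2, hh2, by simp⟩
  · intro x hx
    exact ((hsupp x hx.1).resolve_left hx.2.1).resolve_left hx.2.2
  · exact ⟨h1, by simp [Walk.support_concat], fun h => hp (h ▸ hh1), fun h => hr (h ▸ hh1)⟩

lemma ear_of_through {E : Set (Sym2 V)} {H : Set V} (hd : ∀ x ∈ H, x ∉ vts E) {p r : V}
    (hne : p ≠ r) {Q : G.Walk p r} (hQ : Q.IsPath)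
    (h1 : ∀ x ∈ Q.support, x = p ∨ x = r ∨ x ∈ H) (h2 : ∀ e ∈ Q.edges, ∃ x ∈ H, x ∈ e) :
    Ear E Q where
  ne := hne
  path := hQ
  supp x hx hxE := by
    rcases h1 x hx with h | h | h
    exacts [Or.inl h, Or.inr h, absurd hxE (hd x h)]
  edg e he heE := by
    obtain ⟨x, hx, hxe⟩ := h2 e he
    exact hd x hx ⟨e, heE, hxe⟩

lemma ear_chord {E : Set (Sym2 V)} {p r : V} (h : G.Adj p r) (hE : s(p, r) ∉ E) :
    Ear E h.toWalk where
  ne := h.ne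
  path := h.isPath_toWalk
  supp x hx _ := by simpa using hx
  edg e he := by simp at he; rwa [he]

end Cycles2

/-! ### Kuratowski minors and 4-connectivity -/

section Minor
variable {V : Type} {G : SimpleGraph V}

/-- Some vertex of `S` is adjacent to some vertex of `T`. -/
def Tch (G : SimpleGraph V) (S T : Set V) : Prop := ∃ s ∈ S, ∃ t ∈ T, G.Adj s t

lemma Tch.symm {S T : Set V} (h : Tch G S T) : Tch G T S := by
  obtain ⟨s, hs, t, ht, h⟩ := h
  exact ⟨t, ht, s, hs, h.symm⟩

/-- A branch set: nonempty and connected. -/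
def Br (G : SimpleGraph V) (S : Set V) : Prop := S.Nonempty ∧ Cn G S

lemma no_K5 (hG : IsPlanar G) (f : Fin 5 → Set V) (hf : ∀ i, Br G (f i))
    (hd : ∀ i j, i < j → Disjoint (f i) (f j)) (ht : ∀ i j, i < j → Tch G (f i) (f j)) :
    False := by
  refine hG.1 ⟨f, fun i => (hf i).1, fun i => (hf i).2.induce_connected (hf i).1, ?_, ?_⟩
  · intro i j hij
    rcases lt_or_gt_of_ne hij with h | h
    exacts [hd i j h, (hd j i h).symm]
  · intro i j hij
    rcases lt_or_gt_of_ne (show i ≠ j from hij) with h | h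
    exacts [ht i j h, (ht j i h).symm]

lemma no_K33 (hG : IsPlanar G) (f g : Fin 3 → Set V) (hf : ∀ i, Br G (f i)) (hg : ∀ i, Br G (g i))
    (hdf : ∀ i j, i < j → Disjoint (f i) (f j)) (hdg : ∀ i j, i < j → Disjoint (g i) (g j))
    (hfg : ∀ i j, Disjoint (f i) (g j)) (ht : ∀ i j, Tch G (f i) (g j)) : False := by
  refine hG.2 ⟨Sum.elim f g, ?_, ?_, ?_, ?_⟩
  · rintro (i | i)
    exacts [(hf i).1, (hg i).1]
  · rintro (i | i)
    exacts [(hf i).2.induce_connected (hf i).1, (hg i).2.induce_connected (hg i).1]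
  · rintro (i | i) (j | j) hij
    · rcases lt_or_gt_of_ne (fun h => hij (by rw [h]) : i ≠ j) with h | h
      exacts [hdf i j h, (hdf j i h).symm]
    · exact hfg i j
    · exact (hfg j i).symm
    · rcases lt_or_gt_of_ne (fun h => hij (by rw [h]) : i ≠ j) with h | h
      exacts [hdg i j h, (hdg j i h).symm]
  · rintro (i | i) (j | j) hij
    · simp at hij
    · exact ht i j
    · exact (ht j i).symm
    · simp at hij

/-- The standing assumptions: planar and 4-connected. -/
structure P4 (G : SimpleGraph V) [Fintype V] : Prop where
  pl : IsPlanar G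
  kc : IsKConnected 4 G

variable [Fintype V]

lemma P4.rin (hG : P4 G) {s : Set V} (hs : s.ncard < 4) : Cn G sᶜ := cn_of_induce (hG.kc.2 s hs)

/-- In a 4-connected graph a vertex set that does not dominate has at least four neighbours. -/
lemma P4.nbd_ge (hG : P4 G) {X : Set V} {x y : V} (hx : x ∈ X) (hy : y ∉ X) (hy' : y ∉ nbd G X) :
    4 ≤ (nbd G X).ncard := by
  by_contra hcon
  push Not at hcon
  obtain ⟨a, ha, b, hb, -, hb', hab⟩ := (hG.rin hcon x (fun h => h.1 hx) y hy').exit hx hy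
  exact hb' ⟨hb, a, ha, hab⟩

end Minor

/-! ### Faces as peripheral cycles -/

section Faces
variable {V : Type} {G : SimpleGraph V}

/-- Faces: induced cycles whose complement is connected. -/
structure IsFace (G : SimpleGraph V) (E : Set (Sym2 V)) : Prop where
  cyc : IsCyc G E
  ind : ∀ x ∈ vts E, ∀ y ∈ vts E, G.Adj x y → s(x, y) ∈ E
  conn : Cn G (vts E)ᶜ

lemma ncard_two_le (a b : V) : ({a, b} : Set V).ncard ≤ 2 := by
  have := Set.ncard_insert_le a {b}
  rw [Set.ncard_singleton] at this
  exact this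

lemma ncard_three_le (a b c : V) : ({a, b, c} : Set V).ncard ≤ 3 :=
  (Set.ncard_insert_le a {b, c}).trans (Nat.succ_le_succ (ncard_two_le b c))

lemma nbd_singleton (v : V) : nbd G {v} = {w | G.Adj v w} := by
  ext w
  simp only [nbd, Set.mem_singleton_iff, exists_eq_left, Set.mem_ofPred_eq]
  exact ⟨fun h => h.2, fun h => ⟨h.ne', h⟩⟩

variable [Fintype V]

lemma P4.deg_ge (hG : P4 G) (v : V) : 4 ≤ {w | G.Adj v w}.ncard := by
  rw [← nbd_singleton]
  by_cases h : ∃ y, y ∉ ({v} : Set V) ∧ y ∉ nbd G {v}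
  · obtain ⟨y, h1, h2⟩ := h
    exact hG.nbd_ge rfl h1 h2
  · push Not at h
    have : (Set.univ : Set V) ⊆ insert v (nbd G {v}) := by
      intro y _
      by_cases hy : y ∈ ({v} : Set V)
      · exact Or.inl hy
      · exact Or.inr (h y hy)
    have h1 := Set.ncard_le_ncard this
    have h2 := Set.ncard_insert_le v (nbd G {v})
    have h3 : (Set.univ : Set V).ncard = Fintype.card V := by simp
    have := hG.kc.1
    omega

lemma exists_not_adj_of_ncard {E : Set (Sym2 V)} (hE : IsCyc G E) {p : V} (hp : p ∈ vts E)
    {N : Set V} (hN : 4 ≤ N.ncard) : ∃ r ∈ N, r ≠ p ∧ s(p, r) ∉ E := by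
  by_contra hcon
  push Not at hcon
  have : N ⊆ insert p {q | s(p, q) ∈ E} := by
    intro r hr
    by_cases h : r = p
    · exact Or.inl h
    · exact Or.inr (hcon r hr h)
  have h1 := Set.ncard_le_ncard this
  have h2 := Set.ncard_insert_le p {q | s(p, q) ∈ E}
  rw [hE.deg hp] at h2
  omega

/-- Existence of peripheral cycles: a family of cycles that avoids a connected set `B₀` and is
closed under replacing one of the two arcs of a cycle by any ear avoiding `B₀` contains a face. The face is found
by maximising a connected set `B ⊇ B₀` off the cycle, and then minimising the cycle. -/
lemma P4.exists_face (hG : P4 G) {Zs : Set (Set (Sym2 V))} {B0 : Set V}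
    (hcyc : ∀ Z ∈ Zs, IsCyc G Z) (hne : Zs.Nonempty) (hB0 : Cn G B0)
    (hdis : ∀ Z ∈ Zs, ∀ x ∈ B0, x ∉ vts Z)
    (hcl : ∀ Z ∈ Zs, ∀ (p r : V) (A A' Q : G.Walk p r), Arcs Z A A' → Ear Z Q →
      (∀ x ∈ Q.support, x ∉ B0) →
      A.edgeSet ∪ Q.edgeSet ∈ Zs ∨ A'.edgeSet ∪ Q.edgeSet ∈ Zs) :
    ∃ Z ∈ Zs, IsFace G Z := by
  obtain ⟨B, ⟨hB0B, hBc, hZne⟩, hmax⟩ := (Set.toFinite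
    {B : Set V | B0 ⊆ B ∧ Cn G B ∧ ∃ Z ∈ Zs, ∀ x ∈ B, x ∉ vts Z}).exists_maximal
    ⟨B0, subset_rfl, hB0, hne.imp fun Z hZ => ⟨hZ, hdis Z hZ⟩⟩
  obtain ⟨Z, ⟨hZ, hZB⟩, hmin⟩ := Set.exists_min_image {Z | Z ∈ Zs ∧ ∀ x ∈ B, x ∉ vts Z}
    (fun Z => (vts Z).ncard) (Set.toFinite _) (hZne.imp fun Z h => h)
  have hZc := hcyc Z hZ
  -- Vertices off the cycle and off `B` cannot be used to enlarge `B`.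
  have hE : ∀ Z' ∈ Zs, (∀ x ∈ B, x ∉ vts Z') → ∀ v, v ∉ vts Z' → v ∉ B →
      ¬ Cn G (insert v B) := by
    intro Z' hZ' hB' v hv hvB hc
    have := hmax (y := insert v B) ⟨hB0B.trans (Set.subset_insert _ _), hc, Z', hZ', by
      rintro x (rfl | hx)
      exacts [hv, hB' x hx]⟩ (Set.subset_insert _ _)
    exact hvB (this (Set.mem_insert _ _))
  have hE' : ∀ Z' ∈ Zs, (∀ x ∈ B, x ∉ vts Z') → ∀ v, v ∉ vts Z' → v ∉ B →
      ∀ b ∈ B, ¬ G.Adj b v := fun Z' hZ' hB' v hv hvB b hb hadj =>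
    hE Z' hZ' hB' v hv hvB (hBc.insert hb hadj)
  -- Rerouting `Z` along an ear that avoids `B`.
  have hre : ∀ (p r : V) (A A' Q : G.Walk p r), Arcs Z A A' → Ear Z Q →
      (∀ x ∈ Q.support, x ∉ B) →
      (∃ A1 A2 : G.Walk p r, (A1 = A ∧ A2 = A' ∨ A1 = A' ∧ A2 = A) ∧ Arcs Z A1 A2 ∧
        A1.edgeSet ∪ Q.edgeSet ∈ Zs ∧ (∀ x ∈ B, x ∉ vts (A1.edgeSet ∪ Q.edgeSet)) ∧
        ∀ x ∈ inn A2, x ∉ vts (A1.edgeSet ∪ Q.edgeSet)) := by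
    intro p r A A' Q hA hQ hQB
    have key : ∀ A1 A2 : G.Walk p r, Arcs Z A1 A2 →
        (∀ x ∈ B, x ∉ vts (A1.edgeSet ∪ Q.edgeSet)) ∧
        ∀ x ∈ inn A2, x ∉ vts (A1.edgeSet ∪ Q.edgeSet) := by
      intro A1 A2 h
      rw [(h.ear hQ).vts]
      constructor
      · rintro x hx (h' | h')
        · exact hZB x hx (by rw [h.vts]; exact Or.inl h')
        · exact hQB x h' hx
      · rintro x ⟨hx, n1, n2⟩ (h' | h')
        · rcases h.supp x h' hx with h | h
          exacts [n1 h, n2 h]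
        · rcases hQ.supp x h' (by rw [h.vts]; exact Or.inr hx) with h | h
          exacts [n1 h, n2 h]
    rcases hcl Z hZ p r A A' Q hA hQ (fun x hx hx' => hQB x hx (hB0B hx')) with h | h
    · exact ⟨A, A', Or.inl ⟨rfl, rfl⟩, hA, h, key A A' hA⟩
    · exact ⟨A', A, Or.inr ⟨rfl, rfl⟩, hA.swap, h, key A' A hA.swap⟩
  -- `Z` is induced: rerouting along a chord would give a member with fewer vertices.
  have hind : ∀ x ∈ vts Z, ∀ y ∈ vts Z, G.Adj x y → s(x, y) ∈ Z := by
    intro x hx y hy hxy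
    by_contra hcon
    obtain ⟨A, A', hA⟩ := hZc.arcs hx hy hxy.ne
    obtain ⟨A1, A2, -, hA12, h1, h2, h3⟩ := hre x y A A' hxy.toWalk hA (ear_chord hxy hcon) (by
      intro z hz hzB
      simp at hz
      rcases hz with rfl | rfl
      exacts [hZB _ hzB hx, hZB _ hzB hy])
    have hm := hmin _ ⟨h1, h2⟩
    have hne2 : (inn A2).Nonempty := by
      refine inn_nonempty hA12.pA' hxy.ne fun h => hcon ?_
      rw [hA12.eq]; exact Or.inr h
    obtain ⟨v, hv⟩ := hne2
    have hss : vts (A1.edgeSet ∪ hxy.toWalk.edgeSet) ⊂ vts Z := by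
      rw [Set.ssubset_iff_of_subset]
      · exact ⟨v, by rw [hA12.vts]; exact Or.inr hv.1, h3 v hv⟩
      · rw [vts_union, hA12.vts, vts_edgeSet (not_nil_of_ne' hxy.ne)]
        rintro z (hz | hz)
        · exact Or.inl hz
        · rw [vts_edgeSet (not_nil_of_ne' hxy.ne)] at hz
          simp at hz
          rcases hz with rfl | rfl <;> left <;> simp
    exact absurd (Set.ncard_lt_ncard hss) (not_lt.2 hm)
  have hBne : B.Nonempty := by
    by_contra hcon
    rw [Set.not_nonempty_iff_eq_empty] at hcon
    have hall : ∀ v, v ∈ vts Z := by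
      intro v
      by_contra hv
      refine hE Z hZ hZB v hv (by simp [hcon]) ?_
      rw [hcon]; simpa using cn_singleton v
    obtain ⟨e, he⟩ := hZc.nonempty
    induction e using Sym2.ind with
    | _ p q =>
    obtain ⟨r, hr, hrp, hr'⟩ := exists_not_adj_of_ncard hZc (mem_vts he) (hG.deg_ge p)
    exact hr' (hind p (hall p) r (hall r) hr)
  obtain ⟨b0, hb0⟩ := hBne
  have hNB : ∀ v, v ∉ B → ∀ b ∈ B, G.Adj b v → v ∈ vts Z := by
    intro v hv b hb hadj
    by_contra hcon
    exact hE' Z hZ hZB v hcon hv b hb hadj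
  have hNBeq : nbd G B ⊆ vts Z := fun v hv => by
    obtain ⟨b, hb, hadj⟩ := hv.2
    exact hNB v hv.1 b hb hadj
  -- No ear off `B` has neighbours of `B` inside both arcs: rerouting `Z` along it would free one of
  -- these neighbours, and `B` could grow.
  have hmiss : ∀ (p r : V) (A A' Q : G.Walk p r), Arcs Z A A' → Ear Z Q →
      (∀ x ∈ Q.support, x ∉ B) → (∃ x ∈ inn A, x ∈ nbd G B) → (∃ x ∈ inn A', x ∈ nbd G B) →
      False := by
    intro p r A A' Q hA hQ hQB h1 h2
    obtain ⟨A1, A2, h12, hA12, hin, hdB, hdA⟩ := hre p r A A' Q hA hQ hQB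
    have : ∃ x ∈ inn A2, x ∈ nbd G B := by
      rcases h12 with ⟨rfl, rfl⟩ | ⟨rfl, rfl⟩
      exacts [h2, h1]
    obtain ⟨x, hx, hxB, b, hb, hadj⟩ := this
    exact hE' _ hin hdB x (hdA x hx) hxB b hb hadj
  -- Every vertex of `Z` has a neighbour in `B`. Otherwise let `Y` be the arc around such a vertex `p`
  -- between the nearest neighbours `b1`, `b2` of `B`. As `{b1, b2}` does not separate `p` from `B`,
  -- some ear leads from the inside of `Y` to the rest of `Z`, against `hmiss`.
  have hβ : vts Z ⊆ nbd G B := by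
    intro p hp
    by_contra hpβ
    have h4 := hG.nbd_ge hb0 (fun h => hZB p h hp) hpβ
    have hnt : (nbd G B).Nontrivial := (Set.one_lt_ncard_iff_nontrivial).1 (by omega)
    obtain ⟨b1, hb1, b2, hb2, Y, Y', hY, hpY, hYβ⟩ := hZc.near_arc hNBeq hnt hp hpβ
    set O : Set V := (vts Z ∪ B)ᶜ with hO
    set K : Set V := inn Y ∪ {x | ∃ u ∈ inn Y, ∃ z, G.Adj u z ∧ RIn G O z x} with hK
    have hpath := hG.rin (s := {b1, b2}) ((ncard_two_le _ _).trans_lt (by norm_num)) p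
      (by rintro (h | h); exacts [hpβ (h ▸ hb1), hpβ (h ▸ hb2)]) b0
      (by rintro (h | h); exacts [hb1.1 (h ▸ hb0), hb2.1 (h ▸ hb0)])
    have hYZ : ∀ x ∈ inn Y, x ∈ vts Z := fun x hx => by rw [hY.vts]; exact Or.inl hx.1
    obtain ⟨x, hxK, y, hyK, hx', hy', hxy⟩ := hpath.exit (T := K) (Or.inl hpY) (by
      rintro (h | ⟨u, hu, z, hz, hr⟩)
      · exact hZB b0 hb0 (hYZ _ h)
      · exact hr.right (Or.inr hb0))
    have hyn : y ≠ b1 ∧ y ≠ b2 := ⟨fun h => hy' (by simp [h]), fun h => hy' (by simp [h])⟩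
    have hxnB : x ∉ B := by
      rcases hxK with h | ⟨u, hu, z, hz, hr⟩
      · exact fun hB => hZB x hB (hYZ x h)
      · exact fun hB => hr.right (Or.inr hB)
    have hynB : y ∉ B := by
      intro hyB
      have hxβ : x ∈ nbd G B := ⟨hxnB, y, hyB, hxy.symm⟩
      rcases hxK with h | ⟨u, hu, z, hz, hr⟩
      · exact hYβ x h hxβ
      · exact hr.right (Or.inl (hNBeq hxβ))
    by_cases hyZ : y ∈ vts Z
    · have hyY : y ∉ inn Y := fun h => hyK (Or.inl h)
      rcases hxK with h | ⟨u, hu, z, hz, hr⟩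
      · have hE1 := hind x (hYZ x h) y hyZ hxy
        have := hY.sep hxy.toWalk (by simpa using hE1) h hyY
        simp only [Adj.support_toWalk, List.mem_cons, List.not_mem_nil, or_false] at this
        rcases this with (rfl | h') | (rfl | h')
        · exact h.2.1 rfl
        · exact hyn.1 h'.symm
        · exact h.2.2 rfl
        · exact hyn.2 h'.symm
      · have huy : u ≠ y := fun h => hyY (h ▸ hu)
        have hHO := comp_subset (G := G) O z
        have hzO : z ∈ O := hr.left
        obtain ⟨Q, hQ1, hQ2, hQ3, -⟩ := exists_path_through (cn_comp (G := G) O z) huy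
          (fun h => (hHO h) (Or.inl (hYZ u hu))) (fun h => (hHO h) (Or.inl hyZ))
          (mem_comp_self hzO) hr hz hxy.symm
        have hear : Ear Z Q := ear_of_through (fun v hv hvZ => (hHO hv) (Or.inl hvZ)) huy hQ1 hQ2 hQ3
        obtain ⟨A, A', hA⟩ := hZc.arcs (hYZ u hu) hyZ huy
        have hall : ∀ W W' : G.Walk u y, Arcs Z W W' → ∃ v ∈ inn W, v ∈ nbd G B := by
          intro W W' hW
          rcases hY.sep W (fun e he => by rw [hW.eq]; exact Or.inl he) hu hyY with h | h
          · exact ⟨b1, ⟨h, fun h' => hu.2.1 h'.symm, fun h' => hyn.1 h'.symm⟩, hb1⟩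
          · exact ⟨b2, ⟨h, fun h' => hu.2.2 h'.symm, fun h' => hyn.2 h'.symm⟩, hb2⟩
        refine hmiss u y A A' Q hA hear ?_ (hall A A' hA) (hall A' A hA.swap)
        intro v hv hvB
        rcases hQ2 v hv with rfl | rfl | h
        · exact hZB _ hvB (hYZ _ hu)
        · exact hZB _ hvB hyZ
        · exact hHO h (Or.inr hvB)
    · have hyO : y ∈ O := by
        rintro (h | h)
        exacts [hyZ h, hynB h]
      apply hyK
      rcases hxK with h | ⟨u, hu, z, hz, hr⟩
      · exact Or.inr ⟨x, h, y, hxy, RIn.refl hyO⟩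
      · exact Or.inr ⟨u, hu, z, hz, hr.trans (RIn.of_adj hxy hr.right hyO)⟩
  -- Every vertex off `Z` is in `B`: another component `H` off `Z` and `B` would be attached to at
  -- least four vertices of `Z`, and some ear through `H` would contradict `hmiss`.
  have hcompl : (vts Z)ᶜ = B := by
    refine Set.Subset.antisymm (fun h hh => ?_) (fun b hb => hZB b hb)
    by_contra hhB
    set O : Set V := (vts Z ∪ B)ᶜ with hO
    have hhO : h ∈ O := by
      rintro (h' | h')
      exacts [hh h', hhB h']
    set H := comp G O h with hH
    have hHO := comp_subset (G := G) O h
    have hNH : nbd G H ⊆ vts Z := by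
      intro v hv
      by_contra hvZ
      have hvB : v ∈ B := by
        by_contra hvB
        exact nbd_comp_disj hv (by rintro (h' | h'); exacts [hvZ h', hvB h'])
      obtain ⟨-, x, hx, hxv⟩ := hv
      have hxB : x ∉ B := fun h' => hHO hx (Or.inr h')
      exact hHO hx (Or.inl (hNB x hxB v hvB hxv.symm))
    have h4 := hG.nbd_ge (X := H) (y := b0) (mem_comp_self hhO)
      (fun h' => hHO h' (Or.inr hb0)) (fun h' => hZB b0 hb0 (hNH h'))
    obtain ⟨p, hp⟩ : (nbd G H).Nonempty := Set.nonempty_of_ncard_ne_zero (by omega)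
    obtain ⟨r, hr, hrp, hpr⟩ := exists_not_adj_of_ncard hZc (hNH hp) h4
    obtain ⟨hpH, h1, hh1, ha1⟩ := hp
    obtain ⟨hrH, h2, hh2, ha2⟩ := hr
    have hpZ : p ∈ vts Z := hNH ⟨hpH, h1, hh1, ha1⟩
    have hrZ : r ∈ vts Z := hNH ⟨hrH, h2, hh2, ha2⟩
    obtain ⟨Q, hQ1, hQ2, hQ3, -⟩ := exists_path_through (cn_comp (G := G) O h) hrp.symm
      hpH hrH hh1 hh2 ha1.symm ha2.symm
    have hear : Ear Z Q := ear_of_through (fun v hv hvZ => (hHO hv) (Or.inl hvZ)) hrp.symm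
      hQ1 hQ2 hQ3
    obtain ⟨A, A', hA⟩ := hZc.arcs hpZ hrZ hrp.symm
    have hall : ∀ W W' : G.Walk p r, Arcs Z W W' → ∃ v ∈ inn W, v ∈ nbd G B := by
      intro W W' hW
      obtain ⟨v, hv⟩ := inn_nonempty hW.pA hrp.symm (fun h => hpr (by rw [hW.eq]; exact Or.inl h))
      exact ⟨v, hv, hβ (by rw [hW.vts]; exact Or.inl hv.1)⟩
    refine hmiss p r A A' Q hA hear ?_ (hall A A' hA) (hall A' A hA.swap)
    intro v hv hvB
    rcases hQ2 v hv with rfl | rfl | h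
    · exact hZB _ hvB hpZ
    · exact hZB _ hvB hrZ
    · exact hHO h (Or.inr hvB)
  exact ⟨Z, hZ, hZc, hind, by rw [hcompl]; exact hBc⟩

end Faces

/-! ### Every edge lies on two faces, and faces meet nicely -/

section Faces2
variable {V : Type} {G : SimpleGraph V}

/-- The edge set of the triangle `a b c`. -/
def tri (a b c : V) : Set (Sym2 V) := {s(a, b), s(b, c), s(a, c)}

lemma vts_tri (a b c : V) : vts (tri a b c) = {a, b, c} := by
  ext x
  simp only [vts, tri, Set.mem_insert_iff, Set.mem_singleton_iff, Set.mem_ofPred_eq]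
  constructor
  · rintro ⟨e, rfl | rfl | rfl, h⟩ <;> simp at h <;> tauto
  · rintro (rfl | rfl | rfl)
    · exact ⟨s(x, b), by simp, by simp⟩
    · exact ⟨s(a, x), by simp, by simp⟩
    · exact ⟨s(a, x), by simp, by simp⟩

lemma isCyc_tri {a b c : V} (h1 : G.Adj a b) (h2 : G.Adj b c) (h3 : G.Adj a c) :
    IsCyc G (tri a b c) := by
  have hP : (Walk.cons h1 h2.toWalk).IsPath := by
    simp [h1.ne, h2.ne, h3.ne]
  have := isCyc_of_path hP h3 (by simp [h1.ne, h2.ne', h3.ne, h3.ne'])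
  convert this using 1
  ext e; simp [tri, Walk.edgeSet]; tauto

lemma inn_adj_start {p r : V} {A : G.Walk p r} (hne : p ≠ r) (h : s(p, r) ∉ A.edges) :
    ∃ v ∈ inn A, G.Adj p v := by
  cases A with
  | nil => exact absurd rfl hne
  | cons hadj q =>
    rename_i v
    refine ⟨v, ⟨by simp, hadj.ne', ?_⟩, hadj⟩
    rintro rfl
    simp at h

lemma inn_reverse {p r : V} (A : G.Walk p r) : inn A.reverse = inn A := by
  ext x; simp [inn]; tauto

lemma inn_adj_end {p r : V} {A : G.Walk p r} (hne : p ≠ r) (h : s(p, r) ∉ A.edges) :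
    ∃ v ∈ inn A, G.Adj r v := by
  obtain ⟨v, hv, h'⟩ := inn_adj_start (A := A.reverse) hne.symm (by
    rw [Sym2.eq_swap]; simpa using h)
  exact ⟨v, by rwa [inn_reverse] at hv, h'⟩

lemma br_singleton (v : V) : Br G {v} := ⟨⟨v, rfl⟩, cn_singleton v⟩

lemma Arcs.inn_vts {E : Set (Sym2 V)} {p r : V} {A A' : G.Walk p r} (h : Arcs E A A') :
    inn A ⊆ _root_.vts E := fun x hx => by rw [h.vts]; exact Or.inl hx.1

lemma Arcs.left_vts {E : Set (Sym2 V)} {p r : V} {A A' : G.Walk p r} (h : Arcs E A A') :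
    p ∈ _root_.vts E := by rw [h.vts]; exact Or.inl (by simp)

lemma Arcs.right_vts {E : Set (Sym2 V)} {p r : V} {A A' : G.Walk p r} (h : Arcs E A A') :
    r ∈ _root_.vts E := by rw [h.vts]; exact Or.inl (by simp)

lemma Arcs.inn_disj {E : Set (Sym2 V)} {p r : V} {A A' : G.Walk p r} (h : Arcs E A A') :
    Disjoint (inn A) (inn A') := by
  rw [Set.disjoint_left]
  intro x hx hx'
  rcases h.supp x hx.1 hx'.1 with h | h
  exacts [hx.2.1 h, hx.2.2 h]

lemma Arcs.cases {E : Set (Sym2 V)} {p r : V} {A A' : G.Walk p r} (h : Arcs E A A') {x : V}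
    (hx : x ∈ _root_.vts E) : x = p ∨ x = r ∨ x ∈ inn A ∨ x ∈ inn A' := by
  rw [h.vts] at hx
  by_cases h1 : x = p
  · exact Or.inl h1
  by_cases h2 : x = r
  · exact Or.inr (Or.inl h2)
  rcases hx with h | h
  · exact Or.inr (Or.inr (Or.inl ⟨h, h1, h2⟩))
  · exact Or.inr (Or.inr (Or.inr ⟨h, h1, h2⟩))

/-- A connected set off a face `N` attached at two non-adjacent vertices `p`, `r` of `N` separates
the two arcs of `N` between them: otherwise there is a `K₃,₃` minor. -/
lemma face_sep (hG : IsPlanar G) {N : Set (Sym2 V)} {S : Set V} (hN : IsFace G N) {p r : V}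
    {A A' : G.Walk p r} (hA : Arcs N A A') (hpr : s(p, r) ∉ N) (hS : Cn G S)
    (hSN : ∀ x ∈ S, x ∉ vts N) (hSp : ∃ s ∈ S, G.Adj p s) (hSr : ∃ s ∈ S, G.Adj r s)
    {x x' : V} (hx : x ∈ inn A) (hx' : x' ∈ inn A') (h : RIn G (S ∪ {p, r})ᶜ x x') : False := by
  set O : Set V := (vts N ∪ S)ᶜ with hO
  -- `K` consists of the inside of `A` and the components off `N` and `S` attached to it. An edge that
  -- leaves `K` leads to a component attached to both arcs, and also to `S` since `N` does not
  -- separate; with `p` and `r` this is one side of a `K₃,₃`, the other being the two arcs and `S`.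
  set K : Set V := inn A ∪ {z | ∃ u ∈ inn A, ∃ z0, G.Adj u z0 ∧ RIn G O z0 z} with hK
  obtain ⟨a, ha, b, hb, -, hb', hab⟩ := h.exit (T := K) (Or.inl hx) (by
    rintro (h' | ⟨u, hu, z, hz, hr⟩)
    · exact Set.disjoint_left.1 hA.inn_disj h' hx'
    · exact hr.right (Or.inl (hA.swap.inn_vts hx')))
  have hbS : b ∉ S := fun h => hb' (Or.inl h)
  have hbp : b ≠ p := fun h => hb' (Or.inr (by simp [h]))
  have hbr : b ≠ r := fun h => hb' (Or.inr (by simp [h]))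
  by_cases hbN : b ∈ vts N
  · have hbA' : b ∈ inn A' := by
      rcases hA.cases hbN with h | h | h | h
      exacts [absurd h hbp, absurd h hbr, absurd (Or.inl h) hb, h]
    have hbA : b ∉ inn A := fun h => hb (Or.inl h)
    rcases ha with ha | ⟨u, hu, z0, huz, hr⟩
    · have hE1 := hN.ind a (hA.inn_vts ha) b hbN hab
      have := hA.sep hab.toWalk (by simpa using hE1) ha hbA
      simp only [Adj.support_toWalk, List.mem_cons, List.not_mem_nil, or_false] at this
      rcases this with (h' | h') | (h' | h')
      exacts [ha.2.1 h'.symm, hbp h'.symm, ha.2.2 h'.symm, hbr h'.symm]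
    · have hYO := comp_subset (G := G) O z0
      obtain ⟨s0, hs0, hps0⟩ := hSp
      obtain ⟨c, hc, d, hd, hcN, hdN, hcd⟩ := (hN.conn z0 (fun h => hr.left (Or.inl h)) s0
        (hSN s0 hs0)).exit (T := comp G O z0) (mem_comp_self hr.left)
        (fun h => hYO h (Or.inr hs0))
      have hdS : d ∈ S := by
        by_contra hdS
        exact hd (comp_adj hc hcd (by rintro (h | h); exacts [hdN h, hdS h]))
      have nA : s(p, r) ∉ A.edges := fun h => hpr (by rw [hA.eq]; exact Or.inl h)
      have nA' : s(p, r) ∉ A'.edges := fun h => hpr (by rw [hA.eq]; exact Or.inr h)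
      have dS : ∀ X : Set V, X ⊆ vts N → Disjoint X S := fun X hX =>
        Set.disjoint_left.2 fun x hx hxS => hSN x hxS (hX hx)
      have dY : ∀ X : Set V, X ⊆ vts N → Disjoint (comp G O z0) X := fun X hX =>
        Set.disjoint_left.2 fun x hx hxX => hYO hx (Or.inl (hX hxX))
      have sp : ({p} : Set V) ⊆ vts N := by simpa using hA.left_vts
      have sr : ({r} : Set V) ⊆ vts N := by simpa using hA.right_vts
      refine no_K33 hG ![{p}, {r}, comp G O z0] ![inn A, inn A', S] ?_ ?_ ?_ ?_ ?_ ?_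
      · intro i
        fin_cases i
        exacts [br_singleton p, br_singleton r, ⟨⟨z0, mem_comp_self hr.left⟩, cn_comp _ _⟩]
      · intro i
        fin_cases i
        exacts [⟨⟨x, hx⟩, cn_inn hA.pA⟩, ⟨⟨x', hx'⟩, cn_inn hA.pA'⟩, ⟨⟨s0, hs0⟩, hS⟩]
      · intro i j hij
        fin_cases i <;> fin_cases j <;> simp at hij
        exacts [by simpa using hA.ne, (dY _ sp).symm, (dY _ sr).symm]
      · intro i j hij
        fin_cases i <;> fin_cases j <;> simp at hij
        exacts [hA.inn_disj, dS _ hA.inn_vts, dS _ hA.swap.inn_vts]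
      · intro i j
        fin_cases i <;> fin_cases j
        · simp [inn]
        · simp [inn]
        · exact dS _ sp
        · simp [inn]
        · simp [inn]
        · exact dS _ sr
        · exact dY _ hA.inn_vts
        · exact dY _ hA.swap.inn_vts
        · exact Set.disjoint_left.2 fun x hx hxX => hYO hx (Or.inr hxX)
      · intro i j
        fin_cases i <;> fin_cases j
        · obtain ⟨v, hv, h⟩ := inn_adj_start hA.ne nA
          exact ⟨p, rfl, v, hv, h⟩
        · obtain ⟨v, hv, h⟩ := inn_adj_start hA.ne nA'
          exact ⟨p, rfl, v, hv, h⟩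
        · exact ⟨p, rfl, s0, hs0, hps0⟩
        · obtain ⟨v, hv, h⟩ := inn_adj_end hA.ne nA
          exact ⟨r, rfl, v, hv, h⟩
        · obtain ⟨v, hv, h⟩ := inn_adj_end hA.ne nA'
          exact ⟨r, rfl, v, hv, h⟩
        · obtain ⟨s, hs, h⟩ := hSr
          exact ⟨r, rfl, s, hs, h⟩
        · exact ⟨z0, mem_comp_self hr.left, u, hu, huz.symm⟩
        · exact ⟨a, hr, b, hbA', hab⟩
        · exact ⟨c, hc, d, hdS, hcd⟩
  · have hbO : b ∈ O := by
      rintro (h | h)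
      exacts [hbN h, hbS h]
    apply hb
    rcases ha with ha | ⟨u, hu, z, hz, hr⟩
    · exact Or.inr ⟨a, ha, b, hab, RIn.refl hbO⟩
    · exact Or.inr ⟨u, hu, z, hz, hr.trans (RIn.of_adj hab hr.right hbO)⟩

lemma IsFace.eq_of_vts {C D : Set (Sym2 V)} (hC : IsFace G C) (hD : IsFace G D)
    (h : vts D ⊆ vts C) : D = C := by
  refine hD.cyc.eq_of_subset hC.cyc fun e he => ?_
  induction e using Sym2.ind with
  | _ a b => exact hC.ind a (h (mem_vts he)) b (h (mem_vts' he)) (hD.cyc.subset he)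

variable [Fintype V]

lemma P4.face_tri (hG : P4 G) {a b c : V} (h1 : G.Adj a b) (h2 : G.Adj b c) (h3 : G.Adj a c) :
    IsFace G (tri a b c) where
  cyc := isCyc_tri h1 h2 h3
  ind x hx y hy hxy := by
    rw [vts_tri] at hx hy
    simp only [Set.mem_insert_iff, Set.mem_singleton_iff] at hx hy
    rcases hx with rfl | rfl | rfl <;> rcases hy with rfl | rfl | rfl <;>
      first | exact absurd hxy (G.loopless.irrefl _) | simp [tri]
  conn := by
    rw [vts_tri]
    exact hG.rin ((ncard_three_le a b c).trans_lt (by norm_num))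

lemma P4.exists_cyc (hG : P4 G) {x y : V} (hxy : G.Adj x y) : ∃ Z, IsCyc G Z ∧ s(x, y) ∈ Z := by
  have h4 := hG.deg_ge x
  obtain ⟨z, hz, hzy⟩ : ∃ z, G.Adj x z ∧ z ≠ y := by
    by_contra hcon
    push Not at hcon
    have : {w | G.Adj x w} ⊆ {y} := fun w hw => hcon w hw
    have := Set.ncard_le_ncard this
    rw [Set.ncard_singleton] at this
    omega
  obtain ⟨w, hw, hs⟩ := (hG.rin (s := {x}) (by simp) z hz.ne' y hxy.ne').isPath
  have hxw : x ∉ w.support := fun h => hs x h rfl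
  refine ⟨_, isCyc_of_path (hw.cons hxw (h := hz)) hxy ?_, Set.mem_insert _ _⟩
  intro h
  simp only [Walk.edges_cons, List.mem_cons] at h
  rcases h with h | h
  · simp at h
    rcases h with h | h
    exacts [hzy h.symm, hxy.ne h.2.symm]
  · exact hxw (w.fst_mem_support_of_mem_edges h)

lemma P4.exists_off (hG : P4 G) {C : Set (Sym2 V)} (hC : IsFace G C) {x : V} (hx : x ∈ vts C) :
    ∃ z, z ∉ vts C ∧ G.Adj x z := by
  obtain ⟨r, hr, -, h⟩ := exists_not_adj_of_ncard hC.cyc hx (hG.deg_ge x)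
  exact ⟨r, fun hrC => h (hC.ind x hx r hrC hr), hr⟩

/-- Every edge lies on at least two faces. -/
lemma P4.two_faces (hG : P4 G) {x y : V} (hxy : G.Adj x y) :
    ∃ C D, IsFace G C ∧ IsFace G D ∧ C ≠ D ∧ s(x, y) ∈ C ∧ s(x, y) ∈ D := by
  have key : ∀ B0 : Set V, Cn G B0 → (∃ Z, IsCyc G Z ∧ s(x, y) ∈ Z ∧ ∀ v ∈ B0, v ∉ vts Z) →
      ∃ Z, IsFace G Z ∧ s(x, y) ∈ Z ∧ ∀ v ∈ B0, v ∉ vts Z := by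
    intro B0 hB0 hne
    obtain ⟨Z, ⟨h1, h2, h3⟩, h4⟩ := hG.exists_face
      (Zs := {Z | IsCyc G Z ∧ s(x, y) ∈ Z ∧ ∀ v ∈ B0, v ∉ vts Z}) (fun Z h => h.1) hne hB0
      (fun Z h => h.2.2) (by
        rintro Z ⟨h1, h2, h3⟩ p r A A' Q hA hQ hQB
        have gen : ∀ W W' : G.Walk p r, Arcs Z W W' → s(x, y) ∈ W.edges →
            IsCyc G (W.edgeSet ∪ Q.edgeSet) ∧ s(x, y) ∈ W.edgeSet ∪ Q.edgeSet ∧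
              ∀ v ∈ B0, v ∉ vts (W.edgeSet ∪ Q.edgeSet) := by
          intro W W' hW hm
          have hE := hW.ear hQ
          refine ⟨hE.isCyc, Or.inl hm, fun v hv hv' => ?_⟩
          rw [hE.vts] at hv'
          rcases hv' with h | h
          · exact h3 v hv (by rw [hW.vts]; exact Or.inl h)
          · exact hQB v h hv
        have h2' := h2
        rw [hA.eq] at h2'
        rcases h2' with h | h
        · exact Or.inl (gen A A' hA h)
        · exact Or.inr (gen A' A hA.swap h))
    exact ⟨Z, h4, h2, h3⟩
  -- The second face is found among the cycles through `x y` that avoid the rest of the first face.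
  obtain ⟨Z, hZ, hxZ⟩ := hG.exists_cyc hxy
  obtain ⟨C, hC, hxC, -⟩ := key ∅ cn_empty ⟨Z, hZ, hxZ, by simp⟩
  obtain ⟨P, hP, hnP, hCP⟩ := hC.cyc.edge_path hxC
  obtain ⟨v, hv⟩ := inn_nonempty hP hxy.ne hnP
  have hinn : inn P ⊆ vts C := by
    intro z hz
    have : z ∈ vts P.edgeSet := by rw [vts_edgeSet (not_nil_of_ne' hxy.ne)]; exact hz.1
    exact vts_mono (by rw [hCP]; exact Set.subset_insert _ _) this
  obtain ⟨z1, hz1, a1⟩ := hG.exists_off hC (mem_vts hxC)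
  obtain ⟨z2, hz2, a2⟩ := hG.exists_off hC (mem_vts' hxC)
  obtain ⟨Q, hQ1, hQ2, hQ3, -⟩ := exists_path_through hC.conn hxy.ne (fun h => h (mem_vts hxC))
    (fun h => h (mem_vts' hxC)) hz1 hz2 a1 a2
  have hQn : s(x, y) ∉ Q.edges := by
    intro h
    obtain ⟨z, hz, hz'⟩ := hQ3 _ h
    simp at hz'
    rcases hz' with rfl | rfl
    exacts [hz (mem_vts hxC), hz (mem_vts' hxC)]
  obtain ⟨D, hD, hxD, hDv⟩ := key (inn P) (cn_inn hP) ⟨_, isCyc_of_path hQ1 hxy hQn,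
    Set.mem_insert _ _, by
      intro z hz hz'
      have : z ∈ Q.support := by
        obtain ⟨e, rfl | he, hze⟩ := hz'
        · simp at hze
          rcases hze with rfl | rfl <;> simp
        · exact Walk.mem_support_of_mem_edges he hze
      rcases hQ2 z this with h | h | h
      exacts [hz.2.1 h, hz.2.2 h, h (hinn hz)]⟩
  exact ⟨C, D, hC, hD, fun h => hDv v hv (h ▸ hinn hv), hxC, hxD⟩

/-- Two faces sharing two vertices share an edge and nothing else. -/
lemma P4.inter (hG : P4 G) {C D : Set (Sym2 V)} (hC : IsFace G C) (hD : IsFace G D) (hne : C ≠ D)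
    {a b : V} (hab : a ≠ b) (haC : a ∈ vts C) (haD : a ∈ vts D) (hbC : b ∈ vts C)
    (hbD : b ∈ vts D) : G.Adj a b ∧ ∀ x, x ∈ vts C → x ∈ vts D → x = a ∨ x = b := by
  -- `Y` is the arc of `D` through `v` between two vertices `p`, `r` of `C`, with inside off `C`.
  obtain ⟨v, hvD, hvC⟩ : ∃ v, v ∈ vts D ∧ v ∉ vts C := by
    by_contra hcon
    push Not at hcon
    exact hne (hC.eq_of_vts hD hcon).symm
  obtain ⟨p, hp, r, hr, Y, Y', hY, hvY, hYβ⟩ := hD.cyc.near_arc (β := vts C ∩ vts D)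
    (fun x hx => hx.2) ⟨a, ⟨haC, haD⟩, b, ⟨hbC, hbD⟩, hab⟩ hvD (fun h => hvC h.1)
  have hYC : ∀ x ∈ inn Y, x ∉ vts C := fun x hx hxC => hYβ x hx ⟨hxC, hY.inn_vts hx⟩
  have hYn : s(p, r) ∉ Y.edges := by
    intro h
    have := hY.pA.eq_adj_toWalk_of_mem_edges h
    rw [this] at hvY
    have := hvY.1
    simp at this
    rcases this with h | h
    exacts [hvY.2.1 h, hvY.2.2 h]
  by_cases hpr : G.Adj p r
  · have hcyc := isCyc_of_path hY.pA hpr hYn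
    have heq := hcyc.eq_of_subset hD.cyc (by
      rintro e (rfl | he)
      · exact hD.ind p hp.2 r hr.2 hpr
      · rw [hY.eq]; exact Or.inl he)
    have hcom : ∀ x, x ∈ vts C → x ∈ vts D → x = p ∨ x = r := by
      intro x hxC hxD
      by_contra hcon
      push Not at hcon
      refine hYC x ⟨?_, hcon.1, hcon.2⟩ hxC
      rw [← heq] at hxD
      obtain ⟨e, rfl | he, hxe⟩ := hxD
      · simp at hxe
        rcases hxe with h | h
        exacts [absurd h hcon.1, absurd h hcon.2]
      · exact Walk.mem_support_of_mem_edges he hxe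
    rcases hcom a haC haD with rfl | rfl <;> rcases hcom b hbC hbD with rfl | rfl
    · exact absurd rfl hab
    · exact ⟨hpr, hcom⟩
    · exact ⟨hpr.symm, fun x h1 h2 => (hcom x h1 h2).symm⟩
    · exact absurd rfl hab
  · exfalso
    have hprC : s(p, r) ∉ C := fun h => hpr (hC.cyc.subset h)
    have hprD : s(p, r) ∉ D := fun h => hpr (hD.cyc.subset h)
    obtain ⟨A0, A0', hA0⟩ := hC.cyc.arcs hp.1 hr.1 hY.ne
    have sep1 : ∀ A A' : G.Walk p r, Arcs C A A' → ∀ x ∈ inn A, ∀ x' ∈ inn A',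
        ¬ RIn G (inn Y ∪ {p, r})ᶜ x x' := fun A A' hA x hx x' hx' h =>
      face_sep hG.pl hC hA hprC (cn_inn hY.pA) hYC (inn_adj_start hY.ne hYn)
        (inn_adj_end hY.ne hYn) hx hx' h
    -- One arc `A` of `C` lies on `D`, since otherwise `D` would separate the two arcs; then
    -- `D = A ∪ Y` and `C = A ∪ A'` form a theta graph in which `{p, r}` separates the arcs.
    obtain ⟨A, A', hA, hAD⟩ : ∃ A A' : G.Walk p r, Arcs C A A' ∧ inn A ⊆ vts D := by
      by_contra hcon
      push Not at hcon
      obtain ⟨x, hx, hxD⟩ := Set.not_subset.1 (hcon A0 A0' hA0)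
      obtain ⟨x', hx', hxD'⟩ := Set.not_subset.1 (hcon A0' A0 hA0.swap)
      refine sep1 A0 A0' hA0 x hx x' hx' ((hD.conn x hxD x' hxD').mono ?_)
      refine Set.compl_subset_compl.2 ?_
      rintro z (hz | rfl | rfl)
      exacts [hY.inn_vts hz, hp.2, hr.2]
    have hAs : ∀ z ∈ A.support, z ∈ vts D := by
      intro z hz
      by_cases h1 : z = p
      · exact h1 ▸ hp.2
      by_cases h2 : z = r
      · exact h2 ▸ hr.2
      exact hAD ⟨hz, h1, h2⟩
    have hAY : Arcs (A.edgeSet ∪ Y.edgeSet) A Y := by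
      refine ⟨hA.ne, hA.pA, hY.pA, ?_, ?_, rfl⟩
      · intro z hz hz'
        by_contra hcon
        push Not at hcon
        exact hYC z ⟨hz', hcon.1, hcon.2⟩ (hA.inn_vts ⟨hz, hcon.1, hcon.2⟩)
      · intro e he he'
        induction e using Sym2.ind with
        | _ c d =>
        have hc : c = p ∨ c = r := by
          by_contra hcon
          push Not at hcon
          exact hYC c ⟨Y.fst_mem_support_of_mem_edges he', hcon.1, hcon.2⟩
            (hA.inn_vts ⟨A.fst_mem_support_of_mem_edges he, hcon.1, hcon.2⟩)
        have hd : d = p ∨ d = r := by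
          by_contra hcon
          push Not at hcon
          exact hYC d ⟨Y.snd_mem_support_of_mem_edges he', hcon.1, hcon.2⟩
            (hA.inn_vts ⟨A.snd_mem_support_of_mem_edges he, hcon.1, hcon.2⟩)
        have hcd : G.Adj c d := A.adj_of_mem_edges he
        rcases hc with rfl | rfl <;> rcases hd with rfl | rfl
        exacts [hcd.ne rfl, hpr hcd, hpr hcd.symm, hcd.ne rfl]
    have heq : A.edgeSet ∪ Y.edgeSet = D := by
      refine hAY.isCyc.eq_of_subset hD.cyc ?_
      rintro e (he | he)
      · induction e using Sym2.ind with
        | _ c d =>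
        exact hD.ind c (hAs c (A.fst_mem_support_of_mem_edges he)) d
          (hAs d (A.snd_mem_support_of_mem_edges he)) (A.adj_of_mem_edges he)
      · rw [hY.eq]; exact Or.inl he
    have hAY' : Arcs D A Y := heq ▸ hAY
    have hA'D : ∀ x ∈ inn A', x ∉ vts D := by
      intro x hx hxD
      rcases hAY'.cases hxD with h | h | h | h
      · exact hx.2.1 h
      · exact hx.2.2 h
      · exact Set.disjoint_left.1 hA.inn_disj h hx
      · exact hYC x h (hA.swap.inn_vts hx)
    have nA : s(p, r) ∉ A.edges := fun h => hprC (by rw [hA.eq]; exact Or.inl h)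
    have nA' : s(p, r) ∉ A'.edges := fun h => hprC (by rw [hA.eq]; exact Or.inr h)
    obtain ⟨x, hx⟩ := inn_nonempty hA.pA hA.ne nA
    set O : Set V := ({p, r} ∪ inn Y ∪ inn A')ᶜ with hO
    have hxO : x ∈ O := by
      rintro (((h | h) | h) | h)
      · exact hx.2.1 h
      · exact hx.2.2 h
      · exact hYC x h (hA.inn_vts hx)
      · exact Set.disjoint_left.1 hA.inn_disj hx h
    have hsub := comp_subset (G := G) O x
    have hpath := hG.rin (s := {p, r}) ((ncard_two_le _ _).trans_lt (by norm_num)) x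
      (by rintro (h | h); exacts [hx.2.1 h, hx.2.2 h]) v
      (by rintro (h | h); exacts [hvY.2.1 h, hvY.2.2 h])
    obtain ⟨c, hc, d, hd, -, hd', hcd⟩ := hpath.exit (T := comp G O x) (mem_comp_self hxO)
      (fun h => hsub h (Or.inl (Or.inr hvY)))
    by_cases hdY : d ∈ inn Y
    · refine face_sep hG.pl hD hAY' hprD (cn_inn hA.pA') hA'D (inn_adj_start hA.ne nA')
        (inn_adj_end hA.ne nA') hx hdY (RIn.trans (b := c) (RIn.mono hc ?_) (RIn.of_adj hcd ?_ ?_))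
      · refine Set.compl_subset_compl.2 ?_
        rintro z (hz | hz)
        exacts [Or.inr hz, Or.inl (Or.inl hz)]
      · rintro (h | h)
        exacts [hsub hc (Or.inr h), hsub hc (Or.inl (Or.inl h))]
      · rintro (h | h)
        exacts [hA'D d h (hY.inn_vts hdY), hd' h]
    · by_cases hdA : d ∈ inn A'
      · refine sep1 A A' hA x hx d hdA (RIn.trans (b := c) (RIn.mono hc ?_) (RIn.of_adj hcd ?_ ?_))
        · refine Set.compl_subset_compl.2 ?_
          rintro z (hz | hz)
          exacts [Or.inl (Or.inr hz), Or.inl (Or.inl hz)]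
        · rintro (h | h)
          exacts [hsub hc (Or.inl (Or.inr h)), hsub hc (Or.inl (Or.inl h))]
        · rintro (h | h)
          exacts [hdY h, hd' h]
      · exact hd (comp_adj hc hcd (by
          rintro ((h | h) | h)
          exacts [hd' h, hdY h, hdA h]))

end Faces2

/-! ### No edge lies on three faces -/

section Faces3
variable {V : Type} {G : SimpleGraph V}

lemma Tch.mono {S T S' T' : Set V} (h : Tch G S T) (hS : S ⊆ S') (hT : T ⊆ T') : Tch G S' T' := by
  obtain ⟨s, hs, t, ht, h⟩ := h
  exact ⟨s, hS hs, t, hT ht, h⟩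

lemma comp_eq_of_mem {O : Set V} {z z' w : V} (h : w ∈ comp G O z) (h' : w ∈ comp G O z') :
    comp G O z = comp G O z' := by
  ext y
  exact ⟨fun hy => (RIn.trans h' (RIn.symm h)).trans hy,
    fun hy => (RIn.trans h (RIn.symm h')).trans hy⟩

lemma IsCyc.off_edge {C : Set (Sym2 V)} (hC : IsCyc G C) {x y : V} (h : s(x, y) ∈ C) :
    Br G (vts C \ {x, y}) ∧ Tch G {x} (vts C \ {x, y}) ∧ Tch G {y} (vts C \ {x, y}) := by
  have hxy : G.Adj x y := hC.subset h
  obtain ⟨P, hP, hnP, hCP⟩ := hC.edge_path h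
  have heq : vts C \ {x, y} = inn P := by
    ext z
    simp only [Set.mem_sdiff, Set.mem_insert_iff, Set.mem_singleton_iff, inn, Set.mem_ofPred_eq,
      not_or]
    have h1 : vts P.edgeSet = {x | x ∈ P.support} := vts_edgeSet (not_nil_of_ne' hxy.ne)
    constructor
    · rintro ⟨⟨e, he, hze⟩, h2, h3⟩
      refine ⟨?_, h2, h3⟩
      rw [hCP] at he
      rcases he with rfl | he
      · simp at hze
        rcases hze with h | h
        exacts [absurd h h2, absurd h h3]
      · exact Walk.mem_support_of_mem_edges he hze
    · rintro ⟨h2, h3⟩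
      refine ⟨?_, h3⟩
      have : z ∈ vts P.edgeSet := by rw [h1]; exact h2
      exact vts_mono (by rw [hCP]; exact Set.subset_insert _ _) this
  rw [heq]
  refine ⟨⟨inn_nonempty hP hxy.ne hnP, cn_inn hP⟩, ?_, ?_⟩
  · obtain ⟨v, hv, h⟩ := inn_adj_start hxy.ne hnP
    exact ⟨x, rfl, v, hv, h⟩
  · obtain ⟨v, hv, h⟩ := inn_adj_end hxy.ne hnP
    exact ⟨y, rfl, v, hv, h⟩

variable [Fintype V]

/-- No edge lies on three faces: the three faces together with links between them off the third
one would give a `K₃,₃` or a `K₅` minor. -/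
lemma P4.not_three (hG : P4 G) {C : Fin 3 → Set (Sym2 V)} (hC : ∀ i, IsFace G (C i))
    (hne : ∀ i j, i ≠ j → C i ≠ C j) {x y : V} (hxy : ∀ i, s(x, y) ∈ C i) : False := by
  have hadj : G.Adj x y := (hC 0).cyc.subset (hxy 0)
  set Q : Fin 3 → Set V := fun i => vts (C i) \ {x, y} with hQ
  have hdis : ∀ i j, i ≠ j → Disjoint (Q i) (Q j) := by
    intro i j hij
    rw [Set.disjoint_left]
    rintro z ⟨h1, h2⟩ ⟨h3, -⟩
    exact h2 ((hG.inter (hC i) (hC j) (hne i j hij) hadj.ne (mem_vts (hxy i)) (mem_vts (hxy j))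
      (mem_vts' (hxy i)) (mem_vts' (hxy j))).2 z h1 h3)
  have hBr : ∀ i, Br G (Q i) := fun i => ((hC i).cyc.off_edge (hxy i)).1
  have hTx : ∀ i, Tch G {x} (Q i) := fun i => ((hC i).cyc.off_edge (hxy i)).2.1
  have hTy : ∀ i, Tch G {y} (Q i) := fun i => ((hC i).cyc.off_edge (hxy i)).2.2
  have hdx : ∀ i, Disjoint {x} (Q i) := fun i => by simp [hQ]
  have hdy : ∀ i, Disjoint {y} (Q i) := fun i => by simp [hQ]
  have hdxy : Disjoint ({x} : Set V) {y} := by simpa using hadj.ne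
  set U : Set V := ({x, y} ∪ Q 0 ∪ Q 1 ∪ Q 2)ᶜ with hU
  have hUQ : ∀ i, ∀ z ∈ U, z ∉ Q i := by
    intro i z hz h
    fin_cases i
    exacts [hz (Or.inl (Or.inl (Or.inr h))), hz (Or.inl (Or.inr h)), hz (Or.inr h)]
  have hUx : x ∉ U := fun h => h (Or.inl (Or.inl (Or.inl (by simp))))
  have hUy : y ∉ U := fun h => h (Or.inl (Or.inl (Or.inl (by simp))))
  -- A component off the three faces attached to all of them gives a `K₃,₃` minor.
  have no33 : ∀ z ∈ U, ¬ ∀ i, Tch G (comp G U z) (Q i) := by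
    intro z hz ht
    have hsub := comp_subset (G := G) U z
    have dx : Disjoint {x} (comp G U z) := by
      simp only [Set.disjoint_singleton_left]; exact fun h => hUx (hsub h)
    have dy : Disjoint {y} (comp G U z) := by
      simp only [Set.disjoint_singleton_left]; exact fun h => hUy (hsub h)
    refine no_K33 hG.pl ![{x}, {y}, comp G U z] Q ?_ hBr ?_ (fun i j h => hdis i j h.ne) ?_ ?_
    · intro i
      fin_cases i
      exacts [br_singleton x, br_singleton y, ⟨⟨z, mem_comp_self hz⟩, cn_comp _ _⟩]
    · intro i j hij
      fin_cases i <;> fin_cases j <;> simp at hij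
      exacts [hdxy, dx, dy]
    · intro i j
      fin_cases i
      exacts [hdx j, hdy j, Set.disjoint_left.2 fun w hw h => hUQ j w (hsub hw) h]
    · intro i j
      fin_cases i
      exacts [hTx j, hTy j, ht j]
  -- As `C k` does not separate, `Q i` and `Q j` are adjacent or joined by a component off the faces.
  have link : ∀ i j k : Fin 3, i ≠ j → j ≠ k → i ≠ k → ∃ R : Set V, R ⊆ U ∧ Cn G (Q i ∪ R) ∧
      Tch G (Q i ∪ R) (Q j) ∧ (R = ∅ ∨ ∃ z ∈ U, R = comp G U z ∧ Tch G R (Q i) ∧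
        Tch G R (Q j)) := by
    intro i j k hij hjk hik
    obtain ⟨a, ha⟩ := (hBr i).1
    obtain ⟨b, hb⟩ := (hBr j).1
    have hk : ∀ l, l ≠ k → ∀ z ∈ Q l, z ∉ vts (C k) := fun l hl z hz hzk =>
      Set.disjoint_left.1 (hdis l k hl) hz ⟨hzk, hz.2⟩
    set K : Set V := Q i ∪ {z | ∃ u ∈ Q i, ∃ z0, G.Adj u z0 ∧ RIn G U z0 z} with hK
    obtain ⟨c, hc, d, hd, -, hd', hcd⟩ := ((hC k).conn a (hk i hik a ha) b (hk j hjk b hb)).exit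
      (T := K) (Or.inl ha) (by
        rintro (h | ⟨u, hu, z, hz, hr⟩)
        · exact Set.disjoint_left.1 (hdis i j hij) h hb
        · exact hUQ j b hr.right hb)
    have hdU : d ∉ U := by
      intro hdU
      apply hd
      rcases hc with h | ⟨u, hu, z, hz, hr⟩
      · exact Or.inr ⟨c, h, d, hcd, RIn.refl hdU⟩
      · exact Or.inr ⟨u, hu, z, hz, hr.trans (RIn.of_adj hcd hr.right hdU)⟩
    have hdj : d ∈ Q j := by
      have hdxy : d ≠ x ∧ d ≠ y := ⟨fun h => hd' (h ▸ mem_vts (hxy k)),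
        fun h => hd' (h ▸ mem_vts' (hxy k))⟩
      have hdi : d ∉ Q i := fun h => hd (Or.inl h)
      have hdk : d ∉ Q k := fun h => hd' h.1
      have hall : ∃ l, d ∈ Q l := by
        by_contra hcon
        push Not at hcon
        apply hdU
        rintro ((((h | h) | h) | h) | h)
        exacts [hdxy.1 h, hdxy.2 h, hcon 0 h, hcon 1 h, hcon 2 h]
      obtain ⟨l, hl⟩ := hall
      have hli : l ≠ i := fun h => hdi (h ▸ hl)
      have hlk : l ≠ k := fun h => hdk (h ▸ hl)
      have : l = j := by omega
      exact this ▸ hl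
    rcases hc with h | ⟨u, hu, z, hz, hr⟩
    · refine ⟨∅, Set.empty_subset _, ?_, ?_, Or.inl rfl⟩
      · rw [Set.union_empty]; exact (hBr i).2
      · exact ⟨c, Or.inl h, d, hdj, hcd⟩
    · have hzU := hr.left
      refine ⟨comp G U z, comp_subset _ _, ?_, ?_, Or.inr ⟨z, hzU, rfl, ?_, ?_⟩⟩
      · exact (hBr i).2.union (cn_comp _ _) hu (mem_comp_self hzU) (Or.inl hz)
      · exact ⟨c, Or.inr hr, d, hdj, hcd⟩
      · exact ⟨z, mem_comp_self hzU, u, hu, hz.symm⟩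
      · exact ⟨c, hr, d, hdj, hcd⟩
  obtain ⟨R0, hR0U, hR0c, hR0t, hR0⟩ := link 0 1 2 (by decide) (by decide) (by decide)
  obtain ⟨R1, hR1U, hR1c, hR1t, hR1⟩ := link 1 2 0 (by decide) (by decide) (by decide)
  obtain ⟨R2, hR2U, hR2c, hR2t, hR2⟩ := link 2 0 1 (by decide) (by decide) (by decide)
  have hRd : ∀ R R' : Set V, ∀ i j k l : Fin 3, (∀ m, m = i ∨ m = j ∨ m = k ∨ m = l) →
      (R = ∅ ∨ ∃ z ∈ U, R = comp G U z ∧ Tch G R (Q i) ∧ Tch G R (Q j)) →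
      (R' = ∅ ∨ ∃ z ∈ U, R' = comp G U z ∧ Tch G R' (Q k) ∧ Tch G R' (Q l)) →
      Disjoint R R' := by
    rintro R R' i j k l hall (rfl | ⟨z, hz, rfl, t1, t2⟩) (rfl | ⟨z', hz', rfl, t3, t4⟩)
    · simp
    · simp
    · simp
    · rw [Set.disjoint_left]
      intro w hw hw'
      have heq := comp_eq_of_mem hw hw'
      refine no33 z hz fun m => ?_
      rcases hall m with rfl | rfl | rfl | rfl
      exacts [t1, t2, heq ▸ t3, heq ▸ t4]
  have dQR : ∀ i, ∀ R ⊆ U, Disjoint (Q i) R := fun i R hR =>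
    Set.disjoint_left.2 fun w hw hw' => hUQ i w (hR hw') hw
  have dUU : ∀ R R' i j, R ⊆ U → R' ⊆ U → i ≠ j → Disjoint R R' →
      Disjoint (Q i ∪ R) (Q j ∪ R') := by
    intro R R' i j h1 h2 hij hd
    rw [Set.disjoint_union_left, Set.disjoint_union_right, Set.disjoint_union_right]
    exact ⟨⟨hdis i j hij, dQR i R' h2⟩, (dQR j R h1).symm, hd⟩
  have dx : ∀ i, ∀ R ⊆ U, Disjoint {x} (Q i ∪ R) := by
    intro i R hR
    rw [Set.disjoint_union_right]
    exact ⟨hdx i, by simpa using fun h => hUx (hR h)⟩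
  have dy : ∀ i, ∀ R ⊆ U, Disjoint {y} (Q i ∪ R) := by
    intro i R hR
    rw [Set.disjoint_union_right]
    exact ⟨hdy i, by simpa using fun h => hUy (hR h)⟩
  -- The three links are disjoint, so contracting them gives a `K₅` minor.
  refine no_K5 hG.pl ![{x}, {y}, Q 0 ∪ R0, Q 1 ∪ R1, Q 2 ∪ R2] ?_ ?_ ?_
  · intro i
    fin_cases i
    · exact br_singleton x
    · exact br_singleton y
    · exact ⟨(hBr 0).1.inl, hR0c⟩
    · exact ⟨(hBr 1).1.inl, hR1c⟩
    · exact ⟨(hBr 2).1.inl, hR2c⟩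
  · intro i j hij
    fin_cases i <;> fin_cases j <;> simp only [Fin.mk_lt_mk] at hij <;> try omega
    · exact hdxy
    · exact dx 0 _ hR0U
    · exact dx 1 _ hR1U
    · exact dx 2 _ hR2U
    · exact dy 0 _ hR0U
    · exact dy 1 _ hR1U
    · exact dy 2 _ hR2U
    · exact dUU _ _ 0 1 hR0U hR1U (by decide) (hRd R0 R1 0 1 1 2 (by decide) hR0 hR1)
    · exact dUU _ _ 0 2 hR0U hR2U (by decide) (hRd R0 R2 0 1 2 0 (by decide) hR0 hR2)
    · exact dUU _ _ 1 2 hR1U hR2U (by decide) (hRd R1 R2 1 2 2 0 (by decide) hR1 hR2)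
  · intro i j hij
    have u0 : ∀ (i : Fin 3) (R : Set V), Q i ⊆ Q i ∪ R := fun i R => Set.subset_union_left
    fin_cases i <;> fin_cases j <;> simp only [Fin.mk_lt_mk] at hij <;> try omega
    · exact ⟨x, rfl, y, rfl, hadj⟩
    · exact (hTx 0).mono subset_rfl (u0 _ _)
    · exact (hTx 1).mono subset_rfl (u0 _ _)
    · exact (hTx 2).mono subset_rfl (u0 _ _)
    · exact (hTy 0).mono subset_rfl (u0 _ _)
    · exact (hTy 1).mono subset_rfl (u0 _ _)
    · exact (hTy 2).mono subset_rfl (u0 _ _)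
    · exact hR0t.mono subset_rfl (u0 _ _)
    · exact hR2t.symm.mono (u0 _ _) subset_rfl
    · exact hR1t.mono subset_rfl (u0 _ _)

lemma P4.not_three' (hG : P4 G) {C D E : Set (Sym2 V)} (hC : IsFace G C) (hD : IsFace G D)
    (hE : IsFace G E) {e : Sym2 V} (h1 : e ∈ C) (h2 : e ∈ D) (h3 : e ∈ E) (hCD : C ≠ D) :
    E = C ∨ E = D := by
  by_contra hcon
  push Not at hcon
  induction e using Sym2.ind with
  | _ x y =>
  refine hG.not_three (C := ![C, D, E]) (x := x) (y := y) ?_ ?_ ?_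
  · intro i; fin_cases i
    exacts [hC, hD, hE]
  · intro i j hij
    fin_cases i <;> fin_cases j <;> simp at hij ⊢
    exacts [hCD, hcon.1.symm, hCD.symm, hcon.2.symm, hcon.1, hcon.2]
  · intro i; fin_cases i
    exacts [h1, h2, h3]

/-- The four vertices of a `K₄` and a component of the rest, which is attached to all four of them by
4-connectivity, form a `K₅` minor. -/
lemma P4.no_K4 (hG : P4 G) {a b c d : V} (hab : G.Adj a b) (hac : G.Adj a c) (had : G.Adj a d)
    (hbc : G.Adj b c) (hbd : G.Adj b d) (hcd : G.Adj c d) : False := by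
  have hcard : ({a, b, c, d} : Set V).ncard ≤ 4 :=
    (Set.ncard_insert_le _ _).trans (Nat.succ_le_succ (ncard_three_le b c d))
  obtain ⟨h, hh⟩ : ∃ h, h ∉ ({a, b, c, d} : Set V) := by
    by_contra hcon
    push Not at hcon
    have h1 : (Set.univ : Set V) ⊆ {a, b, c, d} := fun x _ => hcon x
    have h2 := Set.ncard_le_ncard h1
    have h3 : (Set.univ : Set V).ncard = Fintype.card V := by simp
    have := hG.kc.1
    omega
  set O : Set V := ({a, b, c, d} : Set V)ᶜ with hO
  have hN : nbd G (comp G O h) ⊆ {a, b, c, d} := fun v hv => by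
    by_contra hv'
    exact nbd_comp_disj hv hv'
  have hsub := comp_subset (G := G) O h
  have hall : ∀ v ∈ ({a, b, c, d} : Set V), Tch G {v} (comp G O h) := by
    intro v hv
    have hvn : v ∈ nbd G (comp G O h) := by
      by_contra hvn
      have h4 := hG.nbd_ge (mem_comp_self hh) (fun hv' => hsub hv' hv) hvn
      have hss : nbd G (comp G O h) ⊆ {a, b, c, d} \ {v} := fun w hw =>
        ⟨hN hw, fun hwv => hvn (hwv ▸ hw)⟩
      have := Set.ncard_le_ncard hss
      have := Set.ncard_sdiff_singleton_lt_of_mem hv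
      omega
    obtain ⟨-, x, hx, hxv⟩ := hvn
    exact ⟨v, rfl, x, hx, hxv.symm⟩
  have hd : ∀ v ∈ ({a, b, c, d} : Set V), Disjoint {v} (comp G O h) := fun v hv => by
    simpa using fun hv' => hsub hv' hv
  refine no_K5 hG.pl ![{a}, {b}, {c}, {d}, comp G O h] ?_ ?_ ?_
  · intro i
    fin_cases i
    exacts [br_singleton a, br_singleton b, br_singleton c, br_singleton d,
      ⟨⟨h, mem_comp_self hh⟩, cn_comp _ _⟩]
  · intro i j hij
    fin_cases i <;> fin_cases j <;> simp only [Fin.mk_lt_mk] at hij <;> try omega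
    · simpa using hab.ne
    · simpa using hac.ne
    · simpa using had.ne
    · exact hd a (by simp)
    · simpa using hbc.ne
    · simpa using hbd.ne
    · exact hd b (by simp)
    · simpa using hcd.ne
    · exact hd c (by simp)
    · exact hd d (by simp)
  · intro i j hij
    fin_cases i <;> fin_cases j <;> simp only [Fin.mk_lt_mk] at hij <;> try omega
    · exact ⟨a, rfl, b, rfl, hab⟩
    · exact ⟨a, rfl, c, rfl, hac⟩
    · exact ⟨a, rfl, d, rfl, had⟩
    · exact hall a (by simp)
    · exact ⟨b, rfl, c, rfl, hbc⟩
    · exact ⟨b, rfl, d, rfl, hbd⟩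
    · exact hall b (by simp)
    · exact ⟨c, rfl, d, rfl, hcd⟩
    · exact hall c (by simp)
    · exact hall d (by simp)

/-- Two neighbours on a face of a vertex off the face are adjacent. -/
lemma P4.nbr_adj (hG : P4 G) {N : Set (Sym2 V)} (hN : IsFace G N) {t p r : V} (ht : t ∉ vts N)
    (hp : p ∈ vts N) (hr : r ∈ vts N) (hpr : p ≠ r) (htp : G.Adj t p) (htr : G.Adj t r) :
    s(p, r) ∈ N := by
  by_contra hcon
  obtain ⟨A, A', hA⟩ := hN.cyc.arcs hp hr hpr
  obtain ⟨x, hx⟩ := inn_nonempty hA.pA hpr (fun h => hcon (by rw [hA.eq]; exact Or.inl h))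
  obtain ⟨x', hx'⟩ := inn_nonempty hA.pA' hpr (fun h => hcon (by rw [hA.eq]; exact Or.inr h))
  have hn : ∀ z, z ∈ vts N → z ≠ p → z ≠ r → z ∈ ({t} ∪ {p, r} : Set V)ᶜ := by
    intro z hz h1 h2
    rintro (h | h | h)
    exacts [ht (h ▸ hz), h1 h, h2 h]
  refine face_sep hG.pl hN hA hcon (cn_singleton t) (by rintro _ rfl; exact ht)
    ⟨t, rfl, htp.symm⟩ ⟨t, rfl, htr.symm⟩ hx hx' (hG.rin ?_ x ?_ x' ?_)
  · exact (Set.ncard_union_le _ _).trans_lt (by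
      have := ncard_two_le p r
      rw [Set.ncard_singleton]; omega)
  · exact hn x (hA.inn_vts hx) hx.2.1 hx.2.2
  · exact hn x' (hA.swap.inn_vts hx') hx'.2.1 hx'.2.2

/-- A vertex off a face has at most two neighbours on the face. -/
lemma P4.nbr_two (hG : P4 G) {N : Set (Sym2 V)} (hN : IsFace G N) {t p q r : V} (ht : t ∉ vts N)
    (hp : p ∈ vts N) (hq : q ∈ vts N) (hr : r ∈ vts N) (hpq : p ≠ q) (htp : G.Adj t p)
    (htq : G.Adj t q) (htr : G.Adj t r) : r = p ∨ r = q := by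
  by_contra hcon
  push Not at hcon
  have h1 := hN.cyc.subset (hG.nbr_adj hN ht hp hq hpq htp htq)
  have h2 := hN.cyc.subset (hG.nbr_adj hN ht hp hr hcon.1.symm htp htr)
  have h3 := hN.cyc.subset (hG.nbr_adj hN ht hq hr hcon.2.symm htq htr)
  exact hG.no_K4 htp htq htr h1 h2 h3

end Faces3

/-! ### Faces generate the cycle space; Euler's inequality -/

section Euler
variable {V : Type} {G : SimpleGraph V}

/-- The indicator vector of an edge set over the two-element field. -/
noncomputable def chi (E : Set (Sym2 V)) : Sym2 V → ZMod 2 := fun e => if e ∈ E then 1 else 0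

/-- The span of the (indicator vectors of the) faces. -/
noncomputable def faceSpan (G : SimpleGraph V) : Submodule (ZMod 2) (Sym2 V → ZMod 2) :=
  Submodule.span (ZMod 2) (chi '' {E | IsFace G E})

lemma chi_theta {p r : V} {A A' Q : G.Walk p r} {Z : Set (Sym2 V)} (h : Arcs Z A A') (hQ : Ear Z Q) :
    chi Z = chi (A.edgeSet ∪ Q.edgeSet) + chi (A'.edgeSet ∪ Q.edgeSet) := by
  funext e
  have h1 : e ∈ Z ↔ e ∈ A.edgeSet ∨ e ∈ A'.edgeSet := by rw [h.eq]; rfl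
  have h2 : e ∈ A.edgeSet → e ∉ A'.edgeSet := h.edg e
  have h3 : e ∈ Q.edgeSet → e ∉ Z := hQ.edg e
  have h11 : (1 : ZMod 2) + 1 = 0 := by decide
  simp only [chi, Pi.add_apply, Set.mem_union]
  by_cases a : e ∈ A.edgeSet <;> by_cases b : e ∈ A'.edgeSet <;> by_cases c : e ∈ Q.edgeSet <;>
    simp_all

variable [Fintype V]

/-- The faces generate the cycle space. -/
lemma P4.chi_mem (hG : P4 G) {Z : Set (Sym2 V)} (hZ : IsCyc G Z) : chi Z ∈ faceSpan G := by
  by_contra hcon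
  obtain ⟨Z', ⟨h1, h2⟩, h3⟩ := hG.exists_face (Zs := {Z | IsCyc G Z ∧ chi Z ∉ faceSpan G}) (B0 := ∅)
    (fun _ h => h.1) ⟨Z, hZ, hcon⟩ cn_empty (fun _ _ _ h => h.elim) (by
      rintro Z ⟨-, hZ⟩ p r A A' Q hA hQ -
      by_contra hc
      have e1 : IsCyc G (A.edgeSet ∪ Q.edgeSet) := (hA.ear hQ).isCyc
      have e2 : IsCyc G (A'.edgeSet ∪ Q.edgeSet) := (hA.swap.ear hQ).isCyc
      simp only [Set.mem_ofPred_eq, not_or, not_and, not_not] at hc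
      apply hZ
      rw [chi_theta hA hQ]
      exact add_mem (hc.1 e1) (hc.2 e2))
  exact h2 (Submodule.subset_span ⟨Z', h3, rfl⟩)

/-- The finite set of faces. -/
noncomputable def fs (G : SimpleGraph V) : Finset (Set (Sym2 V)) :=
  (Set.toFinite {E | IsFace G E}).toFinset

lemma mem_fs {E : Set (Sym2 V)} : E ∈ fs G ↔ IsFace G E := by simp [fs]

/-- Every edge lies on exactly two faces. -/
lemma P4.exactly_two (hG : P4 G) {e : Sym2 V} (he : e ∈ G.edgeSet) :
    ∃ C D, IsFace G C ∧ IsFace G D ∧ C ≠ D ∧ e ∈ C ∧ e ∈ D ∧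
      ∀ E, IsFace G E → e ∈ E → E = C ∨ E = D := by
  induction e using Sym2.ind with
  | _ x y =>
    obtain ⟨C, D, hC, hD, hne, h1, h2⟩ := hG.two_faces he
    exact ⟨C, D, hC, hD, hne, h1, h2, fun E hE h => hG.not_three' hC hD hE h1 h2 h hne⟩

lemma P4.filter_two (hG : P4 G) {e : Sym2 V} (he : e ∈ G.edgeSet) :
    ∃ C D, C ≠ D ∧ (fs G).filter (fun F => e ∈ F) = {C, D} := by
  obtain ⟨C, D, hC, hD, hne, h1, h2, h3⟩ := hG.exactly_two he
  refine ⟨C, D, hne, ?_⟩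
  ext E
  simp only [Finset.mem_filter, mem_fs, Finset.mem_insert, Finset.mem_singleton]
  constructor
  · exact fun h => h3 E h.1 h.2
  · rintro (rfl | rfl)
    exacts [⟨hC, h1⟩, ⟨hD, h2⟩]

lemma P4.card_filter (hG : P4 G) {e : Sym2 V} (he : e ∈ G.edgeSet) :
    ((fs G).filter (fun F => e ∈ F)).card = 2 := by
  obtain ⟨C, D, hne, h⟩ := hG.filter_two he
  rw [h, Finset.card_pair hne]

lemma P4.sum_chi (hG : P4 G) : ∑ F ∈ fs G, chi F = 0 := by
  funext e
  simp only [Finset.sum_apply, chi, Pi.zero_apply, Finset.sum_boole]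
  by_cases he : e ∈ G.edgeSet
  · rw [hG.card_filter he]; rfl
  · rw [Finset.filter_false_of_mem]
    · simp
    · exact fun F hF h => he ((mem_fs.1 hF).cyc.subset h)

lemma P4.connected (hG : P4 G) : G.Connected := by
  have h := hG.kc.2 ∅ (by simp)
  rw [Set.compl_empty] at h
  exact (induceUnivIso G).connected_iff.1 h

lemma P4.fs_nonempty (hG : P4 G) : (fs G).Nonempty := by
  obtain ⟨v⟩ := hG.connected.nonempty
  have := hG.deg_ge v
  obtain ⟨w, hw⟩ : {w | G.Adj v w}.Nonempty := by
    rw [Set.nonempty_iff_ne_empty]; intro h; rw [h] at this; simp at this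
  obtain ⟨C, D, hC, -⟩ := hG.two_faces hw
  exact ⟨C, mem_fs.2 hC⟩

/-- The faces add up to zero, so one of them is redundant. -/
lemma P4.finrank_lt (hG : P4 G) : Module.finrank (ZMod 2) (faceSpan G) + 1 ≤ (fs G).card := by
  obtain ⟨F0, hF0⟩ := hG.fs_nonempty
  have hsum := hG.sum_chi
  rw [← Finset.add_sum_erase _ _ hF0] at hsum
  have hle : faceSpan G ≤ Submodule.span (ZMod 2) (((fs G).erase F0).image chi : Finset _) := by
    rw [faceSpan, Submodule.span_le]
    rintro _ ⟨F, hF, rfl⟩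
    by_cases h : F = F0
    · subst h
      rw [eq_neg_of_add_eq_zero_left hsum]
      refine neg_mem (sum_mem fun E hE => Submodule.subset_span ?_)
      exact Finset.mem_coe.2 (Finset.mem_image_of_mem _ hE)
    · refine Submodule.subset_span ?_
      exact Finset.mem_coe.2 (Finset.mem_image_of_mem _ (Finset.mem_erase.2 ⟨h, mem_fs.2 hF⟩))
  have h1 := Submodule.finrank_mono hle
  have h2 := finrank_span_finset_le_card (R := ZMod 2) (((fs G).erase F0).image chi)
  have h3 := Finset.card_image_le (s := (fs G).erase F0) (f := chi (V := V))
  rw [Finset.card_erase_of_mem hF0] at h3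
  have h4 := Finset.card_pos.2 ⟨F0, hF0⟩
  unfold Set.finrank at h2
  omega

/-- The inequality half of Euler's formula that is needed. -/
lemma P4.euler (hG : P4 G) : G.edgeSet.ncard + 2 ≤ (fs G).card + Fintype.card V := by
  obtain ⟨T, hTG, hT⟩ := hG.connected.exists_isTree_le
  have hTc := hT.card_edgeFinset
  set N : Set (Sym2 V) := G.edgeSet \ T.edgeSet with hN
  have hNc : N.ncard + T.edgeSet.ncard = G.edgeSet.ncard :=
    Set.ncard_sdiff_add_ncard_of_subset (edgeSet_mono hTG)
  have hTc' : T.edgeSet.ncard = T.edgeFinset.card := by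
    rw [← coe_edgeFinset, Set.ncard_coe_finset]
  let ρ : (Sym2 V → ZMod 2) →ₗ[ZMod 2] (N → ZMod 2) := LinearMap.funLeft _ _ Subtype.val
  -- The fundamental cycles of the spanning tree `T` restrict to a basis on the edges off `T`.
  have htop : (faceSpan G).map ρ = ⊤ := by
    rw [eq_top_iff, ← (Pi.basisFun (ZMod 2) N).span_eq, Submodule.span_le]
    rintro _ ⟨⟨e, heG, heT⟩, rfl⟩
    induction e using Sym2.ind with
    | _ x y =>
      obtain ⟨w⟩ := hT.connected.preconnected x y
      obtain ⟨P, hP⟩ : ∃ P : T.Walk x y, P.IsPath := ⟨w.bypass, w.bypass_isPath⟩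
      have hed : ∀ e ∈ (P.mapLe hTG).edges, e ∈ T.edgeSet := by
        intro e he
        rw [Walk.edges_mapLe_eq_edges] at he
        exact P.edges_subset_edgeSet he
      have hc := isCyc_of_path (hP.mapLe hTG) heG (fun h => heT (hed _ h))
      refine ⟨_, hG.chi_mem hc, ?_⟩
      funext ⟨e, he1, he2⟩
      have : e ∉ P.edges := fun h => he2 (P.edges_subset_edgeSet h)
      simp [ρ, LinearMap.funLeft, chi, this, Pi.single_apply, Subtype.ext_iff]
  have h1 : N.ncard ≤ Module.finrank (ZMod 2) (faceSpan G) := by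
    have h2 := Submodule.finrank_map_le ρ (faceSpan G)
    rw [htop, finrank_top, Module.finrank_fintype_fun_eq_card, ← Nat.card_eq_fintype_card] at h2
    exact h2
  have h3 := hG.finrank_lt
  omega

/-- The faces at a vertex `q` link all the neighbours of `q`: no nontrivial set of neighbours is
closed under passing from one edge to the other at a face corner. -/
lemma P4.rot_conn (hG : P4 G) {q x h : V} {X : Set V} (hx : x ∈ X) (hqx : G.Adj q x)
    (hh : h ∉ X) (hqh : G.Adj q h)
    (hcl : ∀ F, IsFace G F → ∀ a b, s(q, a) ∈ F → s(q, b) ∈ F → a ∈ X → b ∈ X) : False := by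
  -- The parity of the number of edges from `q` to `X` vanishes on all faces, hence on all cycles, but
  -- not on a cycle through `x`, `q`, `h`.
  let φ : (Sym2 V → ZMod 2) →ₗ[ZMod 2] ZMod 2 :=
    ∑ z ∈ (Set.toFinite X).toFinset, LinearMap.proj s(q, z)
  have hφ : ∀ E : Set (Sym2 V), φ (chi E) = (({z | z ∈ X ∧ s(q, z) ∈ E}.ncard : ℕ) : ZMod 2) := by
    intro E
    simp only [φ, LinearMap.sum_apply, LinearMap.proj_apply, chi, Finset.sum_boole]
    rw [← Set.ncard_coe_finset]
    congr 2
    ext z; simp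
  have hW : faceSpan G ≤ LinearMap.ker φ := by
    rw [faceSpan, Submodule.span_le]
    rintro _ ⟨F, hF, rfl⟩
    have hF : IsFace G F := hF
    change chi F ∈ LinearMap.ker φ
    rw [LinearMap.mem_ker, hφ]
    by_cases hne : ∃ z, z ∈ X ∧ s(q, z) ∈ F
    · obtain ⟨z, hzX, hz⟩ := hne
      have : {z | z ∈ X ∧ s(q, z) ∈ F} = {z | s(q, z) ∈ F} := by
        ext b
        exact ⟨fun h => h.2, fun h => ⟨hcl F hF z b hz h hzX, h⟩⟩
      rw [this, hF.cyc.deg (mem_vts hz)]; rfl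
    · push Not at hne
      have : {z | z ∈ X ∧ s(q, z) ∈ F} = ∅ := by
        ext b
        simpa using hne b
      rw [this]; simp
  obtain ⟨P, hP, hPs⟩ := (hG.rin (s := {q}) (by simp) x hqx.ne' h hqh.ne').isPath
  have hPq : q ∉ P.support := fun h => hPs q h rfl
  have hxh : x ≠ h := fun he => hh (he ▸ hx)
  have hqe : ∀ z, s(q, z) ∉ P.edges := fun z hz => hPq (P.fst_mem_support_of_mem_edges hz)
  have hP' : (Walk.cons hqx P).IsPath := by simp [hP, hPq]
  have hc := isCyc_of_path hP' hqh (by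
    simp only [Walk.edges_cons, List.mem_cons, not_or]
    refine ⟨?_, hqe h⟩
    simp [hxh.symm, hqx.ne])
  have h0 := hW (hG.chi_mem hc)
  rw [LinearMap.mem_ker, hφ] at h0
  have : {z | z ∈ X ∧ s(q, z) ∈ insert s(q, h) (Walk.cons hqx P).edgeSet} = {x} := by
    ext z
    have hz : s(q, z) ∈ insert s(q, h) (Walk.cons hqx P).edgeSet ↔ z = h ∨ z = x := by
      have : s(q, z) ∈ (Walk.cons hqx P).edgeSet ↔ s(q, z) = s(q, x) ∨ s(q, z) ∈ P.edges := by
        simp [Walk.edgeSet]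
      simp only [Set.mem_insert_iff, this, hqe z, or_false]
      simp [hqx.ne, hqh.ne]
    simp only [Set.mem_ofPred_eq, hz, Set.mem_singleton_iff]
    constructor
    · rintro ⟨h1, rfl | rfl⟩
      · exact absurd h1 hh
      · rfl
    · rintro rfl; exact ⟨hx, Or.inr rfl⟩
  rw [this] at h0
  simp at h0

end Euler

/-! ### Covers as multisets of edge sets -/

section Cover
variable {V : Type} {G : SimpleGraph V}

/-- The subgraph of `G` with edge set `E ∩ E(G)` and the vertices covered by `E`. -/
def sg (G : SimpleGraph V) (E : Set (Sym2 V)) : G.Subgraph where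
  verts := vts E
  Adj a b := s(a, b) ∈ E ∧ G.Adj a b
  adj_sub h := h.2
  edge_vert h := mem_vts h.1
  symm := ⟨fun a b h => ⟨by rw [Sym2.eq_swap]; exact h.1, h.2.symm⟩⟩

lemma sg_edgeSet {E : Set (Sym2 V)} (h : IsCyc G E) : (sg G E).edgeSet = E := by
  ext e
  induction e using Sym2.ind with
  | _ a b => exact ⟨fun h => h.1, fun he => ⟨he, h.subset he⟩⟩

lemma sg_isCycle {E : Set (Sym2 V)} (h : IsCyc G E) : IsCycleSubgraph (sg G E) := by
  have h' := h
  obtain ⟨u, c, hc, rfl⟩ := h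
  have heq : sg G c.edgeSet = c.toSubgraph := by
    ext a b
    · change a ∈ vts _ ↔ _
      rw [vts_edgeSet hc.not_nil]; simp
    · change _ ∧ _ ↔ _
      have hh : s(a, b) ∈ c.edgeSet ↔ c.toSubgraph.Adj a b :=
        Walk.adj_toSubgraph_iff_mem_edges.symm
      rw [hh]
      exact ⟨fun h => h.1, fun h => ⟨h, h.adj_sub⟩⟩
  refine ⟨?_, fun v hv => ?_⟩
  · rw [heq]; exact c.toSubgraph_connected.coe
  · rw [← h'.deg hv]
    congr 1
    ext q
    exact ⟨fun h => h.1, fun h => ⟨h, h'.subset h⟩⟩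

/-- Cycle double covers, with cycles given by their edge sets. -/
def CD (G : SimpleGraph V) (S : Multiset (Set (Sym2 V))) : Prop :=
  (∀ C ∈ S, IsCyc G C) ∧ ∀ e ∈ G.edgeSet, S.countP (fun C => e ∈ C) = 2

lemma CD.isCDC {S : Multiset (Set (Sym2 V))} (h : CD G S) : IsCDC G (S.map (sg G)) := by
  constructor
  · intro C hC
    obtain ⟨E, hE, rfl⟩ := Multiset.mem_map.1 hC
    exact sg_isCycle (h.1 E hE)
  · intro e he
    rw [← h.2 e he, Multiset.countP_map, Multiset.countP_eq_card_filter]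
    congr 1
    refine Multiset.filter_congr fun E hE => ?_
    rw [sg_edgeSet (h.1 E hE)]

lemma CD.map_inj {S T : Multiset (Set (Sym2 V))} (hS : CD G S) (hT : CD G T)
    (h : S.map (sg G) = T.map (sg G)) : S = T := by
  have key : ∀ S : Multiset (Set (Sym2 V)), CD G S →
      (S.map (sg G)).map (fun C => C.edgeSet) = S := by
    intro S hS
    rw [Multiset.map_map]
    conv_rhs => rw [← Multiset.map_id S]
    exact Multiset.map_congr rfl fun E hE => sg_edgeSet (hS.1 E hE)
  rw [← key S hS, h, key T hT]

lemma finite_multiset {α : Type*} [Finite α] (k : ℕ) : {S : Multiset α | Multiset.card S ≤ k}.Finite := by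
  have := Fintype.ofFinite α
  refine (Set.finite_Iic (k • (Finset.univ : Finset α).val)).subset fun S hS => ?_
  rw [Set.mem_Iic, Multiset.le_iff_count]
  intro a
  rw [Multiset.count_nsmul, Multiset.count_eq_one_of_mem Finset.univ.nodup (Finset.mem_univ a)]
  exact (Multiset.count_le_card a S).trans (by simpa using hS)

lemma cd_map {ι : Type*} {s : Finset ι} {f : ι → Set (Sym2 V)} (h1 : ∀ i ∈ s, IsCyc G (f i))
    (h2 : ∀ e ∈ G.edgeSet, (s.filter (fun i => e ∈ f i)).card = 2) : CD G (s.val.map f) := by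
  constructor
  · intro C hC
    obtain ⟨i, hi, rfl⟩ := Multiset.mem_map.1 hC
    exact h1 i hi
  · intro e he
    rw [← h2 e he, Multiset.countP_map]
    rfl

variable [Fintype V]

/-- The number of cycle double covers of size at most `n - 1`. -/
noncomputable def numCDC (G : SimpleGraph V) : ℕ :=
  {S : Multiset G.Subgraph | IsCDC G S ∧ Multiset.card S ≤ Fintype.card V - 1}.ncard

/-- A family of small covers in which every cover is repeated at most `k` times. -/
lemma card_le_numCDC {ι : Type*} (s : Finset ι) (f : ι → Multiset (Set (Sym2 V))) (k : ℕ)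
    (hf : ∀ i ∈ s, CD G (f i) ∧ Multiset.card (f i) + 1 ≤ Fintype.card V)
    (hk : ∀ i ∈ s, (s.filter (fun j => f j = f i)).card ≤ k) : s.card ≤ k * numCDC G := by
  have h1 : s.card ≤ k * (s.image f).card := by
    refine Finset.card_le_mul_card_image s k fun b hb => ?_
    obtain ⟨i, hi, rfl⟩ := Finset.mem_image.1 hb
    exact hk i hi
  refine h1.trans (Nat.mul_le_mul_left k ?_)
  have h2 : (s.image f).card = (((s.image f).image (fun S => S.map (sg G)) : Finset _) : Set (Multiset G.Subgraph)).ncard := by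
    rw [Set.ncard_coe_finset]
    refine (Finset.card_image_of_injOn ?_).symm
    intro S hS T hT h
    obtain ⟨i, hi, rfl⟩ := Finset.mem_image.1 hS
    obtain ⟨j, hj, rfl⟩ := Finset.mem_image.1 hT
    exact CD.map_inj (hf i hi).1 (hf j hj).1 h
  rw [h2, numCDC]
  refine Set.ncard_le_ncard ?_ ((finite_multiset (Fintype.card V - 1)).subset fun S hS => hS.2)
  intro S hS
  obtain ⟨T, hT, rfl⟩ := Finset.mem_image.1 hS
  obtain ⟨i, hi, rfl⟩ := Finset.mem_image.1 hT
  refine ⟨(hf i hi).1.isCDC, ?_⟩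
  have := (hf i hi).2
  rw [Multiset.card_map]
  omega

end Cover

/-! ### Building and recognising cycles -/

section CycTools
variable {V : Type} {G : SimpleGraph V}

/-- The `ℕ`-valued indicator of an edge set. -/
noncomputable def ind (E : Set (Sym2 V)) (e : Sym2 V) : ℕ := if e ∈ E then 1 else 0

lemma ind_sdiff_union {E A B : Set (Sym2 V)} (hA : A ⊆ E) (hB : ∀ e ∈ B, e ∉ E) (e : Sym2 V) :
    ind (E \ A ∪ B) e + ind A e = ind E e + ind B e := by
  have h1 := @hA e
  have h2 := hB e
  unfold ind
  by_cases a : e ∈ A <;> by_cases b : e ∈ B <;> by_cases c : e ∈ E <;> simp_all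

/-- Deleting a vertex from a cycle leaves a path between its two neighbours. -/
lemma IsCyc.vertex_path {E : Set (Sym2 V)} (hE : IsCyc G E) {c t d : V} (hc : s(c, t) ∈ E)
    (hd : s(t, d) ∈ E) (hcd : c ≠ d) :
    ∃ P : G.Walk c d, P.IsPath ∧ t ∉ P.support ∧ E = {s(c, t), s(t, d)} ∪ P.edgeSet := by
  obtain ⟨P, hP, hPc, hEP⟩ := hE.edge_path (p := t) (q := c) (by rwa [Sym2.eq_swap])
  cases P with
  | nil => simp at hP; exact absurd (hE.subset hc) (by simp)
  | cons h P' =>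
    rename_i x
    have hxE : s(t, x) ∈ E := by rw [hEP]; simp [Walk.edgeSet]
    have hxc : x ≠ c := by rintro rfl; simp at hPc
    have hxd : x = d := by
      by_contra hne
      have h3 : ({c, d, x} : Set V) ⊆ {q | s(t, q) ∈ E} := by
        rintro q (rfl | rfl | rfl)
        exacts [by rw [Sym2.eq_swap] at hc; exact hc, hd, hxE]
      have h4 := Set.ncard_le_ncard h3 (hE.finite_nbr (mem_vts hd))
      rw [hE.deg (mem_vts hd), Set.ncard_eq_three.2 ⟨c, d, x, hcd, hxc.symm, Ne.symm hne, rfl⟩] at h4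
      omega
    subst hxd
    rw [Walk.cons_isPath_iff] at hP
    refine ⟨P'.reverse, hP.1.reverse, by simpa using hP.2, ?_⟩
    rw [hEP]
    ext e
    have h1 : s(c, t) = s(t, c) := Sym2.eq_swap
    simp [Walk.edgeSet, h1, or_assoc]

/-- A path and a vertex off it adjacent to both ends give a cycle. -/
lemma isCyc_apex {c d s : V} {P : G.Walk c d} (hP : P.IsPath) (hs : s ∉ P.support) (hcd : c ≠ d)
    (h1 : G.Adj c s) (h2 : G.Adj s d) : IsCyc G ({s(c, s), s(s, d)} ∪ P.edgeSet) := by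
  have h := isCyc_of_path (P := Walk.cons h1.symm P) (by simp [hP, hs]) h2 (by
    simp only [Walk.edges_cons, List.mem_cons, not_or]
    refine ⟨by simp [hcd.symm, h1.ne'], fun h => hs (P.fst_mem_support_of_mem_edges h)⟩)
  convert h using 1
  ext e
  have h1 : s(c, s) = s(s, c) := Sym2.eq_swap
  simp [Walk.edgeSet, h1]
  tauto

lemma ind_apex {c d s : V} {P : G.Walk c d} (hP : P.IsPath) (hs : s ∉ P.support) (hcd : c ≠ d)
    (e : Sym2 V) : ind ({s(c, s), s(s, d)} ∪ P.edgeSet) e =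
      (if e = s(c, s) then 1 else 0) + (if e = s(s, d) then 1 else 0) + P.edges.count e := by
  have hnd := hP.isTrail.edges_nodup
  have h1 : e = s(c, s) → e ∉ P.edges := by
    rintro rfl h; exact hs (P.snd_mem_support_of_mem_edges h)
  have h2 : e = s(s, d) → e ∉ P.edges := by
    rintro rfl h; exact hs (P.fst_mem_support_of_mem_edges h)
  have h3 : e = s(c, s) → e ≠ s(s, d) := by
    rintro rfl h; rw [Sym2.eq_swap] at h; simp at h
    rcases h with h | h
    · exact hcd h
    · exact hcd (h.2.trans h.1)
  have h4 : e ∈ P.edgeSet ↔ e ∈ P.edges := Iff.rfl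
  unfold ind
  by_cases h : e ∈ P.edges
  · have a1 : e ≠ s(c, s) := fun hh => h1 hh h
    have a2 : e ≠ s(s, d) := fun hh => h2 hh h
    simp [h, a1, a2, h4, List.count_eq_one_of_mem hnd h]
  · rw [List.count_eq_zero_of_not_mem h]
    by_cases a1 : e = s(c, s)
    · have a2 := h3 a1
      rw [if_neg a2, if_pos a1, if_pos (show e ∈ ({s(c, s), s(s, d)} ∪ P.edgeSet : Set (Sym2 V)) from Or.inl (Or.inl a1))]
    · simp [a1, h, h4]

/-- A nonempty set of edges that is 2-regular and connected is a cycle. -/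
lemma isCyc_of_regular [Finite V] {E : Set (Sym2 V)} (hsub : E ⊆ G.edgeSet) (hne : E.Nonempty)
    (hdeg : ∀ p ∈ vts E, {q | s(p, q) ∈ E}.ncard = 2)
    (hconn : ∀ X : Set V, (∃ x ∈ X, x ∈ vts E) → (∀ a b, a ∈ X → s(a, b) ∈ E → b ∈ X) → vts E ⊆ X) :
    IsCyc G E := by
  let H : SimpleGraph V := ⟨fun a b => s(a, b) ∈ E, ⟨fun a b h => by
    show s(b, a) ∈ E
    rw [Sym2.eq_swap]; exact h⟩, ⟨fun a h => by
      have := hsub h; simp at this⟩⟩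
  have hadj : ∀ a b, H.Adj a b ↔ s(a, b) ∈ E := fun a b => Iff.rfl
  have hHG : H ≤ G := fun a b h => hsub h
  have hcyc : H.IsCycles := by
    intro v hv
    exact hdeg v (by obtain ⟨w, hw⟩ := hv; exact mem_vts hw)
  obtain ⟨e, he⟩ := hne
  induction e using Sym2.ind with
  | _ x y =>
    have hx : (H.connectedComponentMk x).supp = {z | H.Reachable z x} := by
      ext z; simp
    obtain ⟨c, hc, hcs⟩ := hcyc.exists_cycle_toSubgraph_verts_eq_connectedComponentSupp
      (c := H.connectedComponentMk x) (v := x) (by simp) ⟨y, he⟩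
    have hall : vts E ⊆ {z | z ∈ c.support} := by
      have : vts E ⊆ (H.connectedComponentMk x).supp := by
        refine hconn _ ⟨x, by simp, mem_vts he⟩ ?_
        intro a b ha hab
        rw [hx] at ha ⊢
        exact ((show H.Adj b a by rw [hadj, Sym2.eq_swap]; exact hab).reachable).trans ha
      intro z hz
      have := this hz
      rw [← hcs] at this
      simpa using this
    refine ⟨x, c.mapLe hHG, hc.mapLe hHG, ?_⟩
    ext e
    change e ∈ E ↔ e ∈ (c.mapLe hHG).edges
    rw [Walk.edges_mapLe_eq_edges]
    constructor
    · intro h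
      induction e using Sym2.ind with
      | _ a b =>
        have ha := hall (mem_vts h)
        have h2 := hc.ncard_neighborSet_toSubgraph_eq_two (v := a) ha
        have hs : c.toSubgraph.neighborSet a ⊆ {q | s(a, q) ∈ E} := fun q hq => hq.adj_sub
        have := Set.eq_of_subset_of_ncard_le hs (by rw [h2, hdeg a (mem_vts h)])
        have hb : b ∈ c.toSubgraph.neighborSet a := by rw [this]; exact h
        exact Walk.adj_toSubgraph_iff_mem_edges.1 hb
    · intro h
      have := c.edges_subset_edgeSet h
      induction e using Sym2.ind with
      | _ a b => exact this

lemma IsCyc.ncard_eq_length {u : V} {c : G.Walk u u} (hc : c.IsCycle) :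
    c.edgeSet.ncard = c.length := by
  have : c.edgeSet = (c.edges.toFinset : Set (Sym2 V)) := by ext; simp [Walk.edgeSet]
  rw [this, Set.ncard_coe_finset, List.toFinset_card_of_nodup hc.edges_nodup, Walk.length_edges]

lemma IsCyc.three_le {E : Set (Sym2 V)} (hE : IsCyc G E) : 3 ≤ E.ncard := by
  obtain ⟨u, c, hc, rfl⟩ := hE
  rw [IsCyc.ncard_eq_length hc]
  exact hc.three_le_length

lemma IsCyc.eq_tri {E : Set (Sym2 V)} (hE : IsCyc G E) (h3 : E.ncard = 3) {x y : V}
    (hxy : s(x, y) ∈ E) : ∃ z, E = tri x y z ∧ G.Adj x z ∧ G.Adj y z := by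
  obtain ⟨P, hP, hn, rfl⟩ := hE.edge_path hxy
  have hfin : P.edgeSet.Finite := by
    have : P.edgeSet = (P.edges.toFinset : Set (Sym2 V)) := by ext; simp [Walk.edgeSet]
    rw [this]; exact Finset.finite_toSet _
  rw [Set.ncard_insert_of_notMem (s := P.edgeSet) hn hfin] at h3
  have hl : P.length = 2 := by
    have : P.edgeSet = (P.edges.toFinset : Set (Sym2 V)) := by ext; simp [Walk.edgeSet]
    rw [this, Set.ncard_coe_finset, List.toFinset_card_of_nodup hP.isTrail.edges_nodup,
      Walk.length_edges] at h3
    omega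
  match P, hl with
  | .cons (v := z) h1 (.cons h2 .nil), _ =>
    refine ⟨z, ?_, h1, h2.symm⟩
    ext e
    have : s(z, y) = s(y, z) := Sym2.eq_swap
    simp [tri, Walk.edgeSet, this]
    tauto

end CycTools

/-! ### Vertex links in triangulations -/

section Triang
variable {V : Type} {G : SimpleGraph V} [Fintype V]

/-- The faces cover every edge twice. -/
lemma P4.sum_ncard (hG : P4 G) : ∑ F ∈ fs G, F.ncard = 2 * G.edgeSet.ncard := by
  have h1 : ∀ F ∈ fs G, F.ncard = ∑ e ∈ G.edgeFinset, ind F e := by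
    intro F hF
    have : F = ((G.edgeFinset.filter (fun e => e ∈ F) : Finset (Sym2 V)) : Set (Sym2 V)) := by
      ext e
      simp only [Finset.coe_filter, mem_edgeFinset, Set.mem_ofPred_eq]
      exact ⟨fun h => ⟨(mem_fs.1 hF).cyc.subset h, h⟩, fun h => h.2⟩
    unfold ind
    rw [Finset.sum_boole]
    conv_lhs => rw [this]
    rw [Set.ncard_coe_finset]; simp
  rw [Finset.sum_congr rfl h1, Finset.sum_comm]
  have h2 : ∀ e ∈ G.edgeFinset, ∑ F ∈ fs G, ind F e = 2 := by
    intro e he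
    unfold ind
    rw [Finset.sum_boole]
    simpa using hG.card_filter (mem_edgeFinset.1 he)
  rw [Finset.sum_congr rfl h2, Finset.sum_const, ← Set.ncard_coe_finset, coe_edgeFinset, smul_eq_mul,
    mul_comm]

/-- A 4-connected planar triangulation. -/
structure Tri4 (G : SimpleGraph V) : Prop extends P4 G where
  m : G.edgeSet.ncard + 6 = 3 * Fintype.card V

lemma Tri4.face3 (hG : Tri4 G) {F : Set (Sym2 V)} (hF : IsFace G F) : F.ncard = 3 := by
  have h1 := hG.toP4.sum_ncard
  have h2 := hG.toP4.euler
  have h3 := hG.m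
  have h4 : ∀ F ∈ fs G, 3 ≤ F.ncard := fun F hF => (mem_fs.1 hF).cyc.three_le
  have h5 : ∑ F ∈ fs G, 3 = 3 * (fs G).card := by simp [mul_comm]
  have h6 := Finset.sum_le_sum h4
  have h7 : ∑ F ∈ fs G, 3 = ∑ F ∈ fs G, F.ncard := by omega
  exact ((Finset.sum_eq_sum_iff_of_le h4).1 h7 F (mem_fs.2 hF)).symm

lemma tri_inj {x y z z' : V} (h : tri x y z = tri x y z') (hx : x ≠ z) (hy : y ≠ z) : z = z' := by
  have : z ∈ vts (tri x y z') := by rw [← h, vts_tri]; simp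
  rw [vts_tri] at this
  rcases this with h | h | h
  exacts [absurd h hx.symm, absurd h hy.symm, h]

/-- Adjacent vertices have exactly two common neighbours. -/
lemma Tri4.common (hG : Tri4 G) {x y : V} (h : G.Adj x y) :
    ∃ z z', z ≠ z' ∧ G.Adj x z ∧ G.Adj y z ∧ G.Adj x z' ∧ G.Adj y z' ∧
      ∀ w, G.Adj x w → G.Adj y w → w = z ∨ w = z' := by
  obtain ⟨C, D, hC, hD, hne, h1, h2, h3⟩ := hG.toP4.exactly_two (e := s(x, y)) h
  obtain ⟨z, rfl, hz1, hz2⟩ := hC.cyc.eq_tri (hG.face3 hC) h1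
  obtain ⟨z', rfl, hz1', hz2'⟩ := hD.cyc.eq_tri (hG.face3 hD) h2
  refine ⟨z, z', fun hh => hne (by rw [hh]), hz1, hz2, hz1', hz2', fun w hw1 hw2 => ?_⟩
  rcases h3 _ (hG.toP4.face_tri h hw2 hw1) (by simp [tri]) with h | h
  · exact Or.inl (tri_inj h hw1.ne hw2.ne)
  · exact Or.inr (tri_inj h hw1.ne hw2.ne)

lemma Tri4.common_three (hG : Tri4 G) {x y a b c : V} (h : G.Adj x y) (ha : G.Adj x a)
    (ha' : G.Adj y a) (hb : G.Adj x b) (hb' : G.Adj y b) (hc : G.Adj x c) (hc' : G.Adj y c)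
    (hab : a ≠ b) : c = a ∨ c = b := by
  obtain ⟨z, z', -, -, -, -, -, hz⟩ := hG.common h
  rcases hz a ha ha' with rfl | rfl <;> rcases hz b hb hb' with rfl | rfl <;>
    rcases hz c hc hc' with rfl | rfl <;> simp_all

/-- Neighbourhoods are connected through triangles. -/
lemma Tri4.nbr_subset (hG : Tri4 G) {q x : V} {X : Set V} (hx : x ∈ X) (hqx : G.Adj q x)
    (hcl : ∀ a b, a ∈ X → G.Adj q a → G.Adj q b → G.Adj a b → b ∈ X) {h : V} (hh : G.Adj q h) :
    h ∈ X := by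
  by_contra hhX
  refine hG.toP4.rot_conn hx hqx hhX hh fun F hF a b ha hb haX => ?_
  have hqa := hF.cyc.subset ha
  have hqb := hF.cyc.subset hb
  by_cases hab : a = b
  · exact hab ▸ haX
  obtain ⟨z, hz, h1, h2⟩ := hF.cyc.eq_tri (hG.face3 hF) ha
  have hbv : b ∈ vts F := mem_vts' hb
  rw [hz, vts_tri] at hbv
  rcases hbv with h | h | h
  · exact absurd h (Ne.symm (G.ne_of_adj hqb))
  · exact absurd h.symm hab
  · have h : b = z := h
    exact hcl a b haX hqa hqb (h ▸ h2)

/-- The link of a vertex: the edges that span a triangle with it. -/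
def lk (G : SimpleGraph V) (v : V) : Set (Sym2 V) :=
  {e | e ∈ G.edgeSet ∧ ∀ a ∈ e, G.Adj v a}

lemma mem_lk {v a b : V} : s(a, b) ∈ lk G v ↔ G.Adj a b ∧ G.Adj v a ∧ G.Adj v b := by
  simp [lk]

lemma not_mem_lk {v b : V} : s(v, b) ∉ lk G v := fun h => by simpa using (mem_lk.1 h).2.1

lemma Tri4.vts_lk (hG : Tri4 G) {v a : V} : a ∈ vts (lk G v) ↔ G.Adj v a := by
  rw [mem_vts_iff]
  constructor
  · rintro ⟨y, h⟩; exact (mem_lk.1 h).2.1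
  · intro h
    obtain ⟨z, -, -, h1, h2, -⟩ := hG.common h
    exact ⟨z, mem_lk.2 ⟨h2, h, h1⟩⟩

lemma Tri4.isCyc_lk (hG : Tri4 G) (v : V) : IsCyc G (lk G v) := by
  have hdeg := hG.toP4.deg_ge v
  obtain ⟨w, hw⟩ : {w | G.Adj v w}.Nonempty := by
    rw [Set.nonempty_iff_ne_empty]; intro h; rw [h] at hdeg; simp at hdeg
  refine isCyc_of_regular (fun e h => h.1) ?_ ?_ ?_
  · obtain ⟨y, h⟩ := mem_vts_iff.1 (hG.vts_lk.2 hw)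
    exact ⟨_, h⟩
  · intro p hp
    rw [hG.vts_lk] at hp
    obtain ⟨z, z', hne, h1, h2, h3, h4, h5⟩ := hG.common hp
    rw [Set.ncard_eq_two]
    refine ⟨z, z', hne, ?_⟩
    ext q
    simp only [Set.mem_ofPred_eq, mem_lk, Set.mem_insert_iff, Set.mem_singleton_iff]
    constructor
    · rintro ⟨a, b, c⟩; exact h5 q c a
    · rintro (rfl | rfl)
      exacts [⟨h2, hp, h1⟩, ⟨h4, hp, h3⟩]
  · rintro X ⟨x, hx, hxv⟩ hcl h hh
    rw [hG.vts_lk] at hxv hh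
    exact hG.nbr_subset hx hxv (fun a b ha hqa hqb hab => hcl a b ha (mem_lk.2 ⟨hab, hqa, hqb⟩)) hh

/-- The links cover every edge twice. -/
lemma Tri4.sum_lk (hG : Tri4 G) {e : Sym2 V} (he : e ∈ G.edgeSet) :
    ∑ v, ind (lk G v) e = 2 := by
  induction e using Sym2.ind with
  | _ x y =>
    have he : G.Adj x y := he
    obtain ⟨z, z', hne, h1, h2, h3, h4, h5⟩ := hG.common he
    unfold ind
    rw [Finset.sum_boole]
    have : (Finset.univ.filter (fun v => s(x, y) ∈ lk G v)) = {z, z'} := by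
      ext v
      simp only [Finset.mem_filter, Finset.mem_univ, true_and, mem_lk, Finset.mem_insert,
        Finset.mem_singleton]
      constructor
      · rintro ⟨-, a, b⟩; exact h5 v a.symm b.symm
      · rintro (rfl | rfl)
        exacts [⟨he, h1.symm, h2.symm⟩, ⟨he, h3.symm, h4.symm⟩]
    rw [this, Finset.card_pair hne]; rfl

/-- The link of `s` with the vertex `t` replaced by `s`. -/
def sw (G : SimpleGraph V) (s t : V) : Set (Sym2 V) :=
  lk G s \ {e | e ∈ lk G s ∧ t ∈ e} ∪ {e | ∃ c, G.Adj s c ∧ G.Adj t c ∧ e = s(s, c)}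

lemma sw_ind {s t : V} (h : G.Adj s t) (e : Sym2 V) :
    ind (sw G s t) e + ind (sw G t s) e = ind (lk G s) e + ind (lk G t) e := by
  have key : ∀ s t : V, G.Adj s t → {e | e ∈ lk G s ∧ t ∈ e} = {e | ∃ c, G.Adj t c ∧ G.Adj s c ∧ e = s(t, c)} := by
    intro s t h
    ext e
    constructor
    · rintro ⟨he, ht⟩
      obtain ⟨c, rfl⟩ := Sym2.mem_iff_exists.1 ht
      exact ⟨c, (mem_lk.1 he).1, (mem_lk.1 he).2.2, rfl⟩
    · rintro ⟨c, h1, h2, rfl⟩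
      exact ⟨mem_lk.2 ⟨h1, h, h2⟩, by simp⟩
  have h1 := ind_sdiff_union (E := lk G s) (A := {e | e ∈ lk G s ∧ t ∈ e})
    (B := {e | ∃ c, G.Adj s c ∧ G.Adj t c ∧ e = s(s, c)}) (fun e h => h.1) (by
      rintro e ⟨c, -, -, rfl⟩ h; exact not_mem_lk h) e
  have h2 := ind_sdiff_union (E := lk G t) (A := {e | e ∈ lk G t ∧ s ∈ e})
    (B := {e | ∃ c, G.Adj t c ∧ G.Adj s c ∧ e = s(t, c)}) (fun e h => h.1) (by
      rintro e ⟨c, -, -, rfl⟩ h; exact not_mem_lk h) e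
  rw [key s t h] at h1
  rw [key t s h.symm] at h2
  unfold sw
  rw [key s t h, key t s h.symm]
  omega

lemma Tri4.isCyc_sw (hG : Tri4 G) {s t : V} (h : G.Adj s t) : IsCyc G (sw G s t) := by
  obtain ⟨c, d, hne, h1, h2, h3, h4, h5⟩ := hG.common h
  obtain ⟨P, hP, htP, hE⟩ := (hG.isCyc_lk s).vertex_path (c := c) (t := t) (d := d)
    (mem_lk.2 ⟨h2.symm, h1, h⟩) (mem_lk.2 ⟨h4, h, h3⟩) hne
  have hsP : s ∉ P.support := by
    intro hs
    have : s ∈ vts (lk G s) := by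
      rw [hE, vts_union, vts_edgeSet (not_nil_of_ne' hne)]; exact Or.inr hs
    rw [hG.vts_lk] at this
    simp at this
  have := isCyc_apex hP hsP hne h1.symm h3
  convert this using 1
  ext e
  have hPe : e ∈ P.edgeSet ↔ e ∈ lk G s ∧ t ∉ e := by
    constructor
    · intro he
      refine ⟨by rw [hE]; exact Or.inr he, fun ht => ?_⟩
      obtain ⟨c, rfl⟩ := Sym2.mem_iff_exists.1 ht
      exact htP (P.fst_mem_support_of_mem_edges he)
    · rintro ⟨he, ht⟩
      rw [hE] at he
      rcases he with (rfl | rfl) | he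
      · simp at ht
      · simp at ht
      · exact he
  have hB : (∃ c, G.Adj s c ∧ G.Adj t c ∧ e = s(s, c)) ↔ e = s(c, s) ∨ e = s(s, d) := by
    constructor
    · rintro ⟨z, hz1, hz2, rfl⟩
      rcases h5 z hz1 hz2 with rfl | rfl
      · left; exact Sym2.eq_swap
      · right; rfl
    · rintro (rfl | rfl)
      exacts [⟨c, h1, h2, Sym2.eq_swap⟩, ⟨d, h3, h4, rfl⟩]
  simp only [sw, Set.mem_union, Set.mem_sdiff, Set.mem_ofPred_eq, hPe, hB, Set.mem_insert_iff,
    Set.mem_singleton_iff]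
  tauto

/-- A swapped link is never a link. -/
lemma Tri4.sw_ne_lk (hG : Tri4 G) {a b s : V} (h : G.Adj a b) : sw G a b ≠ lk G s := by
  intro heq
  obtain ⟨c, d, hne, h1, h2, h3, h4, h5⟩ := hG.common h
  have hac : s(a, c) ∈ lk G s := by rw [← heq]; exact Or.inr ⟨c, h1, h2, rfl⟩
  obtain ⟨-, hsa, hsc⟩ := mem_lk.1 hac
  by_cases hsb : s = b
  · subst hsb
    have hdeg := hG.toP4.deg_ge a
    obtain ⟨r, hr, hr'⟩ : ∃ r, G.Adj a r ∧ r ∉ ({s, c, d} : Set V) := by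
      by_contra hcon
      push Not at hcon
      have := Set.ncard_le_ncard (s := {w | G.Adj a w}) (t := {s, c, d}) hcon
      have := ncard_three_le s c d
      omega
    simp only [Set.mem_insert_iff, Set.mem_singleton_iff, not_or] at hr'
    obtain ⟨z, z', hzz, g1, g2, g3, g4, g5⟩ := hG.common hr
    -- an edge at `r` in the link of `a` that avoids `s`
    have : ∃ z, z ≠ s ∧ G.Adj a z ∧ G.Adj r z := by
      by_cases hz : z = s
      · exact ⟨z', fun h => hzz (hz.trans h.symm), g3, g4⟩
      · exact ⟨z, hz, g1, g2⟩
    obtain ⟨z, hz, k1, k2⟩ := this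
    have : s(r, z) ∈ lk G s := by
      rw [← heq]
      refine Or.inl ⟨mem_lk.2 ⟨k2, hr, k1⟩, fun hh => ?_⟩
      have := hh.2
      simp only [Sym2.mem_iff] at this
      rcases this with h | h
      exacts [hr'.1 h.symm, hz h.symm]
    rcases h5 r hr (mem_lk.1 this).2.1 with h | h
    exacts [hr'.2.1 h, hr'.2.2 h]
  · have : s(s, c) ∈ lk G s := by
      conv => rw [← heq]
      refine Or.inl ⟨mem_lk.2 ⟨hsc, hsa.symm, h1⟩, fun hh => ?_⟩
      have := hh.2
      simp only [Sym2.mem_iff] at this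
      rcases this with h | h
      exacts [hsb h.symm, h2.ne h]
    exact not_mem_lk this

end Triang

/-! ### Saving one cycle in the cover by links -/

section Save
variable {V : Type} {G : SimpleGraph V} [Fintype V]

lemma Tri4.lk_path (hG : Tri4 G) {v c t d : V} (hvt : G.Adj v t) (hvc : G.Adj v c) (hvd : G.Adj v d)
    (hct : G.Adj c t) (htd : G.Adj t d) (hcd : c ≠ d) :
    ∃ P : G.Walk c d, P.IsPath ∧ t ∉ P.support ∧ (∀ x ∈ P.support, G.Adj v x) ∧
      (∀ e ∈ P.edges, e ∈ lk G v) ∧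
      ∀ e, ind (lk G v) e =
        (if e = s(c, t) then 1 else 0) + (if e = s(t, d) then 1 else 0) + P.edges.count e := by
  obtain ⟨P, hP, htP, hE⟩ := (hG.isCyc_lk v).vertex_path (c := c) (t := t) (d := d)
    (mem_lk.2 ⟨hct, hvc, hvt⟩) (mem_lk.2 ⟨htd, hvt, hvd⟩) hcd
  refine ⟨P, hP, htP, fun x hx => ?_, fun e he => ?_, fun e => ?_⟩
  · rw [← hG.vts_lk, hE, vts_union, vts_edgeSet (not_nil_of_ne' hcd)]
    exact Or.inr hx
  · rw [hE]; exact Or.inr he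
  · rw [hE]; exact ind_apex hP htP hcd e

/-- The links of the vertices of some triangle `u v w` can be replaced by two cycles, neither of which
is the link of another vertex. -/
lemma Tri4.save (hG : Tri4 G) : ∃ u v w : V, G.Adj u v ∧ G.Adj v w ∧ G.Adj u w ∧
    ∃ Z1 Z2 : Set (Sym2 V), IsCyc G Z1 ∧ IsCyc G Z2 ∧
      (∀ e, ind Z1 e + ind Z2 e = ind (lk G u) e + ind (lk G v) e + ind (lk G w) e) ∧
      ∀ s, s ≠ u → s ≠ v → s ≠ w → Z1 ≠ lk G s ∧ Z2 ≠ lk G s := by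
  obtain ⟨w⟩ := hG.toP4.connected.nonempty
  have hdeg := hG.toP4.deg_ge w
  obtain ⟨u, hwu⟩ : {u | G.Adj w u}.Nonempty := by
    rw [Set.nonempty_iff_ne_empty]; intro h; rw [h] at hdeg; simp at hdeg
  have hwu : G.Adj w u := hwu
  obtain ⟨v, b, hvb, hwv, huv, hwb, hub, hwu5⟩ := hG.common hwu
  obtain ⟨a, hau, hwa, hva⟩ : ∃ a, a ≠ u ∧ G.Adj w a ∧ G.Adj v a := by
    obtain ⟨z, z', hzz, g1, g2, g3, g4, -⟩ := hG.common hwv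
    by_cases hz : z = u
    · exact ⟨z', fun h => hzz (hz.trans h.symm), g3, g4⟩
    · exact ⟨z, hz, g1, g2⟩
  have hua : ¬ G.Adj u a := fun h => hG.toP4.no_K4 huv h hwu.symm hva hwv.symm hwa.symm
  have hvb' : ¬ G.Adj v b := fun h => hG.toP4.no_K4 huv hub hwu.symm h hwv.symm hwb.symm
  have hab : a ≠ b := fun h => hua (h ▸ hub)
  have hwv5 : ∀ x, G.Adj w x → G.Adj v x → x = u ∨ x = a := fun x h1 h2 =>
    hG.common_three hwv hwu huv.symm hwa hva h1 h2 hau.symm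
  -- The link of `w` is `b u v a` followed by a path `R` from `a` to `b`.
  obtain ⟨R, hR, huR, hvR, hRw, hRe⟩ : ∃ R : G.Walk a b, R.IsPath ∧ u ∉ R.support ∧ v ∉ R.support ∧
      (∀ x ∈ R.support, G.Adj w x) ∧ ∀ e, ind (lk G w) e = (if e = s(b, u) then 1 else 0) +
        (if e = s(u, v) then 1 else 0) + (if e = s(v, a) then 1 else 0) + R.edges.count e := by
    obtain ⟨P, hP, huP, hPw, hPl, hPe⟩ := hG.lk_path hwu hwb hwv hub.symm huv hvb.symm
    have hP' := hP.reverse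
    have huP' : u ∉ P.reverse.support := by simpa using huP
    have hPw' : ∀ x ∈ P.reverse.support, G.Adj w x := by simpa using hPw
    have hPe' : ∀ e, P.edges.count e = P.reverse.edges.count e := by simp
    have hPl' : ∀ e ∈ P.reverse.edges, e ∈ lk G w := by simpa using hPl
    generalize P.reverse = P' at *
    cases P' with
    | nil => exact absurd rfl hvb
    | cons h R =>
      rename_i y
      have hy : y = a := by
        have hyw := hPw' y (by simp)
        rcases hwv5 y hyw h with rfl | rfl
        · simp at huP'
        · rfl
      subst hy
      rw [Walk.cons_isPath_iff] at hP'
      refine ⟨R, hP'.1, fun h => huP' (by simp [h]), hP'.2, fun x hx => hPw' x (by simp [hx]), ?_⟩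
      intro e
      rw [hPe, hPe', Walk.edges_cons, List.count_cons]
      simp only [beq_iff_eq, eq_comm (a := s(v, y))]
      ring
  obtain ⟨Q, hQ, hwQ, hQv, -, hQe⟩ := hG.lk_path (v := v) (c := a) (t := w) (d := u) hwv.symm hva
    huv.symm hwa.symm hwu hau
  obtain ⟨Q2, hQ2, hwQ2, hQ2u, -, hQ2e⟩ := hG.lk_path (v := u) (c := v) (t := w) (d := b) hwu.symm huv
    hub hwv.symm hwb hvb
  have hT : (R.reverse.append Q).IsPath := by
    refine append_isPath hR.reverse hQ fun x hx hx' => ?_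
    have hx : x ∈ R.support := by simpa using hx
    rcases hwv5 x (hRw x hx) (hQv x hx') with rfl | rfl
    · exact absurd hx huR
    · rfl
  have hwR : w ∉ R.support := fun h => by simpa using hRw w h
  have hvQ : v ∉ Q.support := fun h => by simpa using hQv v h
  have huQ2 : u ∉ Q2.support := fun h => by simpa using hQ2u u h
  have haQ2 : a ∉ Q2.support := fun h => hua (hQ2u a h)
  have hT' : (Walk.cons hwb (R.reverse.append Q)).IsPath := by
    simp [hT, Walk.mem_support_append_iff, hwR, hwQ]
  have hT2 : (Walk.cons hwa (Walk.cons hva.symm Q2)).IsPath := by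
    simp [hQ2, haQ2, hwQ2, hwa.ne]
  have hvT : v ∉ (Walk.cons hwb (R.reverse.append Q)).support := by
    simp [Walk.mem_support_append_iff, hvR, hvQ, hwv.ne']
  have huT2 : u ∉ (Walk.cons hwa (Walk.cons hva.symm Q2)).support := by
    simp [huQ2, hwu.ne', hau.symm]
  refine ⟨u, v, w, huv, hwv.symm, hwu.symm, _, _, isCyc_apex hT' hvT hwu.ne hwv huv.symm,
    isCyc_apex hT2 huT2 hwb.ne hwu hub, fun e => ?_, fun s hsu hsv hsw => ⟨fun h => ?_, fun h => ?_⟩⟩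
  · rw [ind_apex hT' hvT hwu.ne, ind_apex hT2 huT2 hwb.ne, hRe, hQe, hQ2e]
    simp only [Walk.edges_cons, Walk.edges_append, Walk.edges_reverse, List.count_cons,
      List.count_append, List.count_reverse, beq_iff_eq]
    simp only [eq_comm (b := e)]
    rw [show s(v, u) = s(u, v) from Sym2.eq_swap, show s(b, u) = s(u, b) from Sym2.eq_swap,
      show s(v, w) = s(w, v) from Sym2.eq_swap, show s(v, a) = s(a, v) from Sym2.eq_swap,
      show s(a, w) = s(w, a) from Sym2.eq_swap]
    ring
  · have h1 : s(w, v) ∈ lk G s := by rw [← h]; simp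
    have h2 : s(v, u) ∈ lk G s := by rw [← h]; simp
    rw [mem_lk] at h1 h2
    rcases hwv5 s h1.2.1.symm h1.2.2.symm with h | h
    · exact hsu h
    · exact hua (h ▸ h2.2.2.symm)
  · have h1 : s(w, u) ∈ lk G s := by rw [← h]; simp
    have h2 : s(u, b) ∈ lk G s := by rw [← h]; simp
    rw [mem_lk] at h1 h2
    rcases hwu5 s h1.2.1.symm h1.2.2.symm with h | h
    · exact hsv h
    · subst h; simpa using h2.2.2

/-- If two adjacent vertices both have a twin (another vertex with the same link), then there are at
most six vertices, as in the octahedron. -/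
lemma Tri4.twins (hG : Tri4 G) {s t x y : V} (hst : G.Adj s t) (hsx : s ≠ x) (hty : t ≠ y)
    (hx : lk G x = lk G s) (hy : lk G y = lk G t) :
    ∃ c d, ∀ z, z = s ∨ z = t ∨ z = x ∨ z = y ∨ z = c ∨ z = d := by
  have hNx : ∀ z, G.Adj x z ↔ G.Adj s z := fun z => by rw [← hG.vts_lk, hx, hG.vts_lk]
  have hNy : ∀ z, G.Adj y z ↔ G.Adj t z := fun z => by rw [← hG.vts_lk, hy, hG.vts_lk]
  obtain ⟨c, d, hcd, h1, h2, h3, h4, h5⟩ := hG.common hst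
  have hxt : G.Adj x t := (hNx t).2 hst
  have hys : G.Adj y s := (hNy s).2 hst.symm
  have hyx : G.Adj y x := (hNy x).2 hxt.symm
  have hxc := (hNx c).2 h1
  have hxd := (hNx d).2 h3
  have hyc := (hNy c).2 h2
  have hyd := (hNy d).2 h4
  have ht : ∀ z, G.Adj t z → z ∈ ({s, c, x, d} : Set V) := fun z hz => by
    refine hG.nbr_subset (x := s) (by simp) hst.symm ?_ hz
    rintro p q (rfl | rfl | rfl | rfl) hp hq hpq
    · rcases h5 q hpq hq with rfl | rfl <;> simp
    · rcases hG.common_three hp hst.symm h1.symm hxt.symm hxc.symm hq hpq hsx with rfl | rfl <;> simp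
    · rcases h5 q ((hNx q).1 hpq) hq with rfl | rfl <;> simp
    · rcases hG.common_three hp hst.symm h3.symm hxt.symm hxd.symm hq hpq hsx with rfl | rfl <;> simp
  have hs : ∀ z, G.Adj s z → z ∈ ({t, c, y, d} : Set V) := fun z hz => by
    refine hG.nbr_subset (x := t) (by simp) hst ?_ hz
    rintro p q (rfl | rfl | rfl | rfl) hp hq hpq
    · rcases h5 q hq hpq with rfl | rfl <;> simp
    · rcases hG.common_three hp hst h2.symm hys.symm hyc.symm hq hpq hty with rfl | rfl <;> simp
    · rcases h5 q hq ((hNy q).1 hpq) with rfl | rfl <;> simp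
    · rcases hG.common_three hp hst h4.symm hys.symm hyd.symm hq hpq hty with rfl | rfl <;> simp
  have hcc : ∀ c, G.Adj s c → G.Adj t c → G.Adj x c → G.Adj y c →
      ∀ z, G.Adj c z → z ∈ ({s, t, x, y} : Set V) := fun c e1 e2 e3 e4 z hz => by
    refine hG.nbr_subset (x := s) (by simp) e1.symm ?_ hz
    rintro p q (rfl | rfl | rfl | rfl) hp hq hpq
    · rcases hG.common_three hp e2.symm hst e4.symm hys.symm hq hpq hty with rfl | rfl <;> simp
    · rcases hG.common_three hp e1.symm hst.symm e3.symm hxt.symm hq hpq hsx with rfl | rfl <;> simp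
    · rcases hG.common_three hp e2.symm hxt e4.symm hyx.symm hq hpq hty with rfl | rfl <;> simp
    · rcases hG.common_three hp e1.symm hys e3.symm hyx hq hpq hsx with rfl | rfl <;> simp
  refine ⟨c, d, fun z => ?_⟩
  by_contra hz
  obtain ⟨W⟩ := hG.toP4.connected.preconnected s z
  obtain ⟨p, hp, q, hq, -, -, hpq⟩ := exit_edge (E := G.edgeSet)
    (T := {z | z = s ∨ z = t ∨ z = x ∨ z = y ∨ z = c ∨ z = d}) W (fun e he => W.edges_subset_edgeSet he)
    (Or.inl rfl) hz
  apply hq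
  simp only [Set.mem_insert_iff, Set.mem_singleton_iff] at ht hs hcc
  have hpq : G.Adj p q := hpq
  simp only [Set.mem_ofPred_eq]
  rcases hp with rfl | rfl | rfl | rfl | rfl | rfl
  · rcases hs q hpq with h | h | h | h <;> simp [h]
  · rcases ht q hpq with h | h | h | h <;> simp [h]
  · rcases hs q ((hNx q).1 hpq) with h | h | h | h <;> simp [h]
  · rcases ht q ((hNy q).1 hpq) with h | h | h | h <;> simp [h]
  · rcases hcc p h1 h2 hxc hyc q hpq with h | h | h | h <;> simp [h]
  · rcases hcc p h3 h4 hxd hyd q hpq with h | h | h | h <;> simp [h]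

end Save

/-! ### Exponentially many covers of a triangulation -/

section Expo
variable {V : Type} {G : SimpleGraph V} [Fintype V]

/-- `M` is a set of (oriented) edges off `K` that are pairwise disjoint. -/
structure Mt (G : SimpleGraph V) (K : Finset V) (M : Finset (V × V)) : Prop where
  adj : ∀ p ∈ M, G.Adj p.1 p.2
  off : ∀ p ∈ M, p.1 ∉ K ∧ p.2 ∉ K
  dis : ∀ p ∈ M, ∀ q ∈ M, p ≠ q → p.1 ≠ q.1 ∧ p.1 ≠ q.2 ∧ p.2 ≠ q.1 ∧ p.2 ≠ q.2

/-- A maximal matching off a triangle of a triangulation has linear size: the uncovered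
vertices are independent and have degree at least four. -/
lemma Tri4.exists_matching (hG : Tri4 G) {u v w : V} (huv : G.Adj u v) (hvw : G.Adj v w)
    (huw : G.Adj u w) : ∃ M, Mt G {u, v, w} M ∧ Fintype.card V ≤ 8 * M.card + 3 := by
  obtain ⟨M, hM, hmax⟩ := (Set.toFinite {M | Mt G {u, v, w} M}).exists_maximalFor
    (fun M => M.card) _ ⟨∅, by constructor <;> simp⟩
  have hM : Mt G {u, v, w} M := hM
  refine ⟨M, hM, ?_⟩
  set I : Finset V := Finset.univ \ ({u, v, w} ∪ (M.image Prod.fst ∪ M.image Prod.snd)) with hI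
  have hImem : ∀ x ∈ I, x ∉ ({u, v, w} : Finset V) ∧ ∀ p ∈ M, p.1 ≠ x ∧ p.2 ≠ x := by
    intro x hx
    simp only [hI, Finset.mem_sdiff, Finset.mem_univ, true_and, Finset.mem_union, not_or] at hx
    refine ⟨hx.1, fun p hp => ⟨fun h => ?_, fun h => ?_⟩⟩
    · exact hx.2.1 (Finset.mem_image.2 ⟨p, hp, h⟩)
    · exact hx.2.2 (Finset.mem_image.2 ⟨p, hp, h⟩)
  have hind : ∀ x ∈ I, ∀ y ∈ I, ¬ G.Adj x y := by
    intro x hx y hy hxy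
    obtain ⟨hx1, hx2⟩ := hImem x hx
    obtain ⟨hy1, hy2⟩ := hImem y hy
    have hnew : (x, y) ∉ M := fun h => (hx2 _ h).1 rfl
    have : Mt G {u, v, w} (insert (x, y) M) := by
      refine ⟨?_, ?_, ?_⟩
      · intro p hp
        rcases Finset.mem_insert.1 hp with rfl | hp
        exacts [hxy, hM.adj p hp]
      · intro p hp
        rcases Finset.mem_insert.1 hp with rfl | hp
        exacts [⟨hx1, hy1⟩, hM.off p hp]
      · intro p hp q hq hpq
        rcases Finset.mem_insert.1 hp with rfl | hp <;> rcases Finset.mem_insert.1 hq with rfl | hq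
        · exact absurd rfl hpq
        · exact ⟨(hx2 q hq).1.symm, (hx2 q hq).2.symm, (hy2 q hq).1.symm, (hy2 q hq).2.symm⟩
        · exact ⟨(hx2 p hp).1, (hy2 p hp).1, (hx2 p hp).2, (hy2 p hp).2⟩
        · exact hM.dis p hp q hq hpq
    have h1 : (insert (x, y) M).card ≤ M.card := hmax this
      (show M.card ≤ (insert (x, y) M).card by rw [Finset.card_insert_of_notMem hnew]; omega)
    rw [Finset.card_insert_of_notMem hnew] at h1
    omega
  have hdeg : ∀ x, 4 ≤ (G.incidenceFinset x).card := by
    intro x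
    rw [card_incidenceFinset_eq_degree, ← card_neighborFinset_eq_degree, ← Set.ncard_coe_finset,
      coe_neighborFinset]
    exact hG.toP4.deg_ge x
  have hE : 4 * I.card + 3 ≤ G.edgeSet.ncard := by
    have hT : ({s(u, v), s(v, w), s(u, w)} : Finset (Sym2 V)).card = 3 := by
      rw [Finset.card_eq_three]
      refine ⟨_, _, _, ?_, ?_, ?_, rfl⟩ <;>
        simp [huv.ne, hvw.ne, huw.ne, huv.ne', hvw.ne', huw.ne']
    have hB : 4 * I.card ≤ (I.biUnion (fun x => G.incidenceFinset x)).card := by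
      rw [Finset.card_biUnion, mul_comm, ← smul_eq_mul]
      · exact Finset.card_nsmul_le_sum _ _ _ fun x _ => hdeg x
      · intro x hx y hy hxy
        refine Finset.disjoint_left.2 ?_
        intro e he he'
        rw [mem_incidenceFinset] at he he'
        have := (Sym2.mem_and_mem_iff hxy).1 ⟨he.2, he'.2⟩
        subst this
        exact hind x hx y hy he.1
    rw [← coe_edgeFinset, Set.ncard_coe_finset]
    have hd : Disjoint (I.biUnion (fun x => G.incidenceFinset x)) {s(u, v), s(v, w), s(u, w)} := by
      rw [Finset.disjoint_left]
      intro e he he'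
      obtain ⟨x, hx, he⟩ := Finset.mem_biUnion.1 he
      rw [mem_incidenceFinset] at he
      have hxe := he.2
      have h1 := (hImem x hx).1
      simp only [Finset.mem_insert, Finset.mem_singleton, not_or] at he' h1
      rcases he' with rfl | rfl | rfl <;> simp [h1.1, h1.2.1, h1.2.2] at hxe
    have := Finset.card_le_card (s := I.biUnion (fun x => G.incidenceFinset x) ∪ {s(u, v), s(v, w), s(u, w)})
      (t := G.edgeFinset) (by
        intro e he
        rw [mem_edgeFinset]
        rcases Finset.mem_union.1 he with he | he
        · obtain ⟨x, hx, he⟩ := Finset.mem_biUnion.1 he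
          rw [mem_incidenceFinset] at he
          exact he.1
        · simp only [Finset.mem_insert, Finset.mem_singleton] at he
          rcases he with rfl | rfl | rfl
          exacts [huv, hvw, huw])
    rw [Finset.card_union_of_disjoint hd, hT] at this
    omega
  have hc : Fintype.card V ≤ I.card + (3 + (M.card + M.card)) := by
    have h1 := Finset.le_card_sdiff ({u, v, w} ∪ (M.image Prod.fst ∪ M.image Prod.snd)) Finset.univ
    rw [Finset.card_univ] at h1
    have h2 := Finset.card_union_le {u, v, w} (M.image Prod.fst ∪ M.image Prod.snd)
    have h3 := Finset.card_union_le (M.image Prod.fst) (M.image Prod.snd)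
    have h4 := Finset.card_image_le (s := M) (f := Prod.fst)
    have h5 := Finset.card_image_le (s := M) (f := Prod.snd)
    have h6 : ({u, v, w} : Finset V).card ≤ 3 := Finset.card_le_three
    rw [← hI] at h1
    omega
  have := hG.m
  omega

lemma countP_map_ind {ι : Type*} (s : Finset ι) (f : ι → Set (Sym2 V)) (e : Sym2 V) :
    (s.val.map f).countP (fun C => e ∈ C) = ∑ i ∈ s, ind (f i) e := by
  unfold ind
  rw [Finset.sum_boole, Multiset.countP_map]
  rfl

/-- The vertices off `K` that are not covered by `A`. -/
noncomputable def unc (K : Finset V) (A : Finset (V × V)) : Finset V :=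
  (Finset.univ \ K) \ (A.image Prod.fst ∪ A.image Prod.snd)

/-- The cover obtained from the links by replacing those of `K` by `Z1`, `Z2` and by swapping the
links along the edges in `A`. -/
noncomputable def swCover (G : SimpleGraph V) (K : Finset V) (Z1 Z2 : Set (Sym2 V))
    (A : Finset (V × V)) : Multiset (Set (Sym2 V)) :=
  Z1 ::ₘ Z2 ::ₘ ((unc K A).val.map (lk G) + (A.val.map (fun p => sw G p.1 p.2) +
    A.val.map (fun p => sw G p.2 p.1)))

lemma Mt.mono {K : Finset V} {M A : Finset (V × V)} (h : Mt G K M) (hA : A ⊆ M) : Mt G K A :=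
  ⟨fun p hp => h.adj p (hA hp), fun p hp => h.off p (hA hp),
    fun p hp q hq => h.dis p (hA hp) q (hA hq)⟩

lemma Mt.sum {K : Finset V} {A : Finset (V × V)} (h : Mt G K A) (g : V → ℕ) :
    ∑ x, g x = ∑ x ∈ K, g x + (∑ x ∈ unc K A, g x + (∑ p ∈ A, g p.1 + ∑ p ∈ A, g p.2)) := by
  have hsub : A.image Prod.fst ∪ A.image Prod.snd ⊆ Finset.univ \ K := by
    intro x hx
    rw [Finset.mem_union, Finset.mem_image, Finset.mem_image] at hx
    rcases hx with ⟨p, hp, rfl⟩ | ⟨p, hp, rfl⟩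
    · simpa using (h.off p hp).1
    · simpa using (h.off p hp).2
  have hdis : Disjoint (A.image Prod.fst) (A.image Prod.snd) := by
    rw [Finset.disjoint_left]
    intro x hx hx'
    obtain ⟨p, hp, rfl⟩ := Finset.mem_image.1 hx
    obtain ⟨q, hq, hqp⟩ := Finset.mem_image.1 hx'
    by_cases hpq : p = q
    · subst hpq; exact (h.adj p hp).ne hqp.symm
    · exact (h.dis p hp q hq hpq).2.1 hqp.symm
  rw [← Finset.sum_sdiff (Finset.subset_univ K), add_comm]
  congr 1
  rw [← Finset.sum_sdiff hsub, Finset.sum_union hdis]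
  congr 2
  · refine Finset.sum_image fun p hp q hq hpq => ?_
    by_contra hne
    exact (h.dis p hp q hq hne).1 hpq
  · refine Finset.sum_image fun p hp q hq hpq => ?_
    by_contra hne
    exact (h.dis p hp q hq hne).2.2.2 hpq

/-- The subsets of a matching off the triangle `K` give different covers with `n - 1` members. -/
lemma Tri4.two_pow_le (hG : Tri4 G) : ∃ k, Fintype.card V ≤ 8 * k + 3 ∧ 2 ^ k ≤ numCDC G := by
  obtain ⟨u, v, w, huv, hvw, huw, Z1, Z2, hZ1, hZ2, hsum, hZne⟩ := hG.save
  obtain ⟨M, hM, hMc⟩ := hG.exists_matching huv hvw huw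
  refine ⟨M.card, hMc, ?_⟩
  have hKs : ∀ g : V → ℕ, ∑ x ∈ ({u, v, w} : Finset V), g x = g u + g v + g w := by
    intro g
    rw [Finset.sum_insert, Finset.sum_pair hvw.ne, add_assoc]
    simp [huv.ne, huw.ne]
  set K : Finset V := {u, v, w} with hK
  have hnl : ∀ A ⊆ M, ∀ s, s ∉ K → lk G s ∈ swCover G K Z1 Z2 A →
      ∃ x ∈ unc K A, lk G x = lk G s := by
    intro A hA s hs hmem
    simp only [hK, Finset.mem_insert, Finset.mem_singleton, not_or] at hs
    have hZ := hZne s hs.1 hs.2.1 hs.2.2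
    simp only [swCover, Multiset.mem_cons, Multiset.mem_add, Multiset.mem_map, Finset.mem_val] at hmem
    rcases hmem with h | h | ⟨x, hx, h⟩ | ⟨p, hp, h⟩ | ⟨p, hp, h⟩
    · exact absurd h.symm hZ.1
    · exact absurd h.symm hZ.2
    · exact ⟨x, hx, h⟩
    · exact absurd h (hG.sw_ne_lk (hM.adj p (hA hp)))
    · exact absurd h (hG.sw_ne_lk (hM.adj p (hA hp)).symm)
  have hunc : ∀ A ⊆ M, ∀ p ∈ M, p ∉ A → p.1 ∈ unc K A ∧ p.2 ∈ unc K A := by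
    intro A hA p hp hpA
    have h1 := hM.off p hp
    simp only [unc, Finset.mem_sdiff, Finset.mem_univ, true_and, Finset.mem_union, Finset.mem_image,
      not_or, not_exists, not_and]
    have hne : ∀ q ∈ A, q ≠ p := fun q hq h => hpA (h ▸ hq)
    exact ⟨⟨h1.1, fun q hq h => (hM.dis q (hA hq) p hp (hne q hq)).1 h,
      fun q hq h => (hM.dis q (hA hq) p hp (hne q hq)).2.2.1 h⟩,
      ⟨h1.2, fun q hq h => (hM.dis q (hA hq) p hp (hne q hq)).2.1 h,
      fun q hq h => (hM.dis q (hA hq) p hp (hne q hq)).2.2.2 h⟩⟩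
  have huncmem : ∀ A x, x ∈ unc K A → x ∉ K ∧ ∀ p ∈ A, x ≠ p.1 ∧ x ≠ p.2 := by
    intro A x hx
    simp only [unc, Finset.mem_sdiff, Finset.mem_univ, true_and, Finset.mem_union, Finset.mem_image,
      not_or, not_exists, not_and] at hx
    exact ⟨hx.1, fun p hp => ⟨fun h => hx.2.1 p hp h.symm, fun h => hx.2.2 p hp h.symm⟩⟩
  -- If `p` is swapped in `A` but not in `B`, the links of both ends of `p` are members of the cover,
  -- so both ends have twins off `K` and there is no room left for the three vertices of `K`.
  have hinj : ∀ A ⊆ M, ∀ B ⊆ M, swCover G K Z1 Z2 A = swCover G K Z1 Z2 B → A ⊆ B := by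
    intro A hA B hB heq p hpA
    by_contra hpB
    obtain ⟨hs, ht⟩ := hunc B hB p (hA hpA) hpB
    have hoff := hM.off p (hA hpA)
    have hmem : ∀ x ∈ unc K B, lk G x ∈ swCover G K Z1 Z2 A := by
      intro x hx
      rw [heq]
      simp only [swCover, Multiset.mem_cons, Multiset.mem_add]
      exact Or.inr (Or.inr (Or.inl (Multiset.mem_map.2 ⟨x, hx, rfl⟩)))
    obtain ⟨x, hx, hxs⟩ := hnl A hA p.1 hoff.1 (hmem _ hs)
    obtain ⟨y, hy, hyt⟩ := hnl A hA p.2 hoff.2 (hmem _ ht)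
    obtain ⟨hxK, hxA⟩ := huncmem A x hx
    obtain ⟨hyK, hyA⟩ := huncmem A y hy
    obtain ⟨c, d, hall⟩ := hG.twins (hM.adj p (hA hpA)) (hxA p hpA).1.symm (hyA p hpA).2.symm hxs hyt
    have hcd : ∀ z ∈ K, z = c ∨ z = d := by
      intro z hz
      rcases hall z with rfl | rfl | rfl | rfl | h | h
      · exact absurd hz hoff.1
      · exact absurd hz hoff.2
      · exact absurd hz hxK
      · exact absurd hz hyK
      · exact Or.inl h
      · exact Or.inr h
    have h1 := hcd u (by simp [hK])
    have h2 := hcd v (by simp [hK])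
    have h3 := hcd w (by simp [hK])
    have := huv.ne
    have := hvw.ne
    have := huw.ne
    rcases h1 with rfl | rfl <;> rcases h2 with rfl | rfl <;> rcases h3 with rfl | rfl <;> simp_all
  have := card_le_numCDC (G := G) M.powerset (swCover G K Z1 Z2) 1 (fun A hA => ?_) (fun A hA => ?_)
  · rwa [Finset.card_powerset, one_mul] at this
  · rw [Finset.mem_powerset] at hA
    have hMA := hM.mono hA
    refine ⟨⟨fun C hC => ?_, fun e he => ?_⟩, ?_⟩
    · simp only [swCover, Multiset.mem_cons, Multiset.mem_add, Multiset.mem_map,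
        Finset.mem_val] at hC
      rcases hC with rfl | rfl | ⟨x, hx, rfl⟩ | ⟨p, hp, rfl⟩ | ⟨p, hp, rfl⟩
      · exact hZ1
      · exact hZ2
      · exact hG.isCyc_lk x
      · exact hG.isCyc_sw (hMA.adj p hp)
      · exact hG.isCyc_sw (hMA.adj p hp).symm
    · have h1 := hG.sum_lk he
      rw [hMA.sum, hKs] at h1
      simp only [swCover, Multiset.countP_cons, Multiset.countP_add, countP_map_ind]
      change _ + ind Z2 e + ind Z1 e = 2
      have h2 := hsum e
      have h3 : ∑ p ∈ A, ind (sw G p.1 p.2) e + ∑ p ∈ A, ind (sw G p.2 p.1) e =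
          ∑ p ∈ A, ind (lk G p.1) e + ∑ p ∈ A, ind (lk G p.2) e := by
        rw [← Finset.sum_add_distrib, ← Finset.sum_add_distrib]
        exact Finset.sum_congr rfl fun p hp => sw_ind (hMA.adj p hp) e
      omega
    · have h1 := hMA.sum (fun _ => 1)
      rw [hKs] at h1
      simp only [Finset.sum_const, smul_eq_mul, mul_one, Finset.card_univ] at h1
      simp only [swCover, Multiset.card_cons, Multiset.card_add, Multiset.card_map, Finset.card_val]
      omega
  · rw [Finset.mem_powerset] at hA
    rw [Finset.card_le_one]
    intro B hB C hC
    simp only [Finset.mem_filter, Finset.mem_powerset] at hB hC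
    have h := hB.2.trans hC.2.symm
    exact Finset.Subset.antisymm (hinj B hB.1 C hC.1 h) (hinj C hC.1 B hB.1 h.symm)

end Expo

/-! ### Gluing cycles along paths -/

section Glue
variable {V : Type} {G : SimpleGraph V}

/-- Two cycles that share exactly an edge and its ends: dropping the edge gives a cycle. -/
lemma IsCyc.glue {E K : Set (Sym2 V)} (hE : IsCyc G E) (hK : IsCyc G K) {e : Sym2 V} (he : e ∈ E)
    (heK : e ∈ K) (hv : ∀ x ∈ vts K, x ∈ vts E → x ∈ e) : IsCyc G (E \ {e} ∪ K \ {e}) := by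
  induction e using Sym2.ind with
  | _ p q =>
    have hpq : G.Adj p q := hE.subset he
    obtain ⟨P, hP, hPn, hEP⟩ := hE.edge_path he
    obtain ⟨Q, hQ, hQn, hKQ⟩ := hK.edge_path heK
    have hPs : ∀ x ∈ P.support, x ∈ vts E := by
      intro x hx
      rw [hEP]
      refine vts_mono (Set.subset_insert _ _) ?_
      rw [vts_edgeSet (not_nil_of_ne' hpq.ne)]
      exact hx
    have hQs : ∀ x ∈ Q.support, x ∈ vts K := by
      intro x hx
      rw [hKQ]
      refine vts_mono (Set.subset_insert _ _) ?_
      rw [vts_edgeSet (not_nil_of_ne' hpq.ne)]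
      exact hx
    have h1 : E \ {s(p, q)} = P.edgeSet := by
      rw [hEP]; exact Set.insert_sdiff_self_of_notMem hPn
    have h2 : K \ {s(p, q)} = Q.edgeSet := by
      rw [hKQ]; exact Set.insert_sdiff_self_of_notMem hQn
    rw [h1, h2]
    have hsupp : ∀ x ∈ P.support, x ∈ Q.support → x = p ∨ x = q := by
      intro x hx hx'
      simpa using hv x (hQs x hx') (hPs x hx)
    have : Arcs (P.edgeSet ∪ Q.edgeSet) P Q := by
      refine ⟨hpq.ne, hP, hQ, hsupp, ?_, rfl⟩
      intro e he he'
      induction e using Sym2.ind with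
      | _ a b =>
        have h3 := hsupp a (P.fst_mem_support_of_mem_edges he) (Q.fst_mem_support_of_mem_edges he')
        have h4 := hsupp b (P.snd_mem_support_of_mem_edges he) (Q.snd_mem_support_of_mem_edges he')
        have h5 : a ≠ b := G.ne_of_adj (P.edges_subset_edgeSet he)
        rcases h3 with rfl | rfl <;> rcases h4 with rfl | rfl
        · exact h5 rfl
        · exact hPn he
        · exact hPn (by rw [Sym2.eq_swap]; exact he)
        · exact h5 rfl
    exact this.isCyc

lemma edge_eq_of_mem {a b : V} {e : Sym2 V} (hab : a ≠ b) (ha : a ∈ e) (hb : b ∈ e) : s(a, b) = e :=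
  ((Sym2.mem_and_mem_iff hab).1 ⟨ha, hb⟩).symm

/-- Every edge `e` in `D` of a cycle is replaced by the rest of a cycle `K e` through it. -/
lemma IsCyc.multi {E : Set (Sym2 V)} (hE : IsCyc G E) (D : Finset (Sym2 V))
    (K : Sym2 V → Set (Sym2 V)) (hD : ∀ e ∈ D, e ∈ E) (hK : ∀ e ∈ D, IsCyc G (K e) ∧ e ∈ K e)
    (hv : ∀ e ∈ D, ∀ x ∈ vts (K e), x ∈ vts E → x ∈ e)
    (hd : ∀ e ∈ D, ∀ e' ∈ D, e ≠ e' → ∀ x ∈ vts (K e), x ∈ vts (K e') → x ∈ vts E) :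
    IsCyc G (E \ (D : Set (Sym2 V)) ∪ {g | ∃ e ∈ D, g ∈ K e ∧ g ≠ e}) := by
  induction D using Finset.induction_on with
  | empty => simpa using hE
  | insert e D heD ih =>
    have ih := ih (fun e he => hD e (Finset.mem_insert_of_mem he))
      (fun e he => hK e (Finset.mem_insert_of_mem he))
      (fun e he => hv e (Finset.mem_insert_of_mem he))
      (fun e he e' he' => hd e (Finset.mem_insert_of_mem he) e' (Finset.mem_insert_of_mem he'))
    have hee := Finset.mem_insert_self e D
    have heK : ∀ e' ∈ D, e ∉ K e' := by
      intro e' he' hmem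
      have hne : e' ≠ e := fun h => heD (h ▸ he')
      have heE := hD e hee
      have h1 := hv e' (Finset.mem_insert_of_mem he')
      induction e using Sym2.ind with
      | _ p q =>
        exact hne (edge_eq_of_mem (G.ne_of_adj (hE.subset heE)) (h1 p (mem_vts hmem) (mem_vts heE))
          (h1 q (mem_vts' hmem) (mem_vts' heE))).symm
    have h := ih.glue (hK e hee).1 (e := e) (Or.inl ⟨hD e hee, by simpa using heD⟩) (hK e hee).2 (by
      intro x hx hx'
      rw [vts_union] at hx'
      rcases hx' with hx' | ⟨g, ⟨e', he', hg, -⟩, hxg⟩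
      · exact hv e hee x hx (vts_mono Set.sdiff_subset hx')
      · exact hv e hee x hx (hd e hee e' (Finset.mem_insert_of_mem he')
          (fun h => heD (h ▸ he')) x hx ⟨g, hg, hxg⟩))
    convert h using 1
    ext g
    simp only [Finset.coe_insert, Finset.mem_insert, Set.mem_union, Set.mem_sdiff,
      Set.mem_insert_iff, Set.mem_singleton_iff, Set.mem_ofPred_eq, Finset.mem_coe]
    constructor
    · rintro (⟨h1, h2⟩ | ⟨e', rfl | he', h2, h3⟩)
      · exact Or.inl ⟨Or.inl ⟨h1, fun h => h2 (Or.inr h)⟩, fun h => h2 (Or.inl h)⟩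
      · exact Or.inr ⟨h2, h3⟩
      · exact Or.inl ⟨Or.inr ⟨e', he', h2, h3⟩, fun h => heK e' he' (h ▸ h2)⟩
    · rintro (⟨⟨h1, h2⟩ | ⟨e', he', h2, h3⟩, h4⟩ | ⟨h1, h2⟩)
      · exact Or.inl ⟨h1, fun h => h.elim h4 h2⟩
      · exact Or.inr ⟨e', Or.inr he', h2, h3⟩
      · exact Or.inr ⟨e, Or.inl rfl, h1, h2⟩

/-- The replacing paths in `IsCyc.multi` are edge-disjoint. -/
lemma multi_disj {E K K' : Set (Sym2 V)} (hK : IsCyc G K) {e g : Sym2 V}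
    (hv : ∀ x ∈ vts K, x ∈ vts E → x ∈ e) (hd : ∀ x ∈ vts K, x ∈ vts K' → x ∈ vts E)
    (hg : g ∈ K) (hg' : g ∈ K') (hne : g ≠ e) : False := by
  have hgG := hK.subset hg
  induction g using Sym2.ind with
  | _ a b =>
    exact hne (edge_eq_of_mem (G.ne_of_adj hgG)
      (hv a (mem_vts hg) (hd a (mem_vts hg) (mem_vts hg')))
      (hv b (mem_vts' hg) (hd b (mem_vts' hg) (mem_vts' hg'))))

end Glue

section Op
variable {V : Type} {G : SimpleGraph V} [Fintype V]

lemma P4.exists_other (hG : P4 G) {F : Set (Sym2 V)} {e : Sym2 V} (hF : IsFace G F) (he : e ∈ F) :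
    ∃ N, IsFace G N ∧ N ≠ F ∧ e ∈ N ∧ ∀ E, IsFace G E → e ∈ E → E = F ∨ E = N := by
  obtain ⟨C, D, hC, hD, hne, h1, h2, h3⟩ := hG.exactly_two (hF.cyc.subset he)
  rcases h3 F hF he with rfl | rfl
  · exact ⟨D, hD, hne.symm, h2, h3⟩
  · exact ⟨C, hC, hne, h1, fun E hE heE => (h3 E hE heE).symm⟩

/-- The face on the other side of the edge `e` of the face `F`. -/
noncomputable def other (G : SimpleGraph V) (F : Set (Sym2 V)) (e : Sym2 V) : Set (Sym2 V) :=
  if h : ∃ N, IsFace G N ∧ N ≠ F ∧ e ∈ N ∧ ∀ E, IsFace G E → e ∈ E → E = F ∨ E = N then h.choose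
  else ∅

lemma P4.other_spec (hG : P4 G) {F : Set (Sym2 V)} {e : Sym2 V} (hF : IsFace G F) (he : e ∈ F) :
    IsFace G (other G F e) ∧ other G F e ≠ F ∧ e ∈ other G F e ∧
      ∀ E, IsFace G E → e ∈ E → E = F ∨ E = other G F e := by
  have h := hG.exists_other hF he
  rw [other, dif_pos h]
  exact h.choose_spec

/-- The common vertices of two faces that share an edge are the ends of that edge. -/
lemma P4.inter_edge (hG : P4 G) {C D : Set (Sym2 V)} (hC : IsFace G C) (hD : IsFace G D)
    (hne : C ≠ D) {e : Sym2 V} (heC : e ∈ C) (heD : e ∈ D) {x : V} (hx : x ∈ vts C)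
    (hx' : x ∈ vts D) : x ∈ e := by
  induction e using Sym2.ind with
  | _ p q =>
    have := (hG.inter hC hD hne (G.ne_of_adj (hC.cyc.subset heC)) (mem_vts heC) (mem_vts heD)
      (mem_vts' heC) (mem_vts' heD)).2 x hx hx'
    simpa using this

lemma P4.edge_unique (hG : P4 G) {C D : Set (Sym2 V)} (hC : IsFace G C) (hD : IsFace G D)
    (hne : C ≠ D) {e g : Sym2 V} (heC : e ∈ C) (heD : e ∈ D) (hgC : g ∈ C) (hgD : g ∈ D) :
    g = e := by
  induction g using Sym2.ind with
  | _ p q =>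
    exact edge_eq_of_mem (G.ne_of_adj (hC.cyc.subset hgC))
      (hG.inter_edge hC hD hne heC heD (mem_vts hgC) (mem_vts hgD))
      (hG.inter_edge hC hD hne heC heD (mem_vts' hgC) (mem_vts' hgD))

lemma P4.eq_other (hG : P4 G) {F N : Set (Sym2 V)} {e : Sym2 V} (hF : IsFace G F) (he : e ∈ F)
    (hN : IsFace G N) (hNF : N ≠ F) (heN : e ∈ N) : N = other G F e :=
  ((hG.other_spec hF he).2.2.2 N hN heN).resolve_left hNF

end Op

/-! ### Sparse sets of triangles and detours -/

section Sparse
variable {V : Type} {G : SimpleGraph V} [Fintype V]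

/-- A set of triangular faces, each of which shares an edge with at most one other member. -/
structure Sparse (G : SimpleGraph V) (T : Finset (Set (Sym2 V))) : Prop where
  face : ∀ F ∈ T, IsFace G F
  three : ∀ F ∈ T, F.ncard = 3
  one : ∀ F ∈ T, ∀ A ∈ T, ∀ B ∈ T, A ≠ F → B ≠ F → ∀ g g', g ∈ F → g ∈ A → g' ∈ F → g' ∈ B → A = B

lemma Sparse.mono {T T' : Finset (Set (Sym2 V))} (h : Sparse G T) (hT : T' ⊆ T) : Sparse G T' :=
  ⟨fun F hF => h.face F (hT hF), fun F hF => h.three F (hT hF),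
    fun F hF A hA B hB => h.one F (hT hF) A (hT hA) B (hT hB)⟩

/-- `h z` assigns to every face at `z`, injectively, a neighbour of `z` along that face. -/
structure Rot (G : SimpleGraph V) (h : V → Set (Sym2 V) → V) : Prop where
  mem : ∀ z F, IsFace G F → z ∈ vts F → s(z, h z F) ∈ F
  inj : ∀ z F E, IsFace G F → IsFace G E → z ∈ vts F → z ∈ vts E → h z F = h z E → F = E

/-- By Hall's theorem: every face at `z` has two edges at `z`, every edge is on two faces. -/
lemma P4.exists_rot (hG : P4 G) : ∃ h, Rot G h := by
  have key : ∀ z : V, ∃ h : Set (Sym2 V) → V, (∀ F, IsFace G F → z ∈ vts F → s(z, h F) ∈ F) ∧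
      ∀ F F', IsFace G F → IsFace G F' → z ∈ vts F → z ∈ vts F' → h F = h F' → F = F' := by
    intro z
    let ι := {F : Set (Sym2 V) // IsFace G F ∧ z ∈ vts F}
    let t : ι → Finset V := fun F => Finset.univ.filter (fun x => s(z, x) ∈ F.1)
    have hall : ∀ s : Finset ι, s.card ≤ (s.biUnion t).card := by
      intro s
      have := Finset.card_mul_le_card_mul (s := s) (t := s.biUnion t) (m := 2) (n := 2)
        (fun F x => x ∈ t F) ?_ ?_
      · omega
      · intro F hF
        have h2 := F.2.1.cyc.deg F.2.2
        have h3 : {q | s(z, q) ∈ F.1} = (t F : Set V) := by ext q; simp [t]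
        rw [h3, Set.ncard_coe_finset] at h2
        rw [← h2]
        refine Finset.card_le_card fun x hx => ?_
        rw [Finset.mem_bipartiteAbove]
        exact ⟨Finset.mem_biUnion.2 ⟨F, hF, hx⟩, hx⟩
      · intro x hx
        obtain ⟨F, hF, hxF⟩ := Finset.mem_biUnion.1 hx
        have hxF : s(z, x) ∈ F.1 := by simpa [t] using hxF
        have hc := hG.card_filter (F.2.1.cyc.subset hxF)
        rw [← hc]
        refine Finset.card_le_card_of_injOn (fun F => F.1) ?_ (fun a _ b _ h => Subtype.ext h)
        intro E hE
        have hE := (Finset.mem_bipartiteBelow _).1 hE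
        have : s(z, x) ∈ E.1 := by simpa [t] using hE.2
        simp only [Finset.coe_filter, Set.mem_ofPred_eq, mem_fs]
        exact ⟨E.2.1, this⟩
    obtain ⟨f, hf, hft⟩ := (Finset.all_card_le_biUnion_card_iff_exists_injective t).1 hall
    refine ⟨fun F => if hF : IsFace G F ∧ z ∈ vts F then f ⟨F, hF⟩ else z, ?_, ?_⟩
    · intro F h1 h2
      simp only [dif_pos (And.intro h1 h2)]
      simpa [t] using hft ⟨F, h1, h2⟩
    · intro F F' h1 h1' h2 h2' heq
      simp only [dif_pos (And.intro h1 h2), dif_pos (And.intro h1' h2')] at heq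
      exact congrArg Subtype.val (hf heq)
  choose h h1 h2 using key
  exact ⟨h, h1, h2⟩

/-- The union of the members of `T` that share an edge with `F`. -/
def partners (T : Finset (Set (Sym2 V))) (F : Set (Sym2 V)) : Set (Sym2 V) :=
  {g | ∃ A ∈ T, A ≠ F ∧ (∃ g' ∈ F, g' ∈ A) ∧ g ∈ A}

/-- The edge `e = wy` of `F = wxy` is long: `F` has a partner `zxy`, to which `h z` assigns `y`. -/
def Lg (T : Finset (Set (Sym2 V))) (h : V → Set (Sym2 V) → V) (F : Set (Sym2 V)) (e : Sym2 V) :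
    Prop :=
  ∃ w x y z, F = tri w x y ∧ tri z x y ∈ T ∧ tri z x y ≠ F ∧ h z (tri z x y) = y ∧ e = s(w, y)

/-- The cycle through the edge `e` of `F` that carries the detour of `e`: the triangle `F`, or for
a long edge the quadrangle formed by `F` and its partner. -/
noncomputable def dt (T : Finset (Set (Sym2 V))) (h : V → Set (Sym2 V) → V) (F : Set (Sym2 V))
    (e : Sym2 V) : Set (Sym2 V) :=
  if Lg T h F e then (F ∪ partners T F) \ (F ∩ partners T F) else F

/-- The face `N` with every edge on a member of `T` replaced by its detour. -/
def pr (T : Finset (Set (Sym2 V))) (h : V → Set (Sym2 V) → V) (N : Set (Sym2 V)) : Set (Sym2 V) :=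
  {g | g ∈ N ∧ ∀ F ∈ T, g ∉ F} ∪ {g | ∃ F ∈ T, ∃ e ∈ N, e ∈ F ∧ g ∈ dt T h F e ∧ g ≠ e}

variable {T : Finset (Set (Sym2 V))} {h : V → Set (Sym2 V) → V}

lemma tri_swap (w x y : V) : tri w x y = tri w y x := by
  ext e
  have : s(x, y) = s(y, x) := Sym2.eq_swap
  simp only [tri, Set.mem_insert_iff, Set.mem_singleton_iff, this]
  tauto

lemma IsFace.tri_adj {w x y : V} (hF : IsFace G (tri w x y)) :
    G.Adj w x ∧ G.Adj x y ∧ G.Adj w y :=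
  ⟨hF.cyc.subset (a := s(w, x)) (by simp [tri]), hF.cyc.subset (a := s(x, y)) (by simp [tri]),
    hF.cyc.subset (a := s(w, y)) (by simp [tri])⟩

lemma Sparse.partners_eq (hT : Sparse G T) {F A : Set (Sym2 V)} (hF : F ∈ T) (hA : A ∈ T)
    (hne : A ≠ F) {g : Sym2 V} (hgF : g ∈ F) (hgA : g ∈ A) : partners T F = A := by
  ext e
  constructor
  · rintro ⟨B, hB, hBF, ⟨g', h1, h2⟩, he⟩
    rwa [hT.one F hF A hA B hB hne hBF g g' hgF hgA h1 h2]
  · exact fun he => ⟨A, hA, hne, ⟨g, hgF, hgA⟩, he⟩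

lemma Sparse.dt_long (hT : Sparse G T) {w x y z : V} (hF : tri w x y ∈ T) (hA : tri z x y ∈ T)
    (hne : tri z x y ≠ tri w x y) (hh : h z (tri z x y) = y) :
    dt T h (tri w x y) s(w, y) = tri w x y \ {s(x, y)} ∪ tri z x y \ {s(x, y)} := by
  have hl : Lg T h (tri w x y) s(w, y) := ⟨w, x, y, z, rfl, hA, hne, hh, rfl⟩
  rw [dt, if_pos hl, hT.partners_eq hF hA hne (g := s(x, y)) (by simp [tri]) (by simp [tri])]
  obtain ⟨h1, h2, h3⟩ := (hT.face _ hF).tri_adj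
  obtain ⟨h4, h5, h6⟩ := (hT.face _ hA).tri_adj
  have hzw : z ≠ w := fun h => hne (by rw [h])
  have hwz : w ≠ z := hzw.symm
  have hxy : x ≠ y := h2.ne
  ext e
  simp only [tri, Set.mem_sdiff, Set.mem_union, Set.mem_inter_iff, Set.mem_insert_iff,
    Set.mem_singleton_iff]
  constructor
  · rintro ⟨h1 | h1, h2⟩
    · exact Or.inl ⟨h1, fun h => h2 ⟨h1, Or.inr (Or.inl h)⟩⟩
    · exact Or.inr ⟨h1, fun h => h2 ⟨Or.inr (Or.inl h), h1⟩⟩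
  · rintro (⟨k1, k2⟩ | ⟨k1, k2⟩)
    · refine ⟨Or.inl k1, fun k => ?_⟩
      have := k.2
      rcases k1 with rfl | rfl | rfl <;> simp_all [h1.ne, h3.ne, h1.ne', h3.ne', hwz]
    · refine ⟨Or.inr k1, fun k => ?_⟩
      have := k.1
      rcases k1 with rfl | rfl | rfl <;> simp_all [h4.ne, h6.ne, h4.ne', h6.ne']

lemma dt_short {F : Set (Sym2 V)} {e : Sym2 V} (hl : ¬ Lg T h F e) : dt T h F e = F := if_neg hl

lemma P4.dt_cyc (hG : P4 G) (hT : Sparse G T) {F : Set (Sym2 V)} (hF : F ∈ T) {e : Sym2 V}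
    (he : e ∈ F) : IsCyc G (dt T h F e) ∧ e ∈ dt T h F e := by
  by_cases hl : Lg T h F e
  · obtain ⟨w, x, y, z, rfl, hA, hne, hh, rfl⟩ := hl
    obtain ⟨h1, h2, h3⟩ := (hT.face _ hF).tri_adj
    rw [hT.dt_long hF hA hne hh]
    constructor
    · refine (hT.face _ hF).cyc.glue (hT.face _ hA).cyc (by simp [tri]) (by simp [tri]) ?_
      intro v hv hv'
      exact hG.inter_edge (hT.face _ hA) (hT.face _ hF) hne (by simp [tri]) (by simp [tri]) hv hv'
    · left
      refine ⟨he, ?_⟩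
      simp [h1.ne, h3.ne]
  · rw [dt_short hl]
    exact ⟨(hT.face F hF).cyc, he⟩

/-- The vertices of a detour off the ends of the edge: near ones on the triangle, far ones on the
partner. -/
lemma Sparse.dt_vts (hT : Sparse G T) {F : Set (Sym2 V)} (hF : F ∈ T) {e : Sym2 V}
    {v : V} (hv : v ∈ vts (dt T h F e)) : v ∈ vts F ∨ ∃ w x y, F = tri w x y ∧
      tri v x y ∈ T ∧ tri v x y ≠ F ∧ h v (tri v x y) = y ∧ e = s(w, y) := by
  by_cases hl : Lg T h F e
  · obtain ⟨w, x, y, z, rfl, hA, hne, hh, rfl⟩ := hl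
    rw [hT.dt_long hF hA hne hh, vts_union] at hv
    rcases hv with hv | hv
    · exact Or.inl (vts_mono Set.sdiff_subset hv)
    · have := vts_mono Set.sdiff_subset hv
      rw [vts_tri] at this
      rcases this with rfl | rfl | rfl
      · exact Or.inr ⟨w, x, y, rfl, hA, hne, hh, rfl⟩
      · left; rw [vts_tri]; simp
      · left; rw [vts_tri]; simp
  · rw [dt_short hl] at hv
    exact Or.inl hv

/-- A far vertex is not on the face across the edge. -/
lemma P4.far_off (hG : P4 G) {N : Set (Sym2 V)} (hN : IsFace G N) {w x y z : V}
    (hF : IsFace G (tri w x y)) (hA : IsFace G (tri z x y)) (hne : tri z x y ≠ tri w x y)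
    (hNF : N ≠ tri w x y) (he : s(w, y) ∈ N) : x ∉ vts N ∧ z ∉ vts N := by
  obtain ⟨h1, h2, h3⟩ := hF.tri_adj
  obtain ⟨h4, h5, h6⟩ := hA.tri_adj
  have hx : x ∉ vts N := by
    intro hx
    have := hG.inter_edge hN hF hNF he (by simp [tri]) hx (by rw [vts_tri]; simp)
    simp [h1.ne', h2.ne] at this
  refine ⟨hx, fun hz => ?_⟩
  rcases hG.nbr_two hN hx (mem_vts he) (mem_vts' he) hz h3.ne h1.symm h2 h4.symm with h | h
  · exact hne (by rw [h])
  · exact h6.ne h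

/-- A detour starting at an edge `e` of `N` leaves `N` at once. -/
lemma P4.dt_inter (hG : P4 G) (hT : Sparse G T) {N F : Set (Sym2 V)} (hN : IsFace G N)
    (hNT : N ∉ T) (hF : F ∈ T) {e : Sym2 V} (heN : e ∈ N) (heF : e ∈ F) {v : V}
    (hv : v ∈ vts (dt T h F e)) (hvN : v ∈ vts N) : v ∈ e := by
  have hNF : N ≠ F := fun hh => hNT (hh ▸ hF)
  rcases hT.dt_vts hF hv with hv | ⟨w, x, y, rfl, hA, hne, -, rfl⟩
  · exact hG.inter_edge hN (hT.face F hF) hNF heN heF hvN hv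
  · exact absurd hvN (hG.far_off hN (hT.face _ hF) (hT.face _ hA) hne hNF heN).2

/-- A vertex of a triangle off an edge is adjacent to the ends of the edge. -/
lemma tri_apex_adj {F : Set (Sym2 V)} (hF : IsFace G F) (h3 : F.ncard = 3) {p q v : V}
    (he : s(p, q) ∈ F) (hv : v ∈ vts F) (hvp : v ≠ p) (hvq : v ≠ q) : 
    F = tri p q v ∧ G.Adj v p ∧ G.Adj v q := by
  obtain ⟨z, rfl, h1, h2⟩ := hF.cyc.eq_tri h3 he
  rw [vts_tri] at hv
  rcases hv with rfl | rfl | rfl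
  · exact absurd rfl hvp
  · exact absurd rfl hvq
  · exact ⟨rfl, h1.symm, h2.symm⟩

/-- The far vertex `v` of a detour from the edge `w y` of `N` is not on another triangle of `T` across
an edge of `N`. -/
lemma P4.dt_near_far (hG : P4 G) (hT : Sparse G T) {N F' : Set (Sym2 V)} (hN : IsFace G N)
    (hNT : N ∉ T) (hF' : F' ∈ T) {e' : Sym2 V} (he'N : e' ∈ N) (he'F : e' ∈ F')
    {w x y v : V} (hF : tri w x y ∈ T) (hA : tri v x y ∈ T) (hne : tri v x y ≠ tri w x y)
    (heN : s(w, y) ∈ N) (hv' : v ∈ vts F') : False := by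
  have hNF : N ≠ tri w x y := fun hh => hNT (hh ▸ hF)
  have hNF' : N ≠ F' := fun hh => hNT (hh ▸ hF')
  obtain ⟨hx, hv⟩ := hG.far_off hN (hT.face _ hF) (hT.face _ hA) hne hNF heN
  obtain ⟨h4, h5, h6⟩ := (hT.face _ hA).tri_adj
  obtain ⟨h1, h2, h3⟩ := (hT.face _ hF).tri_adj
  induction e' using Sym2.ind with
  | _ p q =>
    have hpN := mem_vts he'N
    have hqN := mem_vts' he'N
    have hvp : v ≠ p := fun hh => hv (hh ▸ hpN)
    have hvq : v ≠ q := fun hh => hv (hh ▸ hqN)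
    obtain ⟨hF't, hvp', hvq'⟩ := tri_apex_adj (hT.face _ hF') (hT.three _ hF') he'F hv' hvp hvq
    have hpq : p ≠ q := G.ne_of_adj (hN.cyc.subset he'N)
    have hyv : s(v, y) ∈ F' := by
      rcases hG.nbr_two hN hv hpN hqN (mem_vts' heN) hpq hvp' hvq' h6 with rfl | rfl <;>
        rw [hF't, Sym2.eq_swap] <;> simp [tri]
    have hF'A : F' ≠ tri v x y := by
      intro hh
      have hpv : p ∈ vts F' := mem_vts he'F
      have hqv : q ∈ vts F' := mem_vts' he'F
      rw [hh, vts_tri] at hpv hqv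
      have hpx : p ≠ x := fun hh => hx (hh ▸ hpN)
      have hqx : q ≠ x := fun hh => hx (hh ▸ hqN)
      simp only [Set.mem_insert_iff, Set.mem_singleton_iff] at hpv hqv
      have a1 : p = y := by tauto
      have a2 : q = y := by tauto
      exact hpq (a1.trans a2.symm)
    have := hT.one _ hA _ hF _ hF' hne.symm hF'A s(x, y) s(v, y) (by simp [tri]) (by simp [tri])
      (by simp [tri]) hyv
    have hvF : v ∈ vts (tri w x y) := by rw [this]; exact hv'
    rw [vts_tri] at hvF
    rcases hvF with rfl | rfl | rfl
    · exact hne rfl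
    · exact h4.ne rfl
    · exact h6.ne rfl

/-- The detours of two edges of `N` meet only on `N`. For two far vertices this is where the
injectivity of `h` is needed. -/
lemma P4.dt_disj (hG : P4 G) (hT : Sparse G T) (hr : Rot G h) {N F F' : Set (Sym2 V)}
    (hN : IsFace G N) (hNT : N ∉ T) (hF : F ∈ T) (hF' : F' ∈ T) {e e' : Sym2 V} (heN : e ∈ N)
    (heF : e ∈ F) (heN' : e' ∈ N) (heF' : e' ∈ F') (hee : e ≠ e') {v : V}
    (hv : v ∈ vts (dt T h F e)) (hv' : v ∈ vts (dt T h F' e')) : v ∈ vts N := by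
  by_contra hvN
  rcases hT.dt_vts hF hv with hn | ⟨w, x, y, rfl, hA, hne, hh, rfl⟩ <;>
    rcases hT.dt_vts hF' hv' with hn' | ⟨w', x', y', rfl, hA', hne', hh', rfl⟩
  -- Two near vertices: `v` would have three neighbours on `N`.
  · induction e using Sym2.ind with
    | _ a b =>
      induction e' using Sym2.ind with
      | _ p q =>
        have hva : v ≠ a := fun hh => hvN (hh ▸ mem_vts heN)
        have hvb : v ≠ b := fun hh => hvN (hh ▸ mem_vts' heN)
        have hvp : v ≠ p := fun hh => hvN (hh ▸ mem_vts heN')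
        have hvq : v ≠ q := fun hh => hvN (hh ▸ mem_vts' heN')
        obtain ⟨-, h1, h2⟩ := tri_apex_adj (hT.face _ hF) (hT.three _ hF) heF hn hva hvb
        obtain ⟨-, h3, h4⟩ := tri_apex_adj (hT.face _ hF') (hT.three _ hF') heF' hn' hvp hvq
        have hab : a ≠ b := G.ne_of_adj (hN.cyc.subset heN)
        have hpq : p ≠ q := G.ne_of_adj (hN.cyc.subset heN')
        have h5 := hG.nbr_two hN hvN (mem_vts heN) (mem_vts' heN) (mem_vts heN') hab h1 h2 h3
        have h6 := hG.nbr_two hN hvN (mem_vts heN) (mem_vts' heN) (mem_vts' heN') hab h1 h2 h4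
        exact hee (edge_eq_of_mem hpq (by simpa using h5) (by simpa using h6)).symm
  · exact hG.dt_near_far hT hN hNT hF heN heF hF' hA' hne' heN' hn
  · exact hG.dt_near_far hT hN hNT hF' heN' heF' hF hA hne heN hn'
  · have hNF : N ≠ tri w x y := fun hh => hNT (hh ▸ hF)
    have hNF' : N ≠ tri w' x' y' := fun hh => hNT (hh ▸ hF')
    have hx := (hG.far_off hN (hT.face _ hF) (hT.face _ hA) hne hNF heN).1
    have hx' := (hG.far_off hN (hT.face _ hF') (hT.face _ hA') hne' hNF' heN').1
    obtain ⟨h4, h5, h6⟩ := (hT.face _ hA).tri_adj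
    obtain ⟨h4', h5', h6'⟩ := (hT.face _ hA').tri_adj
    have hyN := mem_vts' heN
    have hyN' := mem_vts' heN'
    have hvA : v ∈ vts (tri v x y) := by rw [vts_tri]; simp
    have hvA' : v ∈ vts (tri v x' y') := by rw [vts_tri]; simp
    by_cases hyy : y = y'
    · subst hyy
      have hAA := hr.inj v _ _ (hT.face _ hA) (hT.face _ hA') hvA hvA' (hh.trans hh'.symm)
      have hFF : tri w x y = tri w' x' y := hT.one _ hA _ hF _ hF' hne.symm (by rw [hAA]; exact hne'.symm)
        s(x, y) s(x', y) (by simp [tri]) (by simp [tri]) (by rw [hAA]; simp [tri]) (by simp [tri])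
      exact hee (hG.edge_unique hN (hT.face _ hF) hNF heN heF heN' (hFF ▸ heF')).symm
    -- The triangle `v y y'` is a face, and `h v` maps it to `y` or to `y'`, which are already the values
    -- at `v x y` and at `v x' y'`, against injectivity.
    · have hadj : G.Adj y y' := hN.cyc.subset (hG.nbr_adj hN hvN hyN hyN' hyy h6 h6')
      have hS : IsFace G (tri v y y') := hG.face_tri h6 hadj h6'
      have hvS : v ∈ vts (tri v y y') := by rw [vts_tri]; simp
      have hm : h v (tri v y y') ∈ vts (tri v y y') := mem_vts' (hr.mem v _ hS hvS)
      have hmv : h v (tri v y y') ≠ v := (G.ne_of_adj (hS.cyc.subset (hr.mem v _ hS hvS))).symm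
      rw [vts_tri] at hm
      rcases hm with hm | hm | hm
      · exact hmv hm
      · have := hr.inj v _ _ hS (hT.face _ hA) hvS hvA (hm.trans hh.symm)
        have hy' : y' ∈ vts (tri v x y) := by rw [← this, vts_tri]; simp
        rw [vts_tri] at hy'
        rcases hy' with k | k | k
        · exact h6'.ne k.symm
        · have k : y' = x := k
          exact hx (k ▸ hyN')
        · exact hyy k.symm
      · have hm : h v (tri v y y') = y' := hm
        have := hr.inj v _ _ hS (hT.face _ hA') hvS hvA' (hm.trans hh'.symm)
        have hy' : y ∈ vts (tri v x' y') := by rw [← this, vts_tri]; simp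
        rw [vts_tri] at hy'
        rcases hy' with k | k | k
        · exact h6.ne k.symm
        · have k : y = x' := k
          exact hx' (k ▸ hyN)
        · exact hyy k

end Sparse

/-! ### The detour cover -/

section Cover
variable {V : Type} {G : SimpleGraph V} [Fintype V]
variable {T : Finset (Set (Sym2 V))} {h : V → Set (Sym2 V) → V}

lemma tri_rot (x y w : V) : tri x y w = tri w x y := by
  ext e
  have h1 : s(y, w) = s(w, y) := Sym2.eq_swap
  have h2 : s(x, w) = s(w, x) := Sym2.eq_swap
  simp only [tri, Set.mem_insert_iff, Set.mem_singleton_iff, h1, h2]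
  tauto

/-- A modified face is a cycle, since its detours meet `N` and each other only on their edges. -/
lemma P4.pr_cyc (hG : P4 G) (hT : Sparse G T) (hr : Rot G h) {N : Set (Sym2 V)} (hN : IsFace G N)
    (hNT : N ∉ T) : IsCyc G (pr T h N) := by
  have hF : ∀ e ∈ N, (∃ F ∈ T, e ∈ F) → other G N e ∈ T ∧ e ∈ other G N e := by
    rintro e he ⟨F, hF, heF⟩
    rw [← hG.eq_other hN he (hT.face F hF) (fun hh => hNT (hh ▸ hF)) heF]
    exact ⟨hF, heF⟩
  have := hN.cyc.multi (Finset.univ.filter (fun e => e ∈ N ∧ ∃ F ∈ T, e ∈ F))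
    (fun e => dt T h (other G N e) e) ?_ ?_ ?_ ?_
  · convert this using 1
    ext g
    simp only [pr, Set.mem_union, Set.mem_ofPred_eq, Set.mem_sdiff, Finset.mem_coe,
      Finset.mem_filter, Finset.mem_univ, true_and]
    refine or_congr ?_ ?_
    · refine and_congr_right fun hg => ?_
      push Not
      exact ⟨fun h _ => h, fun h => h hg⟩
    · constructor
      · rintro ⟨F, hF', e, he, heF, hg⟩
        refine ⟨e, ⟨he, F, hF', heF⟩, ?_⟩
        rwa [← hG.eq_other hN he (hT.face F hF') (fun hh => hNT (hh ▸ hF')) heF]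
      · rintro ⟨e, ⟨he, hex⟩, hg⟩
        exact ⟨_, (hF e he hex).1, e, he, (hF e he hex).2, hg⟩
  · intro e he
    exact (Finset.mem_filter.1 he).2.1
  · intro e he
    obtain ⟨-, he, hex⟩ := Finset.mem_filter.1 he
    exact hG.dt_cyc hT (hF e he hex).1 (hF e he hex).2
  · intro e he x hx hxN
    obtain ⟨-, he, hex⟩ := Finset.mem_filter.1 he
    exact hG.dt_inter hT hN hNT (hF e he hex).1 he (hF e he hex).2 hx hxN
  · intro e he e' he' hee x hx hx'
    obtain ⟨-, he, hex⟩ := Finset.mem_filter.1 he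
    obtain ⟨-, he', hex'⟩ := Finset.mem_filter.1 he'
    exact hG.dt_disj hT hr hN hNT (hF e he hex).1 (hF e' he' hex').1 he (hF e he hex).2 he'
      (hF e' he' hex').2 hee hx hx'

/-- The edge `e` of the member `F` of `T` is on the boundary of `T`, and its detour uses `g`. -/
def Uses (T : Finset (Set (Sym2 V))) (h : V → Set (Sym2 V) → V) (g : Sym2 V) (F : Set (Sym2 V))
    (e : Sym2 V) : Prop :=
  F ∈ T ∧ e ∈ F ∧ (∀ A ∈ T, A ≠ F → e ∉ A) ∧ g ∈ dt T h F e ∧ g ≠ e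

/-- Normal form of two adjacent members of `T`. -/
lemma P4.pair_form (hT : Sparse G T) (hr : Rot G h) {F A : Set (Sym2 V)} (hF : F ∈ T)
    (hA : A ∈ T) {g0 : Sym2 V} (h1 : g0 ∈ F) (h2 : g0 ∈ A) :
    ∃ w x y z, F = tri w x y ∧ A = tri z x y ∧ h z (tri z x y) = y := by
  induction g0 using Sym2.ind with
  | _ x y =>
    obtain ⟨w, hw, -, -⟩ := (hT.face F hF).cyc.eq_tri (hT.three F hF) h1
    obtain ⟨z, hz, -, -⟩ := (hT.face A hA).cyc.eq_tri (hT.three A hA) h2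
    rw [tri_rot] at hw hz
    have hzA : z ∈ vts A := by rw [hz, vts_tri]; simp
    have hm := hr.mem z A (hT.face A hA) hzA
    have hmz : h z A ≠ z := (G.ne_of_adj ((hT.face A hA).cyc.subset hm)).symm
    have hm := mem_vts' hm
    rw [hz, vts_tri, ← hz] at hm
    rcases hm with hm | hm | hm
    · exact absurd hm hmz
    · exact ⟨w, y, x, z, by rw [hw, tri_swap], by rw [hz, tri_swap], by rw [tri_swap, ← hz, hm]⟩
    · exact ⟨w, x, y, z, hw, hz, by rw [← hz]; exact hm⟩

/-- Of the two edges of `F` off its partner only one is long. -/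
lemma P4.not_lg (hG : P4 G) (hT : Sparse G T) {w x y z : V} (hF : tri w x y ∈ T)
    (hA : tri z x y ∈ T) (hne : tri z x y ≠ tri w x y) (hh : h z (tri z x y) = y) :
    ¬ Lg T h (tri w x y) s(w, x) := by
  rintro ⟨w', x', y', z', hF', hA', hne', hh', he⟩
  obtain ⟨h1, h2, h3⟩ := (hT.face _ hF).tri_adj
  obtain ⟨h4, h5, h6⟩ := (hT.face _ hA').tri_adj
  have hAA : tri z' x' y' = tri z x y := hT.one _ hF _ hA' _ hA hne' hne s(x', y') s(x, y)
    (by rw [hF']; simp [tri]) (by simp [tri]) (by simp [tri]) (by simp [tri])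
  have hxy : s(x', y') = s(x, y) := hG.edge_unique (hT.face _ hA) (hT.face _ hF) hne
    (by simp [tri]) (by simp [tri]) (by rw [← hAA]; simp [tri]) (by rw [hF']; simp [tri])
  have hz : z' ∈ vts (tri z x y) := by rw [← hAA, vts_tri]; simp
  have hzx : z' ∉ s(x, y) := by rw [← hxy]; simp [h4.ne, h6.ne]
  have hzz : z' = z := by
    rw [vts_tri] at hz
    rcases hz with hz | hz | hz
    · exact hz
    · exact absurd (by rw [hz]; simp) hzx
    · have hz : z' = y := hz
      exact absurd (by rw [hz]; simp) hzx
  have hyy : y' = y := by rw [← hh', hAA, hzz, hh]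
  have : y ∈ s(w, x) := by rw [he, hyy]; simp
  simp [h3.ne', h2.ne'] at this

/-- In two adjacent members of `T`, every edge is used by the detour of exactly one edge of each. -/
lemma P4.uses_pair (hG : P4 G) (hT : Sparse G T) (hr : Rot G h) {F A : Set (Sym2 V)} (hF : F ∈ T)
    (hA : A ∈ T) (hne : A ≠ F) {g0 g : Sym2 V} (h1 : g0 ∈ F) (h2 : g0 ∈ A) (hg : g ∈ F ∨ g ∈ A) :
    ∃ e, Uses T h g F e ∧ ∀ e', Uses T h g F e' → e' = e := by
  obtain ⟨w, x, y, z, rfl, rfl, hh⟩ := P4.pair_form hT hr hF hA h1 h2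
  clear h1 h2
  obtain ⟨h1, h2, h3⟩ := (hT.face _ hF).tri_adj
  obtain ⟨h4, h5, h6⟩ := (hT.face _ hA).tri_adj
  have hzw : z ≠ w := fun h => hne (by rw [h])
  have hwz : w ≠ z := hzw.symm
  have n1 := h1.ne
  have n2 := h2.ne
  have n3 := h3.ne
  have n4 := h4.ne
  have n6 := h6.ne
  have n1' := h1.ne'
  have n2' := h2.ne'
  have n3' := h3.ne'
  have n4' := h4.ne'
  have n6' := h6.ne'
  have hbd : ∀ e ∈ tri w x y, (∀ B ∈ T, B ≠ tri w x y → e ∉ B) ↔ e ∉ tri z x y := by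
    intro e heF
    constructor
    · exact fun hB => hB _ hA hne
    · intro he B hB hBF heB
      rw [hT.one _ hF _ hA _ hB hne hBF s(x, y) e (by simp [tri]) (by simp [tri]) heF heB] at he
      exact he heB
  have dS := dt_short (hG.not_lg hT hF hA hne hh)
  have dL := hT.dt_long hF hA hne hh
  have b1 : s(w, x) ∉ tri z x y := by simp [tri, *]
  have b2 : s(w, y) ∉ tri z x y := by simp [tri, *]
  have key : ∀ e, Uses T h g (tri w x y) e ↔ (e = s(w, x) ∧ g ∈ tri w x y ∧ g ≠ s(w, x)) ∨
      (e = s(w, y) ∧ g ∈ tri w x y \ {s(x, y)} ∪ tri z x y \ {s(x, y)} ∧ g ≠ s(w, y)) := by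
    intro e
    constructor
    · rintro ⟨-, he, hB, hd, hge⟩
      rw [hbd e he] at hB
      rcases he with rfl | rfl | he
      · rw [dS] at hd; exact Or.inl ⟨rfl, hd, hge⟩
      · exact absurd (by simp [tri]) hB
      · have he : e = s(w, y) := he
        subst he
        rw [dL] at hd; exact Or.inr ⟨rfl, hd, hge⟩
    · rintro (⟨rfl, hd, hge⟩ | ⟨rfl, hd, hge⟩)
      · exact ⟨hF, by simp [tri], (hbd _ (by simp [tri])).2 b1, by rwa [dS], hge⟩
      · exact ⟨hF, by simp [tri], (hbd _ (by simp [tri])).2 b2, by rwa [dL], hge⟩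
  simp only [key]
  have c1 : s(w, x) ≠ s(w, y) := by simp [*]
  have c2 : s(w, x) ≠ s(x, y) := by simp [*]
  have c3 : s(w, y) ≠ s(x, y) := by simp [*]
  have c4 : s(z, x) ≠ s(x, y) := by simp [*]
  have c5 : s(z, y) ≠ s(x, y) := by simp [*]
  have c6 : s(z, x) ∉ tri w x y := by simp [tri, *]
  have c7 : s(z, y) ∉ tri w x y := by simp [tri, *]
  have hg : g = s(w, x) ∨ g = s(w, y) ∨ g = s(x, y) ∨ g = s(z, x) ∨ g = s(z, y) := by
    simp only [tri, Set.mem_insert_iff, Set.mem_singleton_iff] at hg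
    tauto
  have m1 : s(w, x) ∈ tri w x y := by simp [tri]
  have m2 : s(w, y) ∈ tri w x y := by simp [tri]
  have m3 : s(x, y) ∈ tri w x y := by simp [tri]
  have m4 : s(z, x) ∈ tri z x y := by simp [tri]
  have m5 : s(z, y) ∈ tri z x y := by simp [tri]
  simp only [Set.mem_union, Set.mem_sdiff, Set.mem_singleton_iff]
  rcases hg with rfl | rfl | rfl | rfl | rfl
  · exact ⟨s(w, y), Or.inr ⟨rfl, Or.inl ⟨m1, c2⟩, c1⟩, fun e' he => by tauto⟩
  · exact ⟨s(w, x), Or.inl ⟨rfl, m2, c1.symm⟩, fun e' he => by tauto⟩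
  · exact ⟨s(w, x), Or.inl ⟨rfl, m3, c2.symm⟩, fun e' he => by tauto⟩
  · exact ⟨s(w, y), Or.inr ⟨rfl, Or.inr ⟨m4, c4⟩, fun hc => c6 (hc ▸ m2)⟩, fun e' he => by tauto⟩
  · exact ⟨s(w, y), Or.inr ⟨rfl, Or.inr ⟨m5, c5⟩, fun hc => c7 (hc ▸ m2)⟩, fun e' he => by tauto⟩

/-- A detour stays in its triangle and the partner. -/
lemma dt_sub {F : Set (Sym2 V)} {e g : Sym2 V} (hg : g ∈ dt T h F e) : g ∈ F ∨ g ∈ partners T F := by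
  unfold dt at hg
  split_ifs at hg
  · exact hg.1
  · exact Or.inl hg

/-- An edge of a member of `T` is used by exactly two detours. -/
lemma P4.uses_two (hG : P4 G) (hT : Sparse G T) (hr : Rot G h) {F : Set (Sym2 V)} (hF : F ∈ T)
    {g : Sym2 V} (hg : g ∈ F) : ∃ F1 e1 F2 e2, e1 ≠ e2 ∧ Uses T h g F1 e1 ∧ Uses T h g F2 e2 ∧
      ∀ F' e', Uses T h g F' e' → (F' = F1 ∧ e' = e1) ∨ (F' = F2 ∧ e' = e2) := by
  by_cases hp : ∃ A ∈ T, A ≠ F ∧ ∃ g0 ∈ F, g0 ∈ A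
  · obtain ⟨A, hA, hne, g0, h1, h2⟩ := hp
    obtain ⟨e1, hu1, hq1⟩ := hG.uses_pair hT hr hF hA hne h1 h2 (Or.inl hg)
    obtain ⟨e2, hu2, hq2⟩ := hG.uses_pair hT hr hA hF hne.symm h2 h1 (Or.inr hg)
    refine ⟨F, e1, A, e2, ?_, hu1, hu2, ?_⟩
    · rintro rfl
      exact hu1.2.2.1 A hA hne hu2.2.1
    · intro F' e' hu
      have hF' : F' = F ∨ F' = A := by
        have hF'T := hu.1
        rcases dt_sub hu.2.2.2.1 with hg' | ⟨A', hA', hne', ⟨g', h3, h4⟩, hg'⟩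
        · by_cases hc : F' = F
          · exact Or.inl hc
          · exact Or.inr (hT.one F hF F' hF'T A hA hc hne g g0 hg hg' h1 h2)
        · by_cases hc : A' = F
          · subst hc
            exact Or.inr (hT.one A' hF F' hF'T A hA hne'.symm hne g' g0 h4 h3 h1 h2)
          · have hAA := hT.one F hF A' hA' A hA hc hne g g0 hg hg' h1 h2
            subst hAA
            exact Or.inl (hT.one A' hA F' hF'T F hF hne'.symm hne.symm g' g0 h4 h3 h2 h1)
      rcases hF' with rfl | rfl
      · exact Or.inl ⟨rfl, hq1 e' hu⟩
      · exact Or.inr ⟨rfl, hq2 e' hu⟩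
  · have hnl : ∀ e, ¬ Lg T h F e := by
      rintro e ⟨w, x, y, z, rfl, hA, hne, -⟩
      exact hp ⟨_, hA, hne, s(x, y), by simp [tri], by simp [tri]⟩
    have hb : ∀ e ∈ F, ∀ A ∈ T, A ≠ F → e ∉ A := fun e he A hA hAF heA => hp ⟨A, hA, hAF, e, he, heA⟩
    have hF3 := hT.three F hF
    have hFf := hT.face F hF
    have hd : (F \ {g}).ncard = 2 := by
      rw [Set.ncard_sdiff_singleton_of_mem hg, hF3]
    obtain ⟨e1, e2, h12, heq⟩ := Set.ncard_eq_two.1 hd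
    have he1 : e1 ∈ F \ {g} := by rw [heq]; simp
    have he2 : e2 ∈ F \ {g} := by rw [heq]; simp
    refine ⟨F, e1, F, e2, h12, ⟨hF, he1.1, hb _ he1.1, by rwa [dt_short (hnl _)], Ne.symm he1.2⟩,
      ⟨hF, he2.1, hb _ he2.1, by rwa [dt_short (hnl _)], Ne.symm he2.2⟩, ?_⟩
    intro F' e' hu
    have hF' : F' = F := by
      by_contra hc
      rcases dt_sub hu.2.2.2.1 with hg' | ⟨A', hA', hne', ⟨g', h3, h4⟩, hg'⟩
      · exact hb g hg F' hu.1 hc hg'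
      · by_cases hc' : A' = F
        · subst hc'; exact hb g' h4 F' hu.1 hc h3
        · exact hb g hg A' hA' hc' hg'
    subst hF'
    have : e' ∈ F' \ {g} := ⟨hu.2.1, Ne.symm hu.2.2.2.2⟩
    rw [heq] at this
    rcases this with rfl | hh
    · exact Or.inl ⟨rfl, rfl⟩
    · exact Or.inr ⟨rfl, hh⟩

lemma P4.uses_other (hG : P4 G) (hT : Sparse G T) {F : Set (Sym2 V)} {e g : Sym2 V}
    (hu : Uses T h g F e) : IsFace G (other G F e) ∧ other G F e ∉ T ∧ g ∈ pr T h (other G F e) := by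
  obtain ⟨h1, h2, h3, -⟩ := hG.other_spec (hT.face F hu.1) hu.2.1
  exact ⟨h1, fun hc => hu.2.2.1 _ hc h2 h3, Or.inr ⟨F, hu.1, e, h3, hu.2.1, hu.2.2.2⟩⟩

/-- The modified faces outside `T` form a cycle double cover. -/
lemma P4.cover_cd (hG : P4 G) (hT : Sparse G T) (hr : Rot G h) :
    CD G ((fs G \ T).val.map (pr T h)) := by
  refine cd_map (fun N hN => ?_) fun g hg => ?_
  · rw [Finset.mem_sdiff, mem_fs] at hN
    exact hG.pr_cyc hT hr hN.1 hN.2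
  · by_cases hgT : ∃ F ∈ T, g ∈ F
    · obtain ⟨F, hF, hgF⟩ := hgT
      obtain ⟨F1, e1, F2, e2, hne, hu1, hu2, hq⟩ := hG.uses_two hT hr hF hgF
      have k1 := hG.uses_other hT hu1
      have k2 := hG.uses_other hT hu2
      have heq : (fs G \ T).filter (fun N => g ∈ pr T h N) = {other G F1 e1, other G F2 e2} := by
        ext N
        simp only [Finset.mem_filter, Finset.mem_sdiff, mem_fs, Finset.mem_insert,
          Finset.mem_singleton]
        constructor
        · rintro ⟨⟨hN, hNT⟩, hgN⟩
          rcases hgN with ⟨-, hgN⟩ | ⟨F', hF', e, heN, heF, hd, hge⟩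
          · exact absurd hgF (hgN F hF)
          · have hNF : N ≠ F' := fun hc => hNT (hc ▸ hF')
            have hu : Uses T h g F' e := by
              refine ⟨hF', heF, fun A hA hAF heA => ?_, hd, hge⟩
              rcases hG.not_three' (hT.face F' hF') (hT.face A hA) hN heF heA heN hAF.symm with
                hc | hc
              · exact hNF hc
              · exact hNT (hc ▸ hA)
            have hNo := hG.eq_other (hT.face F' hF') heF hN hNF heN
            rcases hq F' e hu with ⟨rfl, rfl⟩ | ⟨rfl, rfl⟩
            · exact Or.inl hNo
            · exact Or.inr hNo
        · rintro (rfl | rfl)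
          · exact ⟨⟨k1.1, k1.2.1⟩, k1.2.2⟩
          · exact ⟨⟨k2.1, k2.2.1⟩, k2.2.2⟩
      rw [heq, Finset.card_pair]
      intro hoo
      have o1 := hG.other_spec (hT.face F1 hu1.1) hu1.2.1
      have o2 := hG.other_spec (hT.face F2 hu2.1) hu2.2.1
      refine multi_disj (E := other G F1 e1) (hG.dt_cyc (h := h) hT hu1.1 hu1.2.1).1
        (fun x hx hxN => hG.dt_inter hT k1.1 k1.2.1 hu1.1 o1.2.2.1 hu1.2.1 hx hxN)
        (fun x hx hx' => hG.dt_disj hT hr k1.1 k1.2.1 hu1.1 hu2.1 o1.2.2.1 hu1.2.1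
          (by rw [hoo]; exact o2.2.2.1) hu2.2.1 hne hx hx') hu1.2.2.2.1 hu2.2.2.2.1 hu1.2.2.2.2
    · push Not at hgT
      rw [← hG.card_filter hg]
      congr 1
      ext N
      simp only [Finset.mem_filter, Finset.mem_sdiff, mem_fs]
      constructor
      · rintro ⟨⟨hN, hNT⟩, hgN⟩
        rcases hgN with hgN | ⟨F', hF', e, heN, heF, hd, hge⟩
        · exact ⟨hN, hgN.1⟩
        · rcases dt_sub hd with hg' | ⟨A', hA', hne', -, hg'⟩
          · exact absurd hg' (hgT F' hF')
          · exact absurd hg' (hgT A' hA')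
      · rintro ⟨hN, hgN⟩
        exact ⟨⟨hN, fun hNT => hgT N hNT hgN⟩, Or.inl ⟨hgN, hgT⟩⟩

end Cover

/-! ### Two-colouring the triangles -/

section Colour
variable {V : Type} {G : SimpleGraph V} [Fintype V]
variable {T : Finset (Set (Sym2 V))} {h : V → Set (Sym2 V) → V}

/-- Detours lengthen a face. -/
lemma P4.pr_card (hG : P4 G) (hT : Sparse G T) (hr : Rot G h) {N : Set (Sym2 V)} (hN : IsFace G N)
    (hNT : N ∉ T) : N.ncard + {e | e ∈ N ∧ ∃ F ∈ T, e ∈ F}.ncard ≤ (pr T h N).ncard := by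
  have hF : ∀ e ∈ N, (∃ F ∈ T, e ∈ F) → other G N e ∈ T ∧ e ∈ other G N e := by
    rintro e he ⟨F, hF, heF⟩
    rw [← hG.eq_other hN he (hT.face F hF) (fun hh => hNT (hh ▸ hF)) heF]
    exact ⟨hF, heF⟩
  let P : Sym2 V → Finset (Sym2 V) := fun e => if ∃ F ∈ T, e ∈ F then
    Finset.univ.filter (fun g => g ∈ dt T h (other G N e) e ∧ g ≠ e) else {e}
  have hPc : ∀ e ∈ N.toFinset, 1 + (if ∃ F ∈ T, e ∈ F then 1 else 0) ≤ (P e).card := by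
    intro e he
    rw [Set.mem_toFinset] at he
    by_cases hex : ∃ F ∈ T, e ∈ F
    · obtain ⟨k1, k2⟩ := hG.dt_cyc (h := h) hT (hF e he hex).1 (hF e he hex).2
      have k3 := k1.three_le
      simp only [P, if_pos hex]
      have : (Finset.univ.filter (fun g => g ∈ dt T h (other G N e) e ∧ g ≠ e) : Finset (Sym2 V)).card
          = (dt T h (other G N e) e \ {e}).ncard := by
        rw [← Set.ncard_coe_finset]; congr 1; ext g; simp
      rw [this, Set.ncard_sdiff_singleton_of_mem k2]
      omega
    · simp only [P, if_neg hex]; simp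
  have hsub : N.toFinset.biUnion P ⊆ (pr T h N).toFinset := by
    intro g hg
    obtain ⟨e, he, hg⟩ := Finset.mem_biUnion.1 hg
    rw [Set.mem_toFinset] at he ⊢
    by_cases hex : ∃ F ∈ T, e ∈ F
    · simp only [P, if_pos hex, Finset.mem_filter] at hg
      exact Or.inr ⟨_, (hF e he hex).1, e, he, (hF e he hex).2, hg.2⟩
    · simp only [P, if_neg hex, Finset.mem_singleton] at hg
      subst hg
      push Not at hex
      exact Or.inl ⟨he, hex⟩
  -- a detour meets the face only in the ends of its edge
  have hoff : ∀ e ∈ N, ∀ g ∈ P e, (∃ F ∈ T, e ∈ F) → g ∉ N := by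
    intro e he g hg hex hgN
    simp only [P, if_pos hex, Finset.mem_filter] at hg
    induction g using Sym2.ind with
    | _ a b =>
      have k := fun v => hG.dt_inter (h := h) (v := v) hT hN hNT (hF e he hex).1 he (hF e he hex).2
      exact hg.2.2 (edge_eq_of_mem (G.ne_of_adj (hN.cyc.subset hgN))
        (k a (mem_vts hg.2.1) (mem_vts hgN)) (k b (mem_vts' hg.2.1) (mem_vts' hgN)))
  have hdis : ∀ e ∈ N.toFinset, ∀ e' ∈ N.toFinset, e ≠ e' → Disjoint (P e) (P e') := by
    intro e he e' he' hee
    rw [Set.mem_toFinset] at he he'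
    rw [Finset.disjoint_left]
    intro g hg hg'
    have k1 := hoff e he g hg
    have k2 := hoff e' he' g hg'
    by_cases hex : ∃ F ∈ T, e ∈ F <;> by_cases hex' : ∃ F ∈ T, e' ∈ F
    · simp only [P, if_pos hex, Finset.mem_filter] at hg
      simp only [P, if_pos hex', Finset.mem_filter] at hg'
      refine multi_disj (E := N) (hG.dt_cyc (h := h) hT (hF e he hex).1 (hF e he hex).2).1
        (fun x hx hxN => hG.dt_inter hT hN hNT (hF e he hex).1 he (hF e he hex).2 hx hxN)
        (fun x hx hx' => hG.dt_disj hT hr hN hNT (hF e he hex).1 (hF e' he' hex').1 he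
          (hF e he hex).2 he' (hF e' he' hex').2 hee hx hx') hg.2.1 hg'.2.1 hg.2.2
    · simp only [P, if_neg hex', Finset.mem_singleton] at hg'
      exact k1 hex (hg' ▸ he')
    · simp only [P, if_neg hex, Finset.mem_singleton] at hg
      exact k2 hex' (hg ▸ he)
    · simp only [P, if_neg hex, if_neg hex', Finset.mem_singleton] at hg hg'
      exact hee (hg.symm.trans hg')
  have h1 := Finset.card_le_card hsub
  rw [Finset.card_biUnion hdis] at h1
  have h2 := Finset.sum_le_sum hPc
  rw [Finset.sum_add_distrib, Finset.sum_boole] at h2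
  simp only [Finset.sum_const, smul_eq_mul, mul_one, Nat.cast_id] at h2
  rw [Set.ncard_eq_toFinset_card', Set.ncard_eq_toFinset_card', Set.ncard_eq_toFinset_card']
  refine le_trans ?_ (h2.trans h1)
  refine Nat.add_le_add_left (Finset.card_le_card fun e he => ?_) _
  simpa using he

/-- A minimal number of monochromatic edges makes both colour classes sparse. -/
lemma P4.colour (hG : P4 G) (T3 : Finset (Set (Sym2 V))) (h3 : ∀ F ∈ T3, IsFace G F ∧ F.ncard = 3) :
    ∃ T ⊆ T3, Sparse G T ∧ T3.card ≤ 2 * T.card := by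
  let M : Finset (Set (Sym2 V)) → Set (Sym2 V) := fun S =>
    {g | ∃ F ∈ T3, ∃ A ∈ T3, F ≠ A ∧ g ∈ F ∧ g ∈ A ∧ (F ∈ S ↔ A ∈ S)}
  have hM : ∀ S, ∀ F ∈ T3, ∀ g ∈ F, (g ∈ M S ↔ other G F g ∈ T3 ∧ (F ∈ S ↔ other G F g ∈ S)) := by
    intro S F hF g hg
    obtain ⟨k1, k2, k3, k4⟩ := hG.other_spec (h3 F hF).1 hg
    constructor
    · rintro ⟨F', hF', A, hA, hne, hgF, hgA, hiff⟩
      rcases k4 F' (h3 F' hF').1 hgF with hc | hc <;> rcases k4 A (h3 A hA).1 hgA with hc' | hc'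
      · exact absurd (hc.trans hc'.symm) hne
      · rw [← hc', ← hc]; exact ⟨hA, hiff⟩
      · rw [← hc, ← hc']; exact ⟨hF', hiff.symm⟩
      · exact absurd (hc.trans hc'.symm) hne
    · rintro ⟨ho, hiff⟩
      exact ⟨F, hF, _, ho, k2.symm, hg, k3, hiff⟩
  obtain ⟨S, hS, hmin⟩ := Finset.exists_min_image T3.powerset (fun S => (M S).ncard)
    ⟨∅, Finset.empty_mem_powerset _⟩
  rw [Finset.mem_powerset] at hS
  -- Each triangle has at most one monochromatic edge: otherwise recolouring it would lower the number
  -- of monochromatic edges.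
  have claim : ∀ F ∈ T3, ∀ g ∈ F, ∀ g' ∈ F, g ∈ M S → g' ∈ M S → g = g' := by
    intro F hF g hg g' hg' hgM hgM'
    by_contra hne
    let S' : Finset (Set (Sym2 V)) := T3.filter (fun X => (X ∈ S ∧ X ≠ F) ∨ (X ∉ S ∧ X = F))
    have hS' : ∀ X ∈ T3, X ≠ F → (X ∈ S' ↔ X ∈ S) := by
      intro X hX hXF
      simp [S', hX, hXF]
    have hS'F : F ∈ S' ↔ F ∉ S := by simp [S', hF]
    have hm := hmin S' (Finset.mem_powerset.2 (Finset.filter_subset _ _))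
    have e1 : M S' \ F = M S \ F := by
      ext e
      refine and_congr_left fun heF => ?_
      constructor
      · rintro ⟨A, hA, B, hB, hAB, hAe, hBe, hiff⟩
        refine ⟨A, hA, B, hB, hAB, hAe, hBe, ?_⟩
        rwa [hS' A hA (fun hc => heF (hc ▸ hAe)), hS' B hB (fun hc => heF (hc ▸ hBe))] at hiff
      · rintro ⟨A, hA, B, hB, hAB, hAe, hBe, hiff⟩
        refine ⟨A, hA, B, hB, hAB, hAe, hBe, ?_⟩
        rwa [hS' A hA (fun hc => heF (hc ▸ hAe)), hS' B hB (fun hc => heF (hc ▸ hBe))]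
    have e2 : M S' ∩ F ⊆ F \ {g, g'} := by
      rintro e ⟨he, heF⟩
      refine ⟨heF, fun hc => ?_⟩
      have heM : e ∈ M S := by
        rcases hc with rfl | hc
        · exact hgM
        · have hc : e = g' := hc
          rw [hc]; exact hgM'
      rw [hM _ F hF e heF] at he heM
      have ho := (hG.other_spec (h3 F hF).1 heF).2.1
      rw [hS' _ he.1 ho, hS'F] at he
      tauto
    have hgg : ({g, g'} : Set (Sym2 V)).ncard = 2 := Set.ncard_pair hne
    have e3 := Set.ncard_le_ncard e2 (Set.toFinite _)
    have e4 : ({g, g'} : Set (Sym2 V)) ⊆ M S ∩ F := by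
      rintro e (rfl | he)
      · exact ⟨hgM, hg⟩
      · have he : e = g' := he
        rw [he]; exact ⟨hgM', hg'⟩
    have e5 := Set.ncard_le_ncard e4 (Set.toFinite _)
    have e6 := Set.ncard_sdiff_add_ncard_of_subset (e4.trans Set.inter_subset_right) (Set.toFinite F)
    have e7 := Set.ncard_inter_add_ncard_sdiff_eq_ncard (M S) F (Set.toFinite _)
    have e8 := Set.ncard_inter_add_ncard_sdiff_eq_ncard (M S') F (Set.toFinite _)
    have e9 := (h3 F hF).2
    rw [e1] at e8
    omega
  have sp : ∀ T ⊆ T3, (∀ F ∈ T, ∀ A ∈ T, (F ∈ S ↔ A ∈ S)) → Sparse G T := by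
    intro T hT hiff
    refine ⟨fun F hF => (h3 F (hT hF)).1, fun F hF => (h3 F (hT hF)).2, ?_⟩
    intro F hF A hA B hB hAF hBF g g' h1 h2 h3' h4
    have hgg := claim F (hT hF) g h1 g' h3' ⟨F, hT hF, A, hT hA, hAF.symm, h1, h2, hiff F hF A hA⟩
      ⟨F, hT hF, B, hT hB, hBF.symm, h3', h4, hiff F hF B hB⟩
    subst hgg
    rw [hG.eq_other (h3 F (hT hF)).1 h1 (h3 A (hT hA)).1 hAF h2,
      hG.eq_other (h3 F (hT hF)).1 h1 (h3 B (hT hB)).1 hBF h4]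
  have hc := Finset.card_sdiff_add_card_eq_card hS
  by_cases hlt : T3.card ≤ 2 * S.card
  · exact ⟨S, hS, sp S hS fun F hF A hA => iff_of_true hF hA, hlt⟩
  · exact ⟨T3 \ S, Finset.sdiff_subset, sp _ Finset.sdiff_subset fun F hF A hA =>
      iff_of_false (Finset.mem_sdiff.1 hF).2 (Finset.mem_sdiff.1 hA).2, by omega⟩

/-- The triangular faces. -/
noncomputable def fs3 (G : SimpleGraph V) : Finset (Set (Sym2 V)) := (fs G).filter (fun F => F.ncard = 3)

/-- Euler's inequality and double counting: every face but a triangle has at least four edges. -/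
lemma P4.two_faces_le (hG : P4 G) : 2 * (fs G).card + 4 ≤ 2 * Fintype.card V + (fs3 G).card := by
  have h1 := hG.sum_ncard
  have h2 := hG.euler
  have h3 : ∀ F ∈ fs G, 4 ≤ F.ncard + (if F.ncard = 3 then 1 else 0) := by
    intro F hF
    have := (mem_fs.1 hF).cyc.three_le
    split_ifs <;> omega
  have h4 := Finset.sum_le_sum h3
  rw [Finset.sum_add_distrib, Finset.sum_boole] at h4
  simp only [Finset.sum_const, smul_eq_mul, Nat.cast_id] at h4
  unfold fs3
  omega

end Colour

/-! ### Covers from triangular faces -/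

section CaseA
variable {V : Type} {G : SimpleGraph V} [Fintype V]
variable {T : Finset (Set (Sym2 V))} {h : V → Set (Sym2 V) → V}

/-- When `F` is put back, its modification stays in `F` and its partner, has at most four edges, and
keeps an edge of `F`. -/
lemma P4.pr_self (hG : P4 G) (hT : Sparse G T) {F : Set (Sym2 V)} (hF : F ∈ T) :
    pr (T.erase F) h F ⊆ F ∪ partners T F ∧ (pr (T.erase F) h F).ncard ≤ 4 ∧
      ∃ g ∈ F, g ∈ pr (T.erase F) h F := by
  have hFf := hT.face F hF
  have hF3 := hT.three F hF
  have hdt : ∀ A ∈ T.erase F, ∀ e ∈ F, e ∈ A → dt (T.erase F) h A e ⊆ A := by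
    intro A hA e heF heA g hg
    rcases dt_sub hg with hg | ⟨B, hB, hBA, ⟨g', h1, h2⟩, -⟩
    · exact hg
    · have hBF : B = F := hT.one A (Finset.mem_of_mem_erase hA) B (Finset.mem_of_mem_erase hB) F hF
        hBA (Finset.ne_of_mem_erase hA).symm g' e h1 h2 heA heF
      exact absurd hBF (Finset.ne_of_mem_erase hB)
  have hsub : pr (T.erase F) h F ⊆ F ∪ partners T F := by
    rintro g (⟨hg, -⟩ | ⟨A, hA, e, heF, heA, hg, -⟩)
    · exact Or.inl hg
    · exact Or.inr ⟨A, Finset.mem_of_mem_erase hA, Finset.ne_of_mem_erase hA, ⟨e, heF, heA⟩,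
        hdt A hA e heF heA hg⟩
  refine ⟨hsub, ?_, ?_⟩
  · by_cases hp : ∃ A ∈ T, A ≠ F ∧ ∃ e ∈ F, e ∈ A
    · obtain ⟨A, hA, hAF, e, heF, heA⟩ := hp
      rw [hT.partners_eq hF hA hAF heF heA] at hsub
      have hsub' : pr (T.erase F) h F ⊆ F \ {e} ∪ A \ {e} := by
        intro g hg
        have hge : g ≠ e := by
          rintro rfl
          rcases hg with ⟨-, hg⟩ | ⟨B, hB, e', heF', heB, hg, hne⟩
          · exact hg A (Finset.mem_erase.2 ⟨hAF, hA⟩) heA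
          · have hBA := hT.one F hF B (Finset.mem_of_mem_erase hB) A hA (Finset.ne_of_mem_erase hB)
              hAF e' g heF' heB heF heA
            subst hBA
            exact hne (hG.edge_unique hFf (hT.face B hA) hAF.symm heF' heB heF heA)
        rcases hsub hg with hg | hg
        · exact Or.inl ⟨hg, hge⟩
        · exact Or.inr ⟨hg, hge⟩
      refine (Set.ncard_le_ncard hsub' (Set.toFinite _)).trans ((Set.ncard_union_le _ _).trans ?_)
      rw [Set.ncard_sdiff_singleton_of_mem heF, Set.ncard_sdiff_singleton_of_mem heA, hF3,
        hT.three A hA]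
    · have : pr (T.erase F) h F ⊆ F := by
        intro g hg
        rcases hsub hg with hg | ⟨A, hA, hAF, ⟨e, h1, h2⟩, -⟩
        · exact hg
        · exact absurd ⟨A, hA, hAF, e, h1, h2⟩ hp
      have := Set.ncard_le_ncard this (Set.toFinite _)
      omega
  · by_contra hcon
    push Not at hcon
    have hall : ∀ g ∈ F, ∃ A ∈ T.erase F, g ∈ A := by
      intro g hg
      by_contra hc
      push Not at hc
      exact hcon g hg (Or.inl ⟨hg, hc⟩)
    obtain ⟨g, hg, g', hg', hne⟩ := (Set.one_lt_ncard (Set.toFinite F)).1 (by omega : 1 < F.ncard)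
    obtain ⟨A, hA, hgA⟩ := hall g hg
    obtain ⟨B, hB, hgB⟩ := hall g' hg'
    have hAT := Finset.mem_of_mem_erase hA
    have hAB := hT.one F hF A hAT B (Finset.mem_of_mem_erase hB)
      (Finset.ne_of_mem_erase hA) (Finset.ne_of_mem_erase hB) g g' hg hgA hg' hgB
    subst hAB
    exact hne (hG.edge_unique hFf (hT.face A hAT) (Finset.ne_of_mem_erase hA).symm hg' hgB hg hgA)

/-- The modification of a face outside `T` has at least five edges or leaves the members of `T`. -/
lemma P4.pr_big (hG : P4 G) (hT : Sparse G T) (hr : Rot G h) {F N : Set (Sym2 V)} (hF : F ∈ T)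
    (hN : IsFace G N) (hNT : N ∉ T) (hsub : ∀ g ∈ pr (T.erase F) h N, ∃ A ∈ T, g ∈ A) :
    5 ≤ (pr (T.erase F) h N).ncard := by
  have hNT' : N ∉ T.erase F := fun hc => hNT (Finset.mem_of_mem_erase hc)
  have h1 := hG.pr_card (hT.mono (Finset.erase_subset F T)) hr hN hNT'
  have h2 := hN.cyc.three_le
  set D := {e | e ∈ N ∧ ∃ A ∈ T.erase F, e ∈ A} with hD
  have h3 : (N \ D).ncard ≤ 1 := by
    rw [Set.ncard_le_one (Set.toFinite _)]
    have key : ∀ a ∈ N \ D, a ∈ F := by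
      rintro a ⟨ha, haD⟩
      have hno : ∀ A ∈ T.erase F, a ∉ A := fun A hA haA => haD ⟨ha, A, hA, haA⟩
      obtain ⟨A, hA, haA⟩ := hsub a (Or.inl ⟨ha, hno⟩)
      by_cases hAF : A = F
      · exact hAF ▸ haA
      · exact absurd haA (hno A (Finset.mem_erase.2 ⟨hAF, hA⟩))
    intro a ha b hb
    exact hG.edge_unique hN (hT.face F hF) (fun hc => hNT (hc ▸ hF)) hb.1 (key b hb) ha.1 (key a ha)
  have h4 := Set.ncard_sdiff_add_ncard_of_subset (s := D) (t := N) (fun e he => he.1) (Set.toFinite _)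
  omega

/-- Putting back a single member of `T` gives many small covers: the restored member is recognisable,
up to its partner, as a short cycle inside the triangles of `T`. -/
lemma P4.many_triangles (hG : P4 G) : (fs3 G).card ≤ 4 * numCDC G := by
  obtain ⟨T, hT3, hT, hcard⟩ := hG.colour (fs3 G) (fun F hF => by
    rw [fs3, Finset.mem_filter, mem_fs] at hF; exact hF)
  obtain ⟨h, hr⟩ := hG.exists_rot
  have hTfs : T ⊆ fs G := fun F hF => mem_fs.2 (hT.face F hF)
  have hle := hG.two_faces_le
  have := card_le_numCDC (G := G) T (fun F => (fs G \ T.erase F).val.map (pr (T.erase F) h)) 2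
    (fun F hF => ⟨hG.cover_cd (hT.mono (Finset.erase_subset F T)) hr, ?_⟩) (fun F hF => ?_)
  · omega
  · rw [Multiset.card_map]
    change (fs G \ T.erase F).card + 1 ≤ _
    rw [Finset.card_sdiff_of_subset ((Finset.erase_subset F T).trans hTfs),
      Finset.card_erase_of_mem hF]
    have := Finset.card_le_card hTfs
    have := Finset.card_pos.2 ⟨F, hF⟩
    omega
  · obtain ⟨s1, s2, g, hgF, hg⟩ := hG.pr_self (h := h) hT hF
    -- a member of the fibre is `F` or its partner
    have hfib : ∀ F' ∈ T, (fs G \ T.erase F').val.map (pr (T.erase F') h) =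
        (fs G \ T.erase F).val.map (pr (T.erase F) h) →
        F' = F ∨ (F' ≠ F ∧ ∃ g' ∈ F, g' ∈ F') := by
      intro F' hF' heq
      have hmem : pr (T.erase F) h F ∈ (fs G \ T.erase F').val.map (pr (T.erase F') h) := by
        rw [heq]
        exact Multiset.mem_map_of_mem _ (Finset.mem_sdiff.2 ⟨hTfs hF, by simp⟩)
      obtain ⟨N, hN, hNe⟩ := Multiset.mem_map.1 hmem
      have hN : N ∈ fs G \ T.erase F' := hN
      rw [Finset.mem_sdiff, mem_fs, Finset.mem_erase] at hN
      have hNF : N = F' := by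
        by_contra hc
        have hNT : N ∉ T := fun hh => hN.2 ⟨hc, hh⟩
        have := hG.pr_big hT hr hF' hN.1 hNT (fun g hg => by
          rw [hNe] at hg
          rcases s1 hg with hg | ⟨A, hA, -, -, hg⟩
          · exact ⟨F, hF, hg⟩
          · exact ⟨A, hA, hg⟩)
        rw [hNe] at this
        omega
      subst hNF
      rw [← hNe] at hg
      by_cases hNF : N = F
      · exact Or.inl hNF
      refine Or.inr ⟨hNF, ?_⟩
      rcases (hG.pr_self hT hF').1 hg with hgN | ⟨A, hA, hAN, ⟨g', k1, k2⟩, hgA⟩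
      · exact ⟨g, hgF, hgN⟩
      · by_cases hAF : A = F
        · subst hAF; exact ⟨g', k2, k1⟩
        · exact absurd (hT.one A hA N hF' F hF hAN.symm (Ne.symm hAF) g' g k2 k1 hgA hgF) hNF
    have hone : (T.filter (fun F' => F' ≠ F ∧ ∃ g' ∈ F, g' ∈ F')).card ≤ 1 := by
      rw [Finset.card_le_one]
      intro A hA B hB
      obtain ⟨hA, hAF, g1, k1, k2⟩ := Finset.mem_filter.1 hA
      obtain ⟨hB, hBF, g2, k3, k4⟩ := Finset.mem_filter.1 hB
      exact hT.one F hF A hA B hB hAF hBF g1 g2 k1 k2 k3 k4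
    refine (Finset.card_le_card (t := insert F (T.filter (fun F' => F' ≠ F ∧ ∃ g' ∈ F, g' ∈ F')))
      fun F' hF' => ?_).trans ((Finset.card_insert_le _ _).trans (by omega))
    obtain ⟨hF', heq⟩ := Finset.mem_filter.1 hF'
    rcases hfib F' hF' heq with hc | hc
    · exact Finset.mem_insert.2 (Or.inl hc)
    · exact Finset.mem_insert_of_mem (Finset.mem_filter.2 ⟨hF', hc⟩)

end CaseA

/-! ### Good quadrangular faces -/

section CaseB
variable {V : Type} {G : SimpleGraph V} [Fintype V]
variable {T : Finset (Set (Sym2 V))} {h : V → Set (Sym2 V) → V}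

/-- A quadrangle all of whose neighbours are quadrangles without triangular neighbours. -/
structure Good (G : SimpleGraph V) (F : Set (Sym2 V)) : Prop where
  face : IsFace G F
  four : ∀ N, IsFace G N → ∀ e, e ∈ F → e ∈ N → N.ncard = 4
  clear : ∀ N, IsFace G N → ∀ e, e ∈ F → e ∈ N → ∀ A, IsFace G A → ∀ e', e' ∈ N → e' ∈ A → A.ncard ≠ 3

lemma IsCyc.nbr_of_two {E : Set (Sym2 V)} (hE : IsCyc G E) {l a b c : V} (hab : a ≠ b)
    (ha : s(l, a) ∈ E) (hb : s(l, b) ∈ E) (hc : s(l, c) ∈ E) : c = a ∨ c = b := by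
  have h2 := hE.deg (mem_vts ha)
  by_contra hcon
  push Not at hcon
  have hs : ({c, a, b} : Set V) ⊆ {q | s(l, q) ∈ E} := by
    rintro x (rfl | rfl | hx)
    · exact hc
    · exact ha
    · have hx : x = b := hx
      rw [hx]; exact hb
  have := Set.ncard_le_ncard hs (Set.toFinite _)
  rw [Set.ncard_insert_of_notMem (by simp [hcon.1, hcon.2]), Set.ncard_pair hab] at this
  omega

lemma IsCyc.exists_second {E : Set (Sym2 V)} (hE : IsCyc G E) {a b : V} (h : s(a, b) ∈ E) :
    ∃ c, c ≠ b ∧ s(a, c) ∈ E := by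
  have h2 := hE.deg (mem_vts h)
  obtain ⟨c, hc, hcb⟩ := Set.exists_ne_of_one_lt_ncard (by omega : 1 < {q | s(a, q) ∈ E}.ncard) b
  exact ⟨c, hcb, hc⟩

/-- On a quadrangle every vertex off an edge is next to one of its ends. -/
lemma IsCyc.four_nbr {N : Set (Sym2 V)} (hN : IsCyc G N) (h4 : N.ncard = 4) {a b v : V}
    (he : s(a, b) ∈ N) (hv : v ∈ vts N) (hva : v ≠ a) (hvb : v ≠ b) :
    s(v, a) ∈ N ∨ s(v, b) ∈ N := by
  by_contra hcon
  push Not at hcon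
  obtain ⟨p, hp⟩ := mem_vts_iff.1 hv
  obtain ⟨q, hqp, hq⟩ := hN.exists_second hp
  obtain ⟨a', ha', haa⟩ := hN.exists_second he
  obtain ⟨b', hb', hbb⟩ := hN.exists_second (a := b) (b := a) (by rwa [Sym2.eq_swap])
  have hab : a ≠ b := G.ne_of_adj (hN.subset he)
  have hpa : p ≠ a := fun hc => hcon.1 (hc ▸ hp)
  have hpb : p ≠ b := fun hc => hcon.2 (hc ▸ hp)
  have hqa : q ≠ a := fun hc => hcon.1 (hc ▸ hq)
  have hqb : q ≠ b := fun hc => hcon.2 (hc ▸ hq)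
  have hpq : p ≠ q := hqp.symm
  have hs : ((({s(v, p), s(v, q), s(a, b), s(a, a'), s(b, b')} : Finset (Sym2 V)) : Set (Sym2 V))) ⊆ N := by
    intro x hx
    simp only [Finset.coe_insert, Finset.coe_singleton, Set.mem_insert_iff,
      Set.mem_singleton_iff] at hx
    rcases hx with rfl | rfl | rfl | rfl | rfl <;> assumption
  have := Set.ncard_le_ncard hs (Set.toFinite _)
  rw [Set.ncard_coe_finset] at this
  have hba := hab.symm
  have hav := hva.symm
  have hbv := hvb.symm
  have hap := hpa.symm
  have hbp := hpb.symm
  have haq := hqa.symm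
  have hbq := hqb.symm
  rw [Finset.card_insert_of_notMem, Finset.card_insert_of_notMem, Finset.card_insert_of_notMem,
    Finset.card_pair] at this
  · omega
  · simp only [ne_eq, Sym2.eq_iff]; grind
  · simp only [Finset.mem_insert, Finset.mem_singleton, Sym2.eq_iff]; grind
  · simp only [Finset.mem_insert, Finset.mem_singleton, Sym2.eq_iff]; grind
  · simp only [Finset.mem_insert, Finset.mem_singleton, Sym2.eq_iff]; grind

/-- Three faces that pairwise share edges at `l` would give `l` degree three. -/
lemma P4.no_deg_three (hG : P4 G) {F N N' : Set (Sym2 V)} (hF : IsFace G F) (hN : IsFace G N)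
    (hN' : IsFace G N') (h1 : N ≠ F) (h2 : N' ≠ F) (h3 : N ≠ N') {l s t v : V} (hst : s ≠ t)
    (hsv : s ≠ v) (htv : t ≠ v) (hFs : s(l, s) ∈ F) (hFt : s(l, t) ∈ F) (hNs : s(l, s) ∈ N)
    (hNv : s(l, v) ∈ N) (hNt : s(l, t) ∈ N') (hNv' : s(l, v) ∈ N') : False := by
  obtain ⟨q, hq, hqX⟩ : ∃ q, G.Adj l q ∧ q ∉ ({s, t, v} : Set V) := by
    by_contra hcon
    push Not at hcon
    have k1 := hG.deg_ge l
    have k2 := Set.ncard_le_ncard (s := {w | G.Adj l w}) (t := {s, t, v}) (fun w hw => hcon w hw)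
      (Set.toFinite _)
    have k3 := ncard_three_le s t v
    omega
  refine hG.rot_conn (q := l) (x := s) (h := q) (X := {s, t, v}) (by simp) (hF.cyc.subset hFs) hqX hq ?_
  intro E hE a b ha hb haX
  have fF := hF.cyc.nbr_of_two hst hFs hFt (c := b)
  have fN := hN.cyc.nbr_of_two hsv hNs hNv (c := b)
  have fN' := hN'.cyc.nbr_of_two htv hNt hNv' (c := b)
  have hE3 : E = F ∨ E = N ∨ E = N' := by
    rcases haX with rfl | rfl | haX
    · exact (hG.not_three' hF hN hE hFs hNs ha h1.symm).imp_right Or.inl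
    · exact (hG.not_three' hF hN' hE hFt hNt ha h2.symm).imp_right Or.inr
    · have haX : a = v := haX
      subst haX
      exact Or.inr (hG.not_three' hN hN' hE hNv hNv' ha h3)
  simp only [Set.mem_insert_iff, Set.mem_singleton_iff]
  rcases hE3 with rfl | rfl | rfl
  · rcases fF hb with hc | hc <;> simp [hc]
  · rcases fN hb with hc | hc <;> simp [hc]
  · rcases fN' hb with hc | hc <;> simp [hc]

/-- The neighbours of a good face are disjoint off the face. -/
lemma P4.good_disj (hG : P4 G) {F : Set (Sym2 V)} (hg : Good G F) {e e' : Sym2 V} (he : e ∈ F)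
    (he' : e' ∈ F) (hee : e ≠ e') {v : V} (hv : v ∈ vts (other G F e))
    (hv' : v ∈ vts (other G F e')) : v ∈ vts F := by
  by_contra hvF
  obtain ⟨hN, hNF, heN, -⟩ := hG.other_spec hg.face he
  obtain ⟨hN', hNF', heN', -⟩ := hG.other_spec hg.face he'
  have hNN : other G F e ≠ other G F e' := by
    intro hc
    rw [hc] at heN
    exact hee (hG.edge_unique hN' hg.face hNF' heN' he' heN he)
  have key : ∀ e ∈ F, ∀ N, IsFace G N → e ∈ N → v ∈ vts N → ∃ l s, e = s(l, s) ∧ s(l, v) ∈ N := by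
    intro e he N hN heN hv
    induction e using Sym2.ind with
    | _ a b =>
      rcases hN.cyc.four_nbr (hg.four N hN _ he heN) heN hv (fun hc => hvF (hc ▸ mem_vts he))
        (fun hc => hvF (hc ▸ mem_vts' he)) with hc | hc
      · exact ⟨a, b, rfl, by rwa [Sym2.eq_swap]⟩
      · exact ⟨b, a, Sym2.eq_swap, by rwa [Sym2.eq_swap]⟩
  obtain ⟨l, s, hls, hlv⟩ := key e he _ hN heN hv
  obtain ⟨l', t, hlt, hlv'⟩ := key e' he' _ hN' heN' hv'
  subst hls hlt
  by_cases hll : l = l'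
  · subst hll
    refine hG.no_deg_three hg.face hN hN' hNF hNF' hNN (l := l) (s := s) (t := t) (v := v) ?_ ?_ ?_ he he'
      heN hlv heN' hlv'
    · rintro rfl; exact hee rfl
    · rintro rfl; exact hvF (mem_vts' he)
    · rintro rfl; exact hvF (mem_vts' he')
  · have a1 : G.Adj l v := hN.cyc.subset hlv
    have a2 : G.Adj l' v := hN'.cyc.subset hlv'
    have hm := hG.nbr_adj hg.face hvF (mem_vts he) (mem_vts he') hll a1.symm a2.symm
    have a3 : G.Adj l l' := hg.face.cyc.subset hm
    have h4 := hg.four _ (hG.face_tri a3 a2 a1) s(l, l') hm (by simp [tri])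
    have : (tri l l' v).ncard ≤ 3 := ncard_three_le _ _ _
    omega

/-- The outer boundary of the union of a face and its neighbours, for a good face. -/
def big (G : SimpleGraph V) (F : Set (Sym2 V)) : Set (Sym2 V) :=
  {g | ∃ e ∈ F, g ∈ other G F e ∧ g ≠ e}

lemma P4.big_cyc (hG : P4 G) {F : Set (Sym2 V)} (hg : Good G F) : IsCyc G (big G F) := by
  have := hg.face.cyc.multi F.toFinset (other G F) ?_ ?_ ?_ ?_
  · simpa [big] using this
  · intro e he
    simpa using he
  · intro e he
    have := hG.other_spec hg.face (Set.mem_toFinset.1 he)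
    exact ⟨this.1.cyc, this.2.2.1⟩
  · intro e he x hx hxF
    have he := Set.mem_toFinset.1 he
    have := hG.other_spec hg.face he
    exact hG.inter_edge this.1 hg.face this.2.1 this.2.2.1 he hx hxF
  · intro e he e' he' hee x hx hx'
    exact hG.good_disj hg (Set.mem_toFinset.1 he) (Set.mem_toFinset.1 he') hee hx hx'

/-- The faces next to `F`. -/
noncomputable def around (G : SimpleGraph V) (F : Set (Sym2 V)) : Finset (Set (Sym2 V)) :=
  (fs G).filter (fun N => N ≠ F ∧ ∃ e ∈ F, e ∈ N)

/-- The faces around a good face `F` cover each edge as often as `F` and `big G F` do. -/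
lemma P4.around_sum (hG : P4 G) {F : Set (Sym2 V)} (hg : Good G F) (g : Sym2 V) :
    ∑ N ∈ around G F, ind N g = ind F g + ind (big G F) g := by
  have hmem : ∀ N ∈ around G F, ∃ e ∈ F, e ∈ N ∧ N = other G F e := by
    intro N hN
    rw [around, Finset.mem_filter, mem_fs] at hN
    obtain ⟨hN, hNF, e, he, heN⟩ := hN
    exact ⟨e, he, heN, hG.eq_other hg.face he hN hNF heN⟩
  have hmem' : ∀ e ∈ F, other G F e ∈ around G F := by
    intro e he
    obtain ⟨h1, h2, h3, -⟩ := hG.other_spec hg.face he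
    exact Finset.mem_filter.2 ⟨mem_fs.2 h1, h2, e, he, h3⟩
  have hone : ∀ N0 ∈ around G F, g ∈ N0 → (∀ N ∈ around G F, g ∈ N → N = N0) →
      ∑ N ∈ around G F, ind N g = 1 := by
    intro N0 hN0 hgN0 hu
    rw [Finset.sum_eq_single_of_mem N0 hN0]
    · simp [ind, hgN0]
    · intro N hN hne
      rw [ind, if_neg (fun hc => hne (hu N hN hc))]
  by_cases hgF : g ∈ F
  · obtain ⟨h1, h2, h3, -⟩ := hG.other_spec hg.face hgF
    have hb : g ∉ big G F := by
      rintro ⟨e, he, hgo, hne⟩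
      obtain ⟨h1, h2, h3, -⟩ := hG.other_spec hg.face he
      exact hne (hG.edge_unique h1 hg.face h2 h3 he hgo hgF)
    rw [hone _ (hmem' g hgF) h3, ind, ind, if_pos hgF, if_neg hb]
    intro N hN hgN
    rw [around, Finset.mem_filter, mem_fs] at hN
    exact hG.eq_other hg.face hgF hN.1 hN.2.1 hgN
  · by_cases hb : g ∈ big G F
    · obtain ⟨e, he, hgo, hne⟩ := hb
      have hb : g ∈ big G F := ⟨e, he, hgo, hne⟩
      rw [hone _ (hmem' e he) hgo, ind, ind, if_neg hgF, if_pos hb]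
      intro N hN hgN
      obtain ⟨e', he', heN', rfl⟩ := hmem N hN
      by_contra hNN
      have hee : e ≠ e' := fun hc => hNN (by rw [hc])
      obtain ⟨h1, h2, h3, -⟩ := hG.other_spec hg.face he
      exact multi_disj (E := F) h1.cyc
        (fun x hx hxF => hG.inter_edge h1 hg.face h2 h3 he hx hxF)
        (fun x hx hx' => hG.good_disj hg he he' hee hx hx') hgo hgN hne
    · rw [ind, ind, if_neg hgF, if_neg hb]
      refine Finset.sum_eq_zero fun N hN => ?_
      obtain ⟨e', he', heN', rfl⟩ := hmem N hN
      rw [ind, if_neg]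
      intro hgN
      exact hb ⟨e', he', hgN, fun hc => hgF (hc ▸ he')⟩

lemma pr_untouched {N : Set (Sym2 V)} (hN : ∀ e ∈ N, ∀ F ∈ T, e ∉ F) : pr T h N = N := by
  ext g
  constructor
  · rintro (hg | ⟨F, hF, e, he, heF, -⟩)
    · exact hg.1
    · exact absurd heF (hN e he F hF)
  · exact fun hg => Or.inl ⟨hg, hN g hg⟩

end CaseB

/-! ### Covers from good quadrangular faces -/

section CaseB2
variable {V : Type} {G : SimpleGraph V} [Fintype V]
variable {T : Finset (Set (Sym2 V))} {h : V → Set (Sym2 V) → V}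

/-- The cover in which the faces around a good face `F` are replaced by `F` and `big G F`. -/
noncomputable def bcover (G : SimpleGraph V) (T : Finset (Set (Sym2 V)))
    (h : V → Set (Sym2 V) → V) (F : Set (Sym2 V)) : Multiset (Set (Sym2 V)) :=
  F ::ₘ big G F ::ₘ ((fs G \ T) \ around G F).val.map (pr T h)

lemma Good.untouched (hT : Sparse G T) {F : Set (Sym2 V)} (hg : Good G F) {N : Set (Sym2 V)}
    (hN : IsFace G N) {e : Sym2 V} (he : e ∈ F) (heN : e ∈ N) : N ∉ T ∧ pr T h N = N := by
  refine ⟨fun hc => ?_, pr_untouched fun e' he' A hA heA =>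
    hg.clear N hN e he heN A (hT.face A hA) e' he' heA (hT.three A hA)⟩
  have := hT.three N hc
  have := hg.four N hN e he heN
  omega

lemma Good.self (hT : Sparse G T) {F : Set (Sym2 V)} (hg : Good G F) :
    F ∉ T ∧ pr T h F = F := by
  obtain ⟨e, he⟩ := hg.face.cyc.nonempty
  exact hg.untouched hT hg.face he he

lemma P4.bcover_cd (hG : P4 G) (hT : Sparse G T) (hr : Rot G h) {F : Set (Sym2 V)}
    (hg : Good G F) : CD G (bcover G T h F) := by
  have hsub : around G F ⊆ fs G \ T := by
    intro N hN
    obtain ⟨h1, h2, e, he, heN⟩ := Finset.mem_filter.1 hN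
    exact Finset.mem_sdiff.2 ⟨h1, (hg.untouched (h := h) hT (mem_fs.1 h1) he heN).1⟩
  constructor
  · intro C hC
    rw [bcover, Multiset.mem_cons, Multiset.mem_cons, Multiset.mem_map] at hC
    rcases hC with rfl | rfl | ⟨N, hN, rfl⟩
    · exact hg.face.cyc
    · exact hG.big_cyc hg
    · have hN : N ∈ (fs G \ T) \ around G F := hN
      have := Finset.mem_sdiff.1 (Finset.mem_sdiff.1 hN).1
      exact hG.pr_cyc hT hr (mem_fs.1 this.1) this.2
  · intro e he
    have h1 := (hG.cover_cd hT hr).2 e he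
    rw [countP_map_ind, ← Finset.sum_sdiff hsub] at h1
    have h2 : ∑ N ∈ around G F, ind (pr T h N) e = ∑ N ∈ around G F, ind N e := by
      refine Finset.sum_congr rfl fun N hN => ?_
      obtain ⟨h1, h2, e', he', heN⟩ := Finset.mem_filter.1 hN
      rw [(hg.untouched (h := h) hT (mem_fs.1 h1) he' heN).2]
    rw [h2, hG.around_sum hg] at h1
    rw [bcover, Multiset.countP_cons, Multiset.countP_cons, countP_map_ind]
    change _ + ind (big G F) e + ind F e = 2
    omega

/-- At least one face around `F` is removed, and two cycles are added. -/
lemma P4.bcover_card (hG : P4 G) (hT : Sparse G T) {F : Set (Sym2 V)}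
    (hg : Good G F) : Multiset.card (bcover G T h F) + T.card ≤ (fs G).card + 1 := by
  have hsub : around G F ⊆ fs G \ T := by
    intro N hN
    obtain ⟨h1, h2, e, he, heN⟩ := Finset.mem_filter.1 hN
    exact Finset.mem_sdiff.2 ⟨h1, (hg.untouched (h := h) hT (mem_fs.1 h1) he heN).1⟩
  have hTfs : T ⊆ fs G := fun F hF => mem_fs.2 (hT.face F hF)
  obtain ⟨e, he⟩ := hg.face.cyc.nonempty
  obtain ⟨h1, h2, h3, -⟩ := hG.other_spec hg.face he
  have hpos : 0 < (around G F).card := Finset.card_pos.2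
    ⟨_, Finset.mem_filter.2 ⟨mem_fs.2 h1, h2, e, he, h3⟩⟩
  rw [bcover, Multiset.card_cons, Multiset.card_cons, Multiset.card_map]
  change ((fs G \ T) \ around G F).card + 1 + 1 + _ ≤ _
  have k1 := Finset.card_sdiff_add_card_eq_card hsub
  have k2 := Finset.card_sdiff_add_card_eq_card hTfs
  omega

/-- `F` is the only face that is repeated in its cover. -/
lemma P4.bcover_inj (hG : P4 G) (hT : Sparse G T) {F F' : Set (Sym2 V)} (hg : Good G F)
    (hg' : Good G F') (heq : bcover G T h F' = bcover G T h F) : F' = F := by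
  by_contra hne
  have h2 : 2 ≤ (bcover G T h F).count F := by
    rw [bcover, Multiset.count_cons_self]
    have : 0 < (big G F ::ₘ ((fs G \ T) \ around G F).val.map (pr T h)).count F := by
      rw [Multiset.count_pos, Multiset.mem_cons, Multiset.mem_map]
      refine Or.inr ⟨F, ?_, (hg.self hT).2⟩
      refine Finset.mem_sdiff.2 ⟨Finset.mem_sdiff.2 ⟨mem_fs.2 hg.face, (hg.self (h := h) hT).1⟩, ?_⟩
      simp [around]
    omega
  have hbig : F ≠ big G F' := by
    intro hc
    have key : ∀ e ∈ F', other G F' e = F := by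
      intro e he
      by_contra hN
      obtain ⟨h1, -, h3, -⟩ := hG.other_spec hg'.face he
      have hle : (other G F' e \ {e}).ncard ≤ 1 := by
        rw [Set.ncard_le_one (Set.toFinite _)]
        intro a ha b hb
        have ha' : a ∈ F := by rw [hc]; exact ⟨e, he, ha.1, ha.2⟩
        have hb' : b ∈ F := by rw [hc]; exact ⟨e, he, hb.1, hb.2⟩
        exact hG.edge_unique h1 hg.face hN hb.1 hb' ha.1 ha'
      rw [Set.ncard_sdiff_singleton_of_mem h3] at hle
      have := h1.cyc.three_le
      omega
    have h3 := hg'.face.cyc.three_le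
    obtain ⟨e, he, e', he', hee⟩ :=
      (Set.one_lt_ncard (Set.toFinite F')).1 (by omega : 1 < F'.ncard)
    obtain ⟨k1, k2, k3, -⟩ := hG.other_spec hg'.face he
    obtain ⟨-, -, k4, -⟩ := hG.other_spec hg'.face he'
    rw [key e' he', ← key e he] at k4
    exact hee (hG.edge_unique k1 hg'.face k2 k4 he' k3 he)
  have h1 : (bcover G T h F').count F ≤ 1 := by
    rw [bcover, Multiset.count_cons_of_ne (Ne.symm hne), Multiset.count_cons_of_ne hbig,
      Multiset.count_map]
    change (Finset.filter (fun N => F = pr T h N) ((fs G \ T) \ around G F')).card ≤ 1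
    rw [Finset.card_le_one]
    have key : ∀ N ∈ Finset.filter (fun N => F = pr T h N) ((fs G \ T) \ around G F'), N = F := by
      intro N hN
      obtain ⟨hN, hNe⟩ := Finset.mem_filter.1 hN
      by_cases ht : ∀ e ∈ N, ∀ A ∈ T, e ∉ A
      · rw [hNe, pr_untouched ht]
      · push Not at ht
        obtain ⟨e, he, A, hA, heA⟩ := ht
        have hd := (hG.dt_cyc (h := h) hT hA heA)
        have h3 := hd.1.three_le
        obtain ⟨g, hgd, hge⟩ := Set.exists_ne_of_one_lt_ncard (by omega : 1 < (dt T h A e).ncard) e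
        have hgF : g ∈ F := by rw [hNe]; exact Or.inr ⟨A, hA, e, he, heA, hgd, hge⟩
        have hB : ∃ B ∈ T, g ∈ B := by
          rcases dt_sub hgd with k | ⟨B, hB, -, -, k⟩
          · exact ⟨A, hA, k⟩
          · exact ⟨B, hB, k⟩
        obtain ⟨B, hB, hgB⟩ := hB
        exact absurd (hT.three B hB)
          (hg.clear F hg.face g hgF hgF B (hT.face B hB) g hgF hgB)
    intro a ha b hb
    rw [key a ha, key b hb]
  rw [heq] at h1
  omega

/-- Faces sharing an edge with a member of `X`. -/
noncomputable def nb (G : SimpleGraph V) (X : Finset (Set (Sym2 V))) : Finset (Set (Sym2 V)) :=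
  (fs G).filter (fun F => ∃ N ∈ X, ∃ e ∈ F, e ∈ N)

/-- Every edge of a member of `X` lies on two faces. -/
lemma P4.nb_card (hG : P4 G) {X : Finset (Set (Sym2 V))} :
    (nb G X).card ≤ ∑ N ∈ X, 2 * N.ncard := by
  have hsub : nb G X ⊆ X.biUnion (fun N => N.toFinset.biUnion (fun e => (fs G).filter (fun F => e ∈ F))) := by
    intro F hF
    obtain ⟨hF, N, hN, e, heF, heN⟩ := Finset.mem_filter.1 hF
    exact Finset.mem_biUnion.2 ⟨N, hN, Finset.mem_biUnion.2 ⟨e, Set.mem_toFinset.2 heN,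
      Finset.mem_filter.2 ⟨hF, heF⟩⟩⟩
  refine (Finset.card_le_card hsub).trans (Finset.card_biUnion_le.trans ?_)
  refine Finset.sum_le_sum fun N hN => Finset.card_biUnion_le.trans ?_
  rw [Set.ncard_eq_toFinset_card', mul_comm, ← smul_eq_mul, ← Finset.sum_const]
  refine Finset.sum_le_sum fun e he => ?_
  by_cases hee : e ∈ G.edgeSet
  · exact (hG.card_filter hee).le
  · rw [Finset.card_eq_zero.2]
    · omega
    · refine Finset.filter_eq_empty_iff.2 fun F hF heF => hee ((mem_fs.1 hF).cyc.subset heF)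

lemma P4.many_edges (hG : P4 G) : 2 * Fintype.card V ≤ G.edgeSet.ncard := by
  have h1 := G.sum_degrees_eq_twice_card_edges
  have h2 : ∀ v ∈ (Finset.univ : Finset V), 4 ≤ G.degree v := by
    intro v _
    have := hG.deg_ge v
    rw [← G.card_neighborFinset_eq_degree v, ← Set.ncard_coe_finset]
    convert this using 2
    ext w; simp
  have h3 := Finset.sum_le_sum h2
  rw [h1] at h3
  have h4 : G.edgeFinset.card = G.edgeSet.ncard := by
    rw [← Set.ncard_coe_finset]; simp
  simp only [Finset.sum_const, Finset.card_univ, smul_eq_mul] at h3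
  omega

/-- There are many good faces when there are few triangles: since all degrees are at least four, Euler's
inequality shows that non-quadrangular faces are rare, and a bad face is adjacent to one of these (`Z`)
or to a quadrangle next to a triangle (`Y`). -/
lemma P4.card_good (hG : P4 G) :
    Fintype.card V ≤ ((fs G).filter (Good G)).card + 64 * (fs3 G).card := by
  let Z := (fs G).filter (fun F => F.ncard ≠ 4)
  have hm := hG.many_edges
  have he := hG.euler
  have hs := hG.sum_ncard
  have hZ : ∑ F ∈ Z, F.ncard ≤ 8 * (fs3 G).card := by
    -- Equality holds for triangles and pentagons.
    have h1 : ∀ F ∈ fs G, (if F.ncard ≠ 4 then F.ncard else 0) + 20 ≤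
        5 * F.ncard + 8 * (if F.ncard = 3 then 1 else 0) := by
      intro F hF
      have := (mem_fs.1 hF).cyc.three_le
      split_ifs <;> omega
    have h2 := Finset.sum_le_sum h1
    rw [Finset.sum_add_distrib, Finset.sum_add_distrib, ← Finset.mul_sum, ← Finset.mul_sum,
      Finset.sum_boole, ← Finset.sum_filter] at h2
    simp only [Finset.sum_const, smul_eq_mul, Nat.cast_id] at h2
    change ∑ F ∈ Z, F.ncard + _ ≤ _ + 8 * (fs3 G).card at h2
    omega
  let Y := (nb G (fs3 G)).filter (fun F => F.ncard = 4)
  have hY : Y.card ≤ 6 * (fs3 G).card := by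
    refine (Finset.card_le_card (Finset.filter_subset _ _)).trans (hG.nb_card.trans ?_)
    have : ∀ N ∈ fs3 G, 2 * N.ncard = 6 := by
      intro N hN
      rw [(Finset.mem_filter.1 hN).2]
    rw [Finset.sum_congr rfl this, Finset.sum_const, smul_eq_mul, mul_comm]
  have hbad : (fs G).filter (fun F => ¬ Good G F) ⊆ nb G Z ∪ nb G Y := by
    intro F hF
    obtain ⟨hF, hb⟩ := Finset.mem_filter.1 hF
    by_contra hc
    rw [Finset.mem_union, not_or] at hc
    refine hb ⟨mem_fs.1 hF, ?_, ?_⟩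
    · intro N hN e heF heN
      by_contra h4
      exact hc.1 (Finset.mem_filter.2 ⟨hF, N, Finset.mem_filter.2 ⟨mem_fs.2 hN, h4⟩, e, heF, heN⟩)
    · intro N hN e heF heN A hA e' heN' heA h3
      by_cases h4 : N.ncard = 4
      · refine hc.2 (Finset.mem_filter.2 ⟨hF, N, Finset.mem_filter.2 ⟨Finset.mem_filter.2
          ⟨mem_fs.2 hN, A, Finset.mem_filter.2 ⟨mem_fs.2 hA, h3⟩, e', heN', heA⟩, h4⟩, e, heF, heN⟩)
      · exact hc.1 (Finset.mem_filter.2 ⟨hF, N, Finset.mem_filter.2 ⟨mem_fs.2 hN, h4⟩, e, heF, heN⟩)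
  have k1 := (Finset.card_le_card hbad).trans (Finset.card_union_le _ _)
  have k2 := hG.nb_card (X := Z)
  have k3 := hG.nb_card (X := Y)
  rw [← Finset.mul_sum] at k2
  have k4 : ∑ N ∈ Y, 2 * N.ncard = 8 * Y.card := by
    have : ∀ N ∈ Y, 2 * N.ncard = 8 := by
      intro N hN
      rw [(Finset.mem_filter.1 hN).2]
    rw [Finset.sum_congr rfl this, Finset.sum_const, smul_eq_mul, mul_comm]
  have k5 := Finset.card_filter_add_card_filter_not (s := fs G) (Good G)
  omega

/-- Each good face `F` gives the cover `bcover G T h F` with at most `f - |T| + 1 ≤ n - 1` members. -/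
lemma P4.many_good (hG : P4 G) : ((fs G).filter (Good G)).card ≤ numCDC G := by
  obtain ⟨T, hT3, hT, hcard⟩ := hG.colour (fs3 G) (fun F hF => by
    rw [fs3, Finset.mem_filter, mem_fs] at hF; exact hF)
  obtain ⟨h, hr⟩ := hG.exists_rot
  have hle := hG.two_faces_le
  have := card_le_numCDC (G := G) ((fs G).filter (Good G)) (bcover G T h) 1
    (fun F hF => ?_) (fun F hF => ?_)
  · omega
  · have hg := (Finset.mem_filter.1 hF).2
    have := hG.bcover_card (h := h) hT hg
    exact ⟨hG.bcover_cd hT hr hg, by omega⟩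
  · have hg := (Finset.mem_filter.1 hF).2
    rw [Finset.card_le_one]
    have key : ∀ A ∈ ((fs G).filter (Good G)).filter (fun F' => bcover G T h F' = bcover G T h F),
        A = F := by
      intro A hA
      obtain ⟨hA, heq⟩ := Finset.mem_filter.1 hA
      exact hG.bcover_inj hT hg (Finset.mem_filter.1 hA).2 heq
    intro A hA B hB
    rw [key A hA, key B hB]

/-- Many triangles or, in their absence, many good quadrangles: `257 = 1 + 64 * 4`. -/
lemma P4.linear (hG : P4 G) : Fintype.card V ≤ 257 * numCDC G := by
  have h1 := hG.card_good
  have h2 := hG.many_good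
  have h3 := hG.many_triangles
  omega

end CaseB2

/-! ### Conclusion -/

lemma sq_le_two_mul_two_pow (k : ℕ) : k ^ 2 ≤ 2 * 2 ^ k := by
  rcases lt_or_ge k 4 with h | h
  · interval_cases k <;> norm_num
  · have : k ^ 2 ≤ 2 ^ k := by
      induction k, h using Nat.le_induction with
      | base => norm_num
      | succ m hm ih => rw [pow_succ 2]; nlinarith
    omega

/-- There is a constant `c > 0` such that: (i) every `n`-vertex planar 4-connected graph has
at least `cn` CDCs of size at most `n-1`; (ii) every `n`-vertex planar 4-connected
triangulation has at least `cn²` such CDCs; (iii) every `n`-vertex planar 4-connected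
triangulation with at most `n/324` vertex 4-cuts has at least `2^{cn}` such CDCs. -/
theorem statement_5 :
    ∃ c : ℝ, 0 < c ∧
      (∀ (V : Type) [Fintype V] (G : SimpleGraph V),
        IsPlanar G → IsKConnected 4 G →
          c * (Fintype.card V : ℝ) ≤
            ({S : Multiset G.Subgraph |
                IsCDC G S ∧ Multiset.card S ≤ Fintype.card V - 1}.ncard : ℝ)) ∧
      (∀ (V : Type) [Fintype V] (G : SimpleGraph V),
        IsTriangulation G → IsKConnected 4 G →
          c * (Fintype.card V : ℝ) ^ 2 ≤
            ({S : Multiset G.Subgraph |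
                IsCDC G S ∧ Multiset.card S ≤ Fintype.card V - 1}.ncard : ℝ)) ∧
      (∀ (V : Type) [Fintype V] (G : SimpleGraph V),
        IsTriangulation G → IsKConnected 4 G →
        324 * {s : Finset V | IsFourCut G s}.ncard ≤ Fintype.card V →
          (2 : ℝ) ^ (c * (Fintype.card V : ℝ)) ≤
            ({S : Multiset G.Subgraph |
                IsCDC G S ∧ Multiset.card S ≤ Fintype.card V - 1}.ncard : ℝ)) := by
  -- With more than four vertices, `n ≤ 8k + 3` forces `k ≥ 1`, hence `n ≤ 11k`.
  have key : ∀ (V : Type) [Fintype V] (G : SimpleGraph V), IsTriangulation G → IsKConnected 4 G →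
      ∃ k : ℕ, (Fintype.card V : ℝ) ≤ 11 * k ∧ (2 : ℝ) ^ k ≤ (numCDC G : ℝ) := by
    intro V _ G hT hK
    obtain ⟨k, hk, hk2⟩ := Tri4.two_pow_le (G := G) ⟨⟨hT.1, hK⟩, hT.2.2⟩
    have h4 := hK.1
    have : Fintype.card V ≤ 11 * k := by omega
    exact ⟨k, by exact_mod_cast this, by exact_mod_cast hk2⟩
  refine ⟨1 / 1024, by norm_num, ?_, ?_, ?_⟩
  · intro V _ G hP hK
    have h := P4.linear (G := G) ⟨hP, hK⟩
    have h' : (Fintype.card V : ℝ) ≤ 257 * (numCDC G : ℝ) := by exact_mod_cast h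
    have h0 : (0 : ℝ) ≤ (numCDC G : ℝ) := Nat.cast_nonneg _
    change _ ≤ (numCDC G : ℝ)
    linarith
  · intro V _ G hT hK
    obtain ⟨k, hk, hk2⟩ := key V G hT hK
    have hs : (k : ℝ) ^ 2 ≤ 2 * 2 ^ k := by exact_mod_cast sq_le_two_mul_two_pow k
    have h0 : (0 : ℝ) ≤ (Fintype.card V : ℝ) := Nat.cast_nonneg _
    have h1 : (Fintype.card V : ℝ) ^ 2 ≤ (11 * k) ^ 2 := pow_le_pow_left₀ h0 hk 2
    change _ ≤ (numCDC G : ℝ)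
    nlinarith
  · intro V _ G hT hK _
    obtain ⟨k, hk, hk2⟩ := key V G hT hK
    change _ ≤ (numCDC G : ℝ)
    refine le_trans ?_ hk2
    rw [← Real.rpow_natCast]
    refine Real.rpow_le_rpow_of_exponent_le (by norm_num) ?_
    have h0 : (0 : ℝ) ≤ (k : ℝ) := Nat.cast_nonneg _
    linarith
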